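/- arXiv:math/0306219 — 4 statements merged into one kernel-verified Lean document; each statement's English description precedes it below -/
import Mathlib

section
/- (Duality transformation.) Suppose a = (a_1,…,a_m) ∈ ℂ^m and b = (b_1,…,b_n) ∈ ℂ^n satisfy the balancing condition a_1 + ⋯ + a_m = b_1 + ⋯ + b_n. Then for all x ∈ ℂ^m, y ∈ ℂ^n in generic position (all brackets appearing in denominators of the two series are nonzero) and every N = 0, 1, 2, …: Φ^{m,n}_N(a_1,…,a_m; x_1,…,x_m | y_1 − b_1,…, y_n − b_n; y_1,…,y_n) = Φ^{n,m}_N(b_1,…,b_n; y_1,…,y_n | x_1 − a_1,…, x_m − a_m; x_1,…,x_m). -/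
/-!
The proof has three ideas, all formulated for brackets satisfying the Riemann relation.

*Subset identity.* For two families `x`, `y` of the same size, the sum over `N`-element subsets `I`
of `∏_{i ∈ I, j ∉ I} [x_i - x_j - δ] / [x_i - x_j] · ∏_{i ∈ I, k} [x_i + y_k + δ] / [x_i + y_k]`
is symmetric under `x ↔ y` (`Bracket.subset_identity`). Up to a common factor each summand is, by
Frobenius' determinant formula (`Bracket.frobenius`), the determinant of the Frobenius matrix with
the rows in `I` shifted. The sum over `I` is therefore a coefficient of `det (A + uB)`, where the
entries of `A` and `B` depend on `x_i + y_j` only, and expanding by columns instead of rows gives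
the other side.

*Principal specialization.* Replacing every variable by a string `x_i, x_i + δ, …` of length `α_i`
kills all subsets that are not unions of initial segments, and the remaining terms telescope to
those of the series `Φ` with `a_i = -α_i δ`, `b_k = -β_k δ`. This is the duality for such
parameters (`dualSum_comm_special`). Here the series is written in an order-free form `dualSum`,
which agrees with `Phi` up to a sign (`Bracket.Phi_eq`).

*Interpolation.* If `a_i` and `b_k` are moved simultaneously by `t`, all terms of both series
become products of `2 N` translates of the bracket in `t` with the same sum of zeros. By the elliptic
partial fraction identity (`Bracket.pfSum_eq_zero`), a combination of such products that vanishes at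
all `t ∈ -ℕδ` vanishes identically (`Bracket.theta_vanish`). Any balanced pair `(a, b)` is the pair
of marginals of a matrix, and its entries are freed from `-ℕδ` one at a time
(`Bracket.dualSum_comm_edges`).

The argument needs variables that are generic with respect to all shifts by `δ`. Such variables are
dense on a suitable line through the given ones, and both series are continuous there.
-/

open Finset

/-- Shifted factorial `[x]_k = [x][x+δ]⋯[x+(k-1)δ]` with respect to the bracket `f`. -/
noncomputable def sf (f : ℂ → ℂ) (δ : ℂ) (x : ℂ) (k : ℕ) : ℂ :=
  ∏ i ∈ Finset.range k, f (x + (i : ℂ) * δ)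

/-- Difference product `Δ(x) = ∏_{i<j} [x_i - x_j]`. -/
noncomputable def Del (f : ℂ → ℂ) {m : ℕ} (x : Fin m → ℂ) : ℂ :=
  ∏ i : Fin m, ∏ j ∈ Finset.univ.filter (fun j => i < j), f (x i - x j)

/-- The multiple hypergeometric series `Φ^{m,n}_N(a; x | b; c)`. -/
noncomputable def Phi (f : ℂ → ℂ) (δ : ℂ) {m n : ℕ} (a x : Fin m → ℂ)
    (b c : Fin n → ℂ) (N : ℕ) : ℂ :=
  ∑ μ ∈ Finset.Nat.antidiagonalTuple m N,
    (Del f (fun i => x i + (μ i : ℂ) * δ) / Del f x)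
      * (∏ i, ∏ j, sf f δ (x i - x j + a j) (μ i) / sf f δ (x i - x j + δ) (μ i))
      * (∏ i, ∏ k, sf f δ (x i + b k) (μ i) / sf f δ (x i + c k) (μ i))

/-- The `μ`-th summand of the very well-poised series `E^{m,n}(a; x | s; u; v)`. -/
noncomputable def Eterm (f : ℂ → ℂ) (δ : ℂ) {m n : ℕ} (a x : Fin m → ℂ) (s : ℂ)
    (u v : Fin n → ℂ) (μ : Fin m → ℕ) : ℂ :=
  (Del f (fun i => x i + (μ i : ℂ) * δ) / Del f x)
    * (∏ i, f (x i + s + (((∑ j, μ j) + μ i : ℕ) : ℂ) * δ) / f (x i + s))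
    * (∏ j, (sf f δ (s + x j) (∑ i, μ i) / sf f δ (δ + s + x j - a j) (∑ i, μ i))
        * ∏ i, sf f δ (x i - x j + a j) (μ i) / sf f δ (x i - x j + δ) (μ i))
    * (∏ k, (sf f δ (v k) (∑ i, μ i) / sf f δ (δ + s - u k) (∑ i, μ i))
        * ∏ i, sf f δ (x i + u k) (μ i) / sf f δ (x i + δ + s - v k) (μ i))

/-- The very well-poised multiple series `E^{m,n}(a; x | s; u; v)`. -/
noncomputable def Evw (f : ℂ → ℂ) (δ : ℂ) {m n : ℕ} (a x : Fin m → ℂ) (s : ℂ)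
    (u v : Fin n → ℂ) : ℂ :=
  ∑' μ : Fin m → ℕ, Eterm f δ a x s u v μ

/-- The one-dimensional very well-poised series `_{r+3}E_{r+2}(s; u_1, …, u_r)`. -/
noncomputable def E1 (f : ℂ → ℂ) (δ : ℂ) {r : ℕ} (s : ℂ) (u : Fin r → ℂ) : ℂ :=
  ∑' k : ℕ, (f (s + 2 * (k : ℂ) * δ) / f s) * (sf f δ s k / sf f δ δ k)
    * ∏ i, sf f δ (u i) k / sf f δ (δ + s - u i) k

namespace EllipticDuality

/-- The hypotheses on the bracket `f` and the step `δ`, bundled. -/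
structure Bracket (f : ℂ → ℂ) (δ : ℂ) : Prop where
  ne : f ≠ 0
  odd : ∀ t : ℂ, f (-t) = -f t
  diff : Differentiable ℂ f
  riem : ∀ x y u v : ℂ,
      f (x + y) * f (x - y) * f (u + v) * f (u - v) =
        f (x + u) * f (x - u) * f (y + v) * f (y - v)
          - f (x + v) * f (x - v) * f (y + u) * f (y - u)
  step : ∀ k : ℤ, k ≠ 0 → f ((k : ℂ) * δ) ≠ 0

namespace Bracket

variable {f : ℂ → ℂ} {δ : ℂ}

lemma zero (h : Bracket f δ) : f 0 = 0 := by
  have := h.odd 0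
  rw [neg_zero] at this
  exact self_eq_neg.mp this

lemma sub_comm (h : Bracket f δ) (s t : ℂ) : f (s - t) = -f (t - s) := by
  rw [← h.odd, neg_sub]

lemma sub_ne (h : Bracket f δ) {s t : ℂ} (hst : f (s - t) ≠ 0) : f (t - s) ≠ 0 := by
  rw [h.sub_comm]; exact neg_ne_zero.mpr hst

lemma step_nat (h : Bracket f δ) (k : ℕ) (hk : k ≠ 0) : f ((k : ℂ) * δ) ≠ 0 := by
  have := h.step (k : ℤ) (by exact_mod_cast hk)
  exact_mod_cast this

lemma one_step (h : Bracket f δ) : f δ ≠ 0 := by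
  simpa using h.step 1 one_ne_zero

lemma countable_zeros (h : Bracket f δ) : {z | f z = 0}.Countable := by
  obtain ⟨x, hx⟩ := Function.ne_iff.mp h.ne
  have hA : AnalyticOnNhd ℂ f Set.univ := fun z _ => h.diff.analyticAt z
  apply (HereditarilyLindelofSpace.isLindelof _).countable_of_isDiscrete
  have := hA.preimage_zero_mem_codiscrete hx
  have h2 := isDiscrete_of_codiscreteWithin (U := Set.univ) (s := {z | f z = 0})
    (by
      have h3 : {z | f z = 0}ᶜ = f ⁻¹' {0}ᶜ := by ext; simp
      rw [h3]; exact this)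
  simpa using h2

/-- Countably many non-constant affine arguments avoid the zeros of the bracket at a dense set of
parameters. -/
lemma dense_good (h : Bracket f δ) {J : Type*} [Countable J] (c d : J → ℂ) (hd : ∀ j, d j ≠ 0) :
    Dense {ε : ℂ | ∀ j, f (c j + d j * ε) ≠ 0} := by
  have hc : (⋃ j, (fun ε : ℂ => c j + d j * ε) ⁻¹' {z | f z = 0}).Countable := by
    refine Set.countable_iUnion fun j => h.countable_zeros.preimage ?_
    intro s t hst
    simpa [hd j] using hst
  have := hc.dense_compl ℂ
  convert this using 1
  ext ε
  simp

/-- Two points differing by `δ` are never both zeros of the bracket. -/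
lemma not_both_zero (h : Bracket f δ) (c : ℂ) (h0 : f c = 0) : f (c + δ) ≠ 0 := by
  intro h1
  -- Setting `v = 0`, `u = c` in the Riemann relation: `[x+c][x-c][y]² = [x]²[y+c][y-c]`.
  have key : ∀ y, f (y + c) * f (y - c) = 0 := by
    intro y
    have := h.riem δ y c 0
    simp only [add_zero, sub_zero, h0, mul_zero] at this
    rw [add_comm δ c, h1] at this
    have h2 : f δ * f δ * (f (y + c) * f (y - c)) = 0 := by linear_combination this
    simpa [h.one_step] using h2
  obtain ⟨y, hy⟩ := (h.dense_good (J := Bool) (fun b => cond b c (-c)) (fun _ => 1)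
    (by simp)).nonempty
  have h2 := hy true
  have h3 := hy false
  simp only [cond_true, cond_false, one_mul] at h2 h3
  rcases mul_eq_zero.mp (key y) with h4 | h4
  · exact h2 (by rw [add_comm]; exact h4)
  · exact h3 (by rw [neg_add_eq_sub]; exact h4)

/-- The three-term relation in the form used for exchanging a pair of factors. -/
lemma exchange (h : Bracket f δ) (z p q c d : ℂ) :
    f (z - c) * f (z - d) * (f (q - p) * f (p + q - c - d)) =
      f (q - c) * f (q - d) * (f (z - p) * f (z - (c + d - p)))
      - f (p - c) * f (p - d) * (f (z - q) * f (z - (c + d - q))) := by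
  -- Centre all arguments at `(c + d) / 2`.
  have := h.riem (z - (c + d) / 2) ((d - c) / 2) (q - (c + d) / 2) (p - (c + d) / 2)
  have e1 : z - (c + d) / 2 + (d - c) / 2 = z - c := by ring
  have e2 : z - (c + d) / 2 - (d - c) / 2 = z - d := by ring
  have e3 : q - (c + d) / 2 + (p - (c + d) / 2) = p + q - c - d := by ring
  have e4 : q - (c + d) / 2 - (p - (c + d) / 2) = q - p := by ring
  have e5 : z - (c + d) / 2 + (q - (c + d) / 2) = z - (c + d - q) := by ring
  have e6 : z - (c + d) / 2 - (q - (c + d) / 2) = z - q := by ring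
  have e7 : (d - c) / 2 + (p - (c + d) / 2) = p - c := by ring
  have e8 : (d - c) / 2 - (p - (c + d) / 2) = -(p - d) := by ring
  have e9 : z - (c + d) / 2 + (p - (c + d) / 2) = z - (c + d - p) := by ring
  have e10 : z - (c + d) / 2 - (p - (c + d) / 2) = z - p := by ring
  have e11 : (d - c) / 2 + (q - (c + d) / 2) = q - c := by ring
  have e12 : (d - c) / 2 - (q - (c + d) / 2) = -(q - d) := by ring
  rw [e1, e2, e3, e4, e5, e6, e7, e8, e9, e10, e11, e12, h.odd, h.odd] at this
  linear_combination this

end Bracket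

/-! ### Partial fractions and interpolation of theta functions -/

section Interpolation

variable {f : ℂ → ℂ} {δ : ℂ}

/-- The product of translates `∏_{c ∈ w} [z - c]`. -/
noncomputable def thetaProd (f : ℂ → ℂ) (w : List ℂ) (z : ℂ) : ℂ :=
  (w.map fun c => f (z - c)).prod

@[simp] lemma thetaProd_nil (z : ℂ) : thetaProd f [] z = 1 := rfl

@[simp] lemma thetaProd_cons (c : ℂ) (w : List ℂ) (z : ℂ) :
    thetaProd f (c :: w) z = f (z - c) * thetaProd f w z := by
  simp [thetaProd]

lemma thetaProd_append (w w' : List ℂ) (z : ℂ) :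
    thetaProd f (w ++ w') z = thetaProd f w z * thetaProd f w' z := by
  simp [thetaProd]

lemma Bracket.continuous_thetaProd (h : Bracket f δ) (w : List ℂ) :
    Continuous (thetaProd f w) := by
  have := h.diff.continuous
  induction w with
  | nil => exact continuous_const
  | cons c w ih =>
    have e : thetaProd f (c :: w) = fun z => f (z - c) * thetaProd f w z := by
      funext z; simp
    rw [e]; fun_prop

/-- The sum over the nodes `z_i`, `i ∈ s`, in the elliptic partial fraction identity. -/
noncomputable def pfSum (f : ℂ → ℂ) (z : ℕ → ℂ) (s : Finset ℕ) (w : List ℂ) : ℂ :=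
  ∑ i ∈ s, thetaProd f w (z i) / ∏ j ∈ s.erase i, f (z i - z j)

lemma pfSum_insert_two (z : ℕ → ℂ) (p q : ℕ) (t : Finset ℕ) (hpq : p ≠ q)
    (hp : p ∉ t) (hq : q ∉ t) (w : List ℂ) :
    pfSum f z (insert p (insert q t)) w =
      thetaProd f w (z p) / (f (z p - z q) * ∏ j ∈ t, f (z p - z j))
      + thetaProd f w (z q) / (f (z q - z p) * ∏ j ∈ t, f (z q - z j))
      + ∑ i ∈ t, thetaProd f w (z i) /
          (f (z i - z p) * (f (z i - z q) * ∏ j ∈ t.erase i, f (z i - z j))) := by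
  have hpt : p ∉ insert q t := by simp [hpq, hp]
  rw [pfSum, sum_insert hpt, sum_insert hq, ← add_assoc]
  have e1 : (insert p (insert q t)).erase p = insert q t := erase_insert hpt
  have e2 : (insert p (insert q t)).erase q = insert p t := by
    rw [erase_insert_of_ne hpq, erase_insert hq]
  rw [e1, e2, prod_insert hq, prod_insert hp]
  congr 1
  refine sum_congr rfl fun i hi => ?_
  have hip : p ≠ i := fun e => hp (e ▸ hi)
  have hiq : q ≠ i := fun e => hq (e ▸ hi)
  rw [erase_insert_of_ne hip, erase_insert_of_ne hiq, prod_insert, prod_insert]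
  · simp [hq]
  · simp [hp, hpq]

lemma pfSum_insert (z : ℕ → ℂ) (p : ℕ) (t : Finset ℕ) (hp : p ∉ t) (w : List ℂ) :
    pfSum f z (insert p t) w =
      thetaProd f w (z p) / (∏ j ∈ t, f (z p - z j))
      + ∑ i ∈ t, thetaProd f w (z i) / (f (z i - z p) * ∏ j ∈ t.erase i, f (z i - z j)) := by
  rw [pfSum, sum_insert hp, erase_insert hp]
  congr 1
  refine sum_congr rfl fun i hi => ?_
  have hip : p ≠ i := fun e => hp (e ▸ hi)
  rw [erase_insert_of_ne hip, prod_insert]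
  simp [hp]

lemma Bracket.continuous_pfSum_pair (h : Bracket f δ) (z : ℕ → ℂ) (s : Finset ℕ)
    (c d e : ℂ) (w : List ℂ) :
    Continuous fun ε => pfSum f z s ((c + ε) :: d :: (e - ε) :: w) := by
  have := h.diff.continuous
  simp only [pfSum, thetaProd_cons, div_eq_mul_inv]
  fun_prop

/-- The inductive step of the partial fraction identity: an exchange of the pair of factors
`[z - c][z - d]` removes one of the nodes `p`, `q`. -/
lemma Bracket.pfSum_step (h : Bracket f δ) (z : ℕ → ℂ) (p q : ℕ) (t : Finset ℕ) (hpq : p ≠ q)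
    (hp : p ∉ t) (hq : q ∉ t) (c d : ℂ) (w : List ℂ)
    (hz : ∀ i ∈ insert p (insert q t), ∀ j ∈ insert p (insert q t), i ≠ j → f (z i - z j) ≠ 0)
    (hD : f (z p + z q - c - d) ≠ 0)
    (h1 : pfSum f z (insert q t) ((c + d - z p) :: w) = 0)
    (h2 : pfSum f z (insert p t) ((c + d - z q) :: w) = 0) :
    pfSum f z (insert p (insert q t)) (c :: d :: w) = 0 := by
  have hqp0 : f (z q - z p) ≠ 0 := hz q (by simp) p (by simp) hpq.symm
  have key : f (z q - z p) * f (z p + z q - c - d) *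
      pfSum f z (insert p (insert q t)) (c :: d :: w) =
      f (z q - c) * f (z q - d) * pfSum f z (insert q t) ((c + d - z p) :: w)
      - f (z p - c) * f (z p - d) * pfSum f z (insert p t) ((c + d - z q) :: w) := by
    rw [pfSum_insert_two z p q t hpq hp hq, pfSum_insert z q t hq, pfSum_insert z p t hp]
    have hsum : f (z q - z p) * f (z p + z q - c - d) *
        (∑ i ∈ t, thetaProd f (c :: d :: w) (z i) /
          (f (z i - z p) * (f (z i - z q) * ∏ j ∈ t.erase i, f (z i - z j)))) =
        f (z q - c) * f (z q - d) * (∑ i ∈ t, thetaProd f ((c + d - z p) :: w) (z i) /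
          (f (z i - z q) * ∏ j ∈ t.erase i, f (z i - z j)))
        - f (z p - c) * f (z p - d) * (∑ i ∈ t, thetaProd f ((c + d - z q) :: w) (z i) /
          (f (z i - z p) * ∏ j ∈ t.erase i, f (z i - z j))) := by
      rw [mul_sum, mul_sum, mul_sum, ← sum_sub_distrib]
      refine sum_congr rfl fun i hi => ?_
      have hip : f (z i - z p) ≠ 0 := hz i (by simp [hi]) p (by simp) fun e => hp (e ▸ hi)
      have hiq : f (z i - z q) ≠ 0 := hz i (by simp [hi]) q (by simp) fun e => hq (e ▸ hi)
      have hR : ∏ j ∈ t.erase i, f (z i - z j) ≠ 0 := prod_ne_zero_iff.mpr fun j hj =>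
        hz i (by simp [hi]) j (by simp [mem_of_mem_erase hj]) (ne_of_mem_erase hj).symm
      have ex := h.exchange (z i) (z p) (z q) c d
      simp only [thetaProd_cons]
      field_simp
      linear_combination thetaProd f w (z i) * ex
    have hTp : ∏ j ∈ t, f (z p - z j) ≠ 0 := prod_ne_zero_iff.mpr fun j hj =>
        hz p (by simp) j (by simp [hj]) fun e => hp (e ▸ hj)
    have hTq : ∏ j ∈ t, f (z q - z j) ≠ 0 := prod_ne_zero_iff.mpr fun j hj =>
        hz q (by simp) j (by simp [hj]) fun e => hq (e ▸ hj)
    rw [mul_add, hsum]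
    simp only [thetaProd_cons]
    have e1 : z q - (c + d - z p) = z p + z q - c - d := by ring
    have e2 : z p - (c + d - z q) = z p + z q - c - d := by ring
    rw [e1, e2, h.sub_comm (z p) (z q)]
    field_simp
    ring
  rw [h1, h2, mul_zero, mul_zero, sub_zero] at key
  simpa [hqp0, hD] using key

/-- **Elliptic partial fractions**: `∑_i ∏_{c ∈ w} [z_i - c] / ∏_{j ≠ i} [z_i - z_j] = 0` when
there are as many factors as nodes and `∑ w = ∑ z`. -/
lemma Bracket.pfSum_eq_zero (h : Bracket f δ) (z : ℕ → ℂ) (K : ℕ) :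
    ∀ (s : Finset ℕ) (w : List ℂ), s.card = K + 1 → w.length = K + 1 →
      (∀ i ∈ s, ∀ j ∈ s, i ≠ j → f (z i - z j) ≠ 0) → w.sum = ∑ i ∈ s, z i →
      pfSum f z s w = 0 := by
  induction K with
  | zero =>
    intro s w hs hw _ hsum
    obtain ⟨i, rfl⟩ := card_eq_one.mp hs
    obtain ⟨c, rfl⟩ := List.length_eq_one_iff.mp hw
    have : c = z i := by simpa using hsum
    simp [pfSum, this, h.zero]
  | succ K ih =>
    intro s w hs hw hz hsum
    obtain ⟨p, s', hp, rfl, hs'⟩ := card_eq_succ.mp hs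
    obtain ⟨q, t, hq, rfl, ht⟩ := card_eq_succ.mp hs'
    have hpq : p ≠ q := fun e => hp (by simp [e])
    have hpt : p ∉ t := fun e => hp (by simp [e])
    rcases w with _ | ⟨c, _ | ⟨d, w⟩⟩
    · simp at hw
    · simp at hw
    rw [sum_insert hp, sum_insert hq] at hsum
    simp only [List.sum_cons] at hsum
    rcases w with _ | ⟨e, w⟩
    · -- Two nodes: the two summands cancel by oddness.
      have hK : K = 0 := by simpa using hw.symm
      subst hK
      have ht0 : t = ∅ := card_eq_zero.mp ht
      subst ht0
      have hqp0 : f (z q - z p) ≠ 0 := hz q (by simp) p (by simp) hpq.symm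
      rw [pfSum_insert_two z p q ∅ hpq (by simp) (by simp)]
      simp only [List.sum_nil, sum_empty, add_zero] at hsum
      have hd : d = z p + z q - c := by rw [← hsum]; ring
      have e1 : z p - d = -(z q - c) := by rw [hd]; ring
      have e2 : z q - d = -(z p - c) := by rw [hd]; ring
      simp only [thetaProd_cons, thetaProd_nil, e1, e2, h.odd, h.sub_comm (z p) (z q),
        prod_empty, sum_empty]
      field_simp
      ring
    · -- The exchange needs `[z_p + z_q - c - d] ≠ 0`; reach it by moving `c` against `e`.
      have hdense := h.dense_good (J := Unit) (fun _ => z p + z q - c - d) (fun _ => -1) (by simp)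
      have hcont := h.continuous_pfSum_pair z (insert p (insert q t)) c d e w
      have := hcont.ext_on hdense continuous_const (g := fun _ => 0) ?_
      · simpa using congrFun this 0
      · intro ε hε
        have hε : f (z p + z q - c - d + -1 * ε) ≠ 0 := hε ()
        refine h.pfSum_step z p q t hpq hpt hq (c + ε) d _ hz ?_ (ih _ _ ?_ ?_ ?_ ?_)
          (ih _ _ ?_ ?_ ?_ ?_)
        · convert hε using 2; ring
        · rw [card_insert_of_notMem hq, ht]
        · simpa using hw
        · exact fun i hi j hj => hz i (mem_insert_of_mem hi) j (mem_insert_of_mem hj)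
        · rw [sum_insert hq]; simp only [List.sum_cons] at hsum ⊢; linear_combination hsum
        · rw [card_insert_of_notMem hpt, ht]
        · simpa using hw
        · have hsub : insert p t ⊆ insert p (insert q t) :=
            insert_subset_insert _ (subset_insert _ _)
          exact fun i hi j hj => hz i (hsub hi) j (hsub hj)
        · rw [sum_insert hpt]; simp only [List.sum_cons] at hsum ⊢; linear_combination hsum

/-- `g` is a scalar multiple of a product of `K` translates of the bracket whose zeros sum
to `C`. -/
def IsTheta (f : ℂ → ℂ) (K : ℕ) (C : ℂ) (g : ℂ → ℂ) : Prop :=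
  ∃ (s : ℂ) (w : List ℂ), w.length = K ∧ w.sum = C ∧ ∀ z, g z = s * thetaProd f w z

lemma IsTheta.mul {K K' : ℕ} {C C' : ℂ} {g g' : ℂ → ℂ} (hg : IsTheta f K C g)
    (hg' : IsTheta f K' C' g') : IsTheta f (K + K') (C + C') fun z => g z * g' z := by
  obtain ⟨s, w, h1, h2, h3⟩ := hg
  obtain ⟨s', w', h1', h2', h3'⟩ := hg'
  refine ⟨s * s', w ++ w', by simp [h1, h1'], by simp [h2, h2'], fun z => ?_⟩
  simp only [h3, h3', thetaProd_append]; ring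

lemma IsTheta.const (s : ℂ) : IsTheta f 0 0 fun _ => s :=
  ⟨s, [], rfl, rfl, fun z => by simp⟩

lemma IsTheta.prod {J : Type*} (S : Finset J) (K : J → ℕ) (C : J → ℂ) (g : J → ℂ → ℂ)
    (hg : ∀ j ∈ S, IsTheta f (K j) (C j) (g j)) :
    IsTheta f (∑ j ∈ S, K j) (∑ j ∈ S, C j) fun z => ∏ j ∈ S, g j z := by
  classical
  induction S using Finset.induction_on with
  | empty => simpa using IsTheta.const 1
  | insert j S hj ih =>
    simp only [sum_insert hj, prod_insert hj]
    exact (hg j (by simp)).mul (ih fun i hi => hg i (by simp [hi]))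

/-- **Interpolation**: a combination of theta products of the same degree and the same sum of
zeros that vanishes at all points `-lδ`, `l ∈ ℕ`, vanishes identically. -/
lemma Bracket.theta_vanish (h : Bracket f δ) {J : Type*} (S : Finset J) (K : ℕ) (C : ℂ)
    (g : J → ℂ → ℂ) (hg : ∀ j ∈ S, IsTheta f K C (g j))
    (hv : ∀ l : ℕ, ∑ j ∈ S, g j (-(l : ℂ) * δ) = 0) (z : ℂ) : ∑ j ∈ S, g j z = 0 := by
  -- Nodes `0, -δ, …, -(K-2)δ` and a last node chosen so that the nodes do not sum to `C`
  -- modulo zeros of the bracket.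
  obtain ⟨r, hr⟩ : ∃ r : ℕ, f (C - ∑ i ∈ range K,
      (if i + 1 = K then -((i + r : ℕ) : ℂ) * δ else -(i : ℂ) * δ)) ≠ 0 ∨ K = 0 := by
    rcases K with _ | K
    · exact ⟨0, Or.inr rfl⟩
    · by_cases h0 : f (C - ∑ i ∈ range (K + 1),
        (if i + 1 = K + 1 then -((i + 0 : ℕ) : ℂ) * δ else -(i : ℂ) * δ)) = 0
      · refine ⟨1, Or.inl ?_⟩
        convert h.not_both_zero _ h0 using 2
        rw [sum_range_succ, sum_range_succ]
        have : ∀ r : ℕ, ∑ i ∈ range K,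
          (if i + 1 = K + 1 then -((i + r : ℕ) : ℂ) * δ else -(i : ℂ) * δ) =
            ∑ i ∈ range K, -(i : ℂ) * δ := fun r => sum_congr rfl fun i hi => by
          have := mem_range.mp hi
          rw [if_neg (by omega)]
        rw [this, this]
        simp only [if_true]
        push_cast; ring
      · exact ⟨0, Or.inl h0⟩
  rcases hr with hr | rfl
  swap
  · -- Degree zero: all summands are constant.
    have e : ∀ j ∈ S, g j z = g j (-((0 : ℕ) : ℂ) * δ) := by
      intro j hj
      obtain ⟨s, w, h1, -, h3⟩ := hg j hj
      rw [List.length_eq_zero_iff.mp h1] at h3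
      rw [h3, h3]; simp
    rw [sum_congr rfl e, hv]
  set ℓ : ℕ → ℕ := fun i => if i + 1 = K then i + r else i with hℓ
  have hr' : f (C - ∑ i ∈ range K, -(ℓ i : ℂ) * δ) ≠ 0 := by
    convert hr using 4 with i
    simp only [hℓ]; split_ifs <;> rfl
  have hinj : ∀ i ∈ range K, ∀ j ∈ range K, i ≠ j → ℓ i ≠ ℓ j := by
    intro i hi j hj hij
    have := mem_range.mp hi
    have := mem_range.mp hj
    simp only [hℓ]; split_ifs <;> omega
  have hcont : Continuous fun z => ∑ j ∈ S, g j z := by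
    refine continuous_finsetSum _ fun j hj => ?_
    obtain ⟨s, w, -, -, h3⟩ := hg j hj
    rw [funext h3]
    exact continuous_const.mul (h.continuous_thetaProd w)
  have hdense := h.dense_good (J := ℕ) (fun l => (l : ℂ) * δ) (fun _ => 1) (by simp)
  refine congrFun (hcont.ext_on hdense continuous_const (g := fun _ => 0) ?_) z
  intro z hz
  have hz : ∀ l : ℕ, f ((l : ℂ) * δ + 1 * z) ≠ 0 := hz
  -- The node `z` gets index `K`.
  set Z : ℕ → ℂ := fun i => if i = K then z else -(ℓ i : ℂ) * δ with hZ
  have hZK : Z K = z := by simp [hZ]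
  have hZlt : ∀ i ∈ range K, Z i = -(ℓ i : ℂ) * δ := fun i hi => by
    simp [hZ, (mem_range.mp hi).ne]
  have hzl : ∀ i ∈ range K, f (Z K - Z i) ≠ 0 := by
    intro i hi
    rw [hZK, hZlt i hi]
    convert hz (ℓ i) using 2; ring
  have hdist : ∀ i ∈ range (K + 1), ∀ j ∈ range (K + 1), i ≠ j → f (Z i - Z j) ≠ 0 := by
    intro i hi j hj hij
    rw [range_add_one, mem_insert] at hi hj
    rcases hi with rfl | hi <;> rcases hj with rfl | hj
    · exact absurd rfl hij
    · exact hzl j hj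
    · exact h.sub_ne (hzl i hi)
    · rw [hZlt i hi, hZlt j hj]
      convert h.step ((ℓ j : ℤ) - ℓ i) (by have := hinj i hi j hj hij; omega) using 2
      push_cast; ring
  have hsumZ : ∑ i ∈ range (K + 1), Z i = z + ∑ i ∈ range K, -(ℓ i : ℂ) * δ := by
    rw [sum_range_succ, hZK, sum_congr rfl hZlt, add_comm]
  set c0 : ℂ := ∑ i ∈ range (K + 1), Z i - C with hc0
  have hpf : ∑ i ∈ range (K + 1), (∑ j ∈ S, g j (Z i)) * f (Z i - c0) /
      ∏ j ∈ (range (K + 1)).erase i, f (Z i - Z j) = 0 := by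
    have : ∀ j ∈ S, ∑ i ∈ range (K + 1), g j (Z i) * f (Z i - c0) /
      ∏ j ∈ (range (K + 1)).erase i, f (Z i - Z j) = 0 := by
      intro j hj
      obtain ⟨s, w, h1, h2, h3⟩ := hg j hj
      have := h.pfSum_eq_zero Z K (range (K + 1)) (c0 :: w) (by simp) (by simp [h1]) hdist
        (by simp [h2, hc0])
      rw [pfSum] at this
      rw [← mul_zero s, ← this, mul_sum]
      refine sum_congr rfl fun i _ => ?_
      rw [h3, thetaProd_cons]; ring
    rw [← sum_eq_zero this, sum_comm]
    refine sum_congr rfl fun i _ => ?_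
    rw [sum_mul, sum_div]
  rw [sum_range_succ, sum_eq_zero, zero_add, hZK] at hpf
  · have hP : ∏ j ∈ (range (K + 1)).erase K, f (z - Z j) ≠ 0 := by
      refine prod_ne_zero_iff.mpr fun j hj => ?_
      have := mem_erase.mp hj
      rw [← hZK]
      exact hdist K (by simp) j this.2 this.1.symm
    have hc : f (z - c0) ≠ 0 := by
      convert hr' using 2
      rw [hc0, hsumZ]; ring
    rw [div_eq_zero_iff, mul_eq_zero] at hpf
    tauto
  · intro i hi
    rw [hZlt i hi, hv]; simp

end Interpolation

/-! ### The Frobenius determinant and the subset identity -/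

section Frobenius

variable {f : ℂ → ℂ} {δ : ℂ}

lemma Del_succ {n : ℕ} (x : Fin (n + 1) → ℂ) :
    Del f x = (∏ j : Fin n, f (x 0 - x j.succ)) * Del f fun i : Fin n => x i.succ := by
  unfold Del
  simp only [prod_filter]
  rw [Fin.prod_univ_succ]
  congr 1
  · rw [Fin.prod_univ_succ]; simp
  · refine prod_congr rfl fun i _ => ?_
    rw [Fin.prod_univ_succ]; simp [Fin.succ_lt_succ_iff]

lemma Del_ne_zero {n : ℕ} (x : Fin n → ℂ) (hx : ∀ i j, i ≠ j → f (x i - x j) ≠ 0) :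
    Del f x ≠ 0 := by
  refine prod_ne_zero_iff.mpr fun i _ => prod_ne_zero_iff.mpr fun j hj => hx i j ?_
  exact (mem_filter.mp hj).2.ne

lemma prod_pairs {n : ℕ} (F : Fin n → Fin n → ℂ) :
    ∏ i, ∏ j, F i j =
      (∏ i, F i i) * ∏ i, ∏ j ∈ univ.filter (fun j => i < j), F i j * F j i := by
  have h1 := prod_prod_Ioi_mul_eq_prod_prod_off_diag (fun i j => F j i)
  have h2 : ∀ i : Fin n, univ.filter (fun j => i < j) = Ioi i := fun i => by ext; simp
  simp only [h2]
  rw [h1, ← prod_mul_distrib]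
  refine prod_congr rfl fun i _ => ?_
  rw [compl_eq_univ_sdiff, sdiff_singleton_eq_erase, mul_prod_erase univ (F i) (mem_univ i)]

/-- The kernel of the Frobenius determinant, as a function of `s = x_i + y_j`. -/
noncomputable def frobKer (f : ℂ → ℂ) (ξ s : ℂ) : ℂ := f (ξ + s) / f s

/-- Schur complement of the corner entry of the Frobenius matrix: the kernel reproduces itself with
the parameter shifted by `x₀ + y₀`. -/
lemma Bracket.frobKer_schur (h : Bracket f δ) (ξ x y x0 y0 : ℂ) (h1 : f (x + y) ≠ 0)
    (h2 : f (x + y0) ≠ 0) (h3 : f (x0 + y) ≠ 0)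
    (h5 : f (ξ + (x0 + y0)) ≠ 0) :
    frobKer f ξ (x + y) - frobKer f ξ (x + y0) / frobKer f ξ (x0 + y0) * frobKer f ξ (x0 + y) =
      (f ξ / f (ξ + (x0 + y0)) * (f (x - x0) / f (x + y0))) *
        ((f (y - y0) / f (x0 + y)) * frobKer f (ξ + (x0 + y0)) (x + y)) := by
  have ex := h.riem (ξ + (x + y + x0 + y0) / 2) ((x + y + x0 + y0) / 2)
    (((x - x0) + (y - y0)) / 2) (((x - x0) - (y - y0)) / 2)
  have e1 : ξ + (x + y + x0 + y0) / 2 + (x + y + x0 + y0) / 2 = ξ + (x0 + y0) + (x + y) := by ring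
  have e2 : ξ + (x + y + x0 + y0) / 2 - (x + y + x0 + y0) / 2 = ξ := by ring
  have e3 : ((x - x0) + (y - y0)) / 2 + ((x - x0) - (y - y0)) / 2 = x - x0 := by ring
  have e4 : ((x - x0) + (y - y0)) / 2 - ((x - x0) - (y - y0)) / 2 = y - y0 := by ring
  have e5 : ξ + (x + y + x0 + y0) / 2 + ((x - x0) + (y - y0)) / 2 = ξ + (x + y) := by ring
  have e6 : ξ + (x + y + x0 + y0) / 2 - ((x - x0) + (y - y0)) / 2 = ξ + (x0 + y0) := by ring
  have e7 : (x + y + x0 + y0) / 2 + ((x - x0) - (y - y0)) / 2 = x + y0 := by ring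
  have e8 : (x + y + x0 + y0) / 2 - ((x - x0) - (y - y0)) / 2 = x0 + y := by ring
  have e9 : ξ + (x + y + x0 + y0) / 2 + ((x - x0) - (y - y0)) / 2 = ξ + (x + y0) := by ring
  have e10 : ξ + (x + y + x0 + y0) / 2 - ((x - x0) - (y - y0)) / 2 = ξ + (x0 + y) := by ring
  have e11 : (x + y + x0 + y0) / 2 + ((x - x0) + (y - y0)) / 2 = x + y := by ring
  have e12 : (x + y + x0 + y0) / 2 - ((x - x0) + (y - y0)) / 2 = x0 + y0 := by ring
  rw [e1, e2, e3, e4, e5, e6, e7, e8, e9, e10, e11, e12] at ex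
  simp only [frobKer]
  field_simp
  linear_combination -ex

/-- **Frobenius' determinant formula**, multiplied out so that it also holds for `n = 0`. The
non-vanishing of the partial sums keeps all pivots of the elimination invertible. -/
lemma Bracket.frobenius (h : Bracket f δ) (n : ℕ) : ∀ (x y : Fin n → ℂ) (ξ : ℂ),
    (∀ i j, f (x i + y j) ≠ 0) → (∀ s : Finset (Fin n), f (ξ + ∑ i ∈ s, (x i + y i)) ≠ 0) →
    (Matrix.of fun i j => frobKer f ξ (x i + y j)).det * (∏ i, ∏ j, f (x i + y j)) * f ξ =
      f ξ ^ n * f (ξ + ∑ i, (x i + y i)) * Del f x * Del f y := by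
  induction n with
  | zero => intro x y ξ _ _; simp [Del]
  | succ n ih =>
    intro x y ξ hxy hs
    set A : Matrix (Fin (n + 1)) (Fin (n + 1)) ℂ :=
      Matrix.of fun i j => frobKer f ξ (x i + y j) with hA
    set ξ' := ξ + (x 0 + y 0) with hξ'
    have h0 : f ξ' ≠ 0 := by simpa using hs {0}
    have hξ0 : f ξ ≠ 0 := by simpa using hs ∅
    set x' : Fin n → ℂ := fun i => x i.succ
    set y' : Fin n → ℂ := fun i => y i.succ
    have hIH := ih x' y' ξ' (fun i j => hxy _ _) (fun s => by
      have := hs (insert 0 (s.map (Fin.succEmb n)))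
      rw [sum_insert (by simp), sum_map] at this
      rw [hξ', add_assoc]; exact this)
    set A' : Matrix (Fin n) (Fin n) ℂ := Matrix.of fun i j => frobKer f ξ' (x' i + y' j) with hA'
    set c : Fin (n + 1) → ℂ := fun i => if i = 0 then 0 else A i 0 / A 0 0 with hc
    have hA00 : A 0 0 ≠ 0 := div_ne_zero h0 (hxy 0 0)
    set B : Matrix (Fin (n + 1)) (Fin (n + 1)) ℂ := Matrix.of fun i j => A i j - c i * A 0 j with hB
    have hc0 : c 0 = 0 := by simp [hc]
    have hAB : A.det = B.det := by
      refine Matrix.det_eq_of_forall_row_eq_smul_add_const c 0 hc0 fun i j => ?_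
      simp [hB, hc0]
    have hB00 : B 0 0 = A 0 0 := by simp [hB, hc0]
    have hBi0 : ∀ i : Fin n, B i.succ 0 = 0 := fun i => by
      simp [hB, hc, Fin.succ_ne_zero, hA00]
    have hdet : A.det = A 0 0 * (B.submatrix Fin.succ Fin.succ).det := by
      rw [hAB, Matrix.det_succ_column_zero, Fin.sum_univ_succ]
      simp [hBi0, hB00, Fin.succAbove_zero]
    have hsub : B.submatrix Fin.succ Fin.succ =
        Matrix.of fun i j => (f ξ / f ξ' * (f (x' i - x 0) / f (x' i + y 0))) *
          (Matrix.of fun i j => (f (y' j - y 0) / f (x 0 + y' j)) * A' i j) i j := by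
      ext i j
      have := h.frobKer_schur ξ (x' i) (y' j) (x 0) (y 0) (hxy _ _) (hxy _ _) (hxy _ _) h0
      simpa [hB, hc, hA, hA', Fin.succ_ne_zero] using this
    rw [hsub, Matrix.det_mul_column, Matrix.det_mul_row] at hdet
    rw [hdet, Del_succ x, Del_succ y, Fin.prod_univ_succ]
    simp only [Fin.prod_univ_succ (n := n), Fin.sum_univ_succ (n := n)]
    have hsum : ξ + (x 0 + y 0 + ∑ i : Fin n, (x i.succ + y i.succ)) =
        ξ' + ∑ i, (x' i + y' i) := (add_assoc _ _ _).symm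
    rw [hsum]
    simp only [prod_mul_distrib, prod_div_distrib, prod_const, card_univ, Fintype.card_fin]
    have hx1 : ∏ i, f (x' i - x 0) = (-1) ^ n * ∏ i, f (x 0 - x' i) := by
      rw [show (-1 : ℂ) ^ n = ∏ _i : Fin n, (-1 : ℂ) by simp, ← prod_mul_distrib]
      exact prod_congr rfl fun i _ => by rw [h.sub_comm]; ring
    have hy1 : ∏ i, f (y' i - y 0) = (-1) ^ n * ∏ i, f (y 0 - y' i) := by
      rw [show (-1 : ℂ) ^ n = ∏ _i : Fin n, (-1 : ℂ) by simp, ← prod_mul_distrib]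
      exact prod_congr rfl fun i _ => by rw [h.sub_comm]; ring
    have hp1 : ∏ i, f (x' i + y 0) ≠ 0 := prod_ne_zero_iff.mpr fun i _ => hxy _ _
    have hp2 : ∏ j, f (x 0 + y' j) ≠ 0 := prod_ne_zero_iff.mpr fun i _ => hxy _ _
    have h00 := hxy 0 0
    have hsq : ((-1 : ℂ) ^ n) * (-1) ^ n = 1 := by rw [← mul_pow]; simp
    rw [hx1, hy1]
    have hAe : A 0 0 = f ξ' / f (x 0 + y 0) := rfl
    rw [hAe]
    have hIH' : A'.det * (∏ i, ∏ j, f (x' i + y' j)) =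
        f ξ' ^ n * f (ξ' + ∑ i, (x' i + y' i)) * Del f x' * Del f y' / f ξ' := by
      rw [← hIH]; field_simp
    have hgoal : ∀ D P X Y dx dy q1 q2 F : ℂ, q1 ≠ 0 → q2 ≠ 0 →
        D * P = f ξ' ^ n * F * dx * dy / f ξ' →
        f ξ' / f (x 0 + y 0) * ((f ξ ^ n / f ξ' ^ n * ((-1) ^ n * X / q1)) *
          (((-1) ^ n * Y / q2) * D)) * ((f (x 0 + y 0) * q2) * (q1 * P)) * f ξ =
        f ξ ^ (n + 1) * F * (X * dx) * (Y * dy) := by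
      intro D P X Y dx dy q1 q2 F hq1 hq2 hD
      have : f ξ' / f (x 0 + y 0) * ((f ξ ^ n / f ξ' ^ n * ((-1) ^ n * X / q1)) *
          (((-1) ^ n * Y / q2) * D)) * ((f (x 0 + y 0) * q2) * (q1 * P)) * f ξ =
          ((-1) ^ n * (-1) ^ n) * (f ξ' * f ξ ^ (n + 1) / f ξ' ^ n * X * Y * (D * P)) := by
        field_simp
        ring
      rw [this, hsq, hD]
      field_simp
    exact hgoal _ _ _ _ _ _ _ _ _ hp1 hp2 hIH'

/-- The summand attached to a set `I` of rows in the subset identity. -/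
noncomputable def subsetTerm (f : ℂ → ℂ) (δ : ℂ) {ι κ : Type*} [Fintype ι] [DecidableEq ι]
    [Fintype κ] (x : ι → ℂ) (y : κ → ℂ) (I : Finset ι) : ℂ :=
  (∏ i ∈ I, ∏ j ∈ Iᶜ, f (x i - x j - δ) / f (x i - x j)) *
    ∏ i ∈ I, ∏ k, f (x i + y k + δ) / f (x i + y k)

lemma Bracket.Del_shift (h : Bracket f δ) {n : ℕ} (x : Fin n → ℂ)
    (hx : ∀ i j, i ≠ j → f (x i - x j) ≠ 0) (I : Finset (Fin n)) :
    Del f (fun i => x i - if i ∈ I then δ else 0) =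
      Del f x * ∏ i ∈ I, ∏ j ∈ Iᶜ, f (x i - x j - δ) / f (x i - x j) := by
  have e : ∏ i ∈ I, ∏ j ∈ Iᶜ, f (x i - x j - δ) / f (x i - x j) =
      ∏ i, ∏ j, if i ∈ I ∧ j ∉ I then f (x i - x j - δ) / f (x i - x j) else 1 := by
    rw [← prod_subset (subset_univ I)]
    · refine prod_congr rfl fun i hi => ?_
      rw [← prod_subset (subset_univ Iᶜ)]
      · exact prod_congr rfl fun j hj => by simp [hi, mem_compl.mp hj]
      · intro j _ hj; simp at hj; simp [hj]
    · intro i _ hi; simp [hi]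
  rw [e, prod_pairs]
  have e2 : ∀ i, (if i ∈ I ∧ i ∉ I then f (x i - x i - δ) / f (x i - x i) else 1) = 1 :=
    fun i => if_neg (by tauto)
  rw [prod_congr rfl (fun i _ => e2 i), prod_const_one, one_mul]
  unfold Del
  rw [← prod_mul_distrib]
  refine prod_congr rfl fun i _ => ?_
  rw [← prod_mul_distrib]
  refine prod_congr rfl fun j hj => ?_
  have hij : i ≠ j := (mem_filter.mp hj).2.ne
  have h1 := hx i j hij
  have h2 := hx j i hij.symm
  by_cases hi : i ∈ I <;> by_cases hj : j ∈ I <;> simp only [hi, hj, if_true, if_false,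
    not_true, not_false_iff, and_self, false_and, and_false, mul_one, one_mul, sub_zero]
  · congr 1; ring
  · rw [mul_div_cancel₀ _ h1]; congr 1; ring
  · rw [h.sub_comm (x i) (x j)]
    rw [neg_mul, mul_div_cancel₀ _ h2, ← h.odd]; congr 1; ring

/-- The Frobenius determinant with the rows in `I` shifted, compared with the unshifted product. -/
lemma Bracket.frobenius_shift (h : Bracket f δ) {n : ℕ} (x y : Fin n → ℂ) (ξ : ℂ)
    (hx : ∀ i j, i ≠ j → f (x i - x j) ≠ 0)
    (h0 : ∀ i j, f (x i + y j) ≠ 0) (h1 : ∀ i j, f (x i + y j + δ) ≠ 0)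
    (hξ : ∀ (s : Finset (Fin n)) (k : ℤ), f (ξ + ∑ i ∈ s, (x i + y i) + k * δ) ≠ 0)
    (I : Finset (Fin n)) :
    (Matrix.of fun i j => frobKer f ξ (x i + y j + δ - if i ∈ I then δ else 0)).det *
        (∏ i, ∏ j, f (x i + y j + δ)) * f ξ =
      f ξ ^ n * f (ξ + ∑ i, (x i + y i) + ((n : ℂ) - I.card) * δ) * Del f x * Del f y *
        subsetTerm f δ x y I := by
  set x' : Fin n → ℂ := fun i => x i - if i ∈ I then δ else 0 with hx'
  set y' : Fin n → ℂ := fun i => y i + δ with hy'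
  have hxy : ∀ i j, x' i + y' j = x i + y j + δ - if i ∈ I then δ else 0 := fun i j => by
    simp only [hx', hy']; ring
  have hsum : ∀ s : Finset (Fin n), ∑ i ∈ s, (x' i + y' i) =
      ∑ i ∈ s, (x i + y i) + ((s.card : ℂ) - (s ∩ I).card) * δ := by
    intro s
    simp only [hxy, sum_sub_distrib, sum_add_distrib, sum_const, nsmul_eq_mul]
    rw [← sum_filter, sum_const, nsmul_eq_mul, filter_mem_eq_inter]; ring
  have hF := h.frobenius n x' y' ξ
    (fun i j => by
      rw [hxy]; split_ifs
      · simpa using h0 i j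
      · simpa using h1 i j)
    (fun s => by
      rw [hsum]
      have := hξ s ((s.card : ℤ) - (s ∩ I).card)
      push_cast at this
      rwa [← add_assoc])
  rw [h.Del_shift x hx I, hsum univ] at hF
  have hDy : Del f y' = Del f y := by simp [Del, hy']
  rw [hDy] at hF
  simp only [hxy, univ_inter, card_univ, Fintype.card_fin, ← add_assoc] at hF
  have hprod : (∏ i, ∏ j, f (x i + y j + δ)) =
      (∏ i, ∏ j, f (x i + y j + δ - if i ∈ I then δ else 0)) *
        ∏ i ∈ I, ∏ k, f (x i + y k + δ) / f (x i + y k) := by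
    have e : ∏ i ∈ I, ∏ k, f (x i + y k + δ) / f (x i + y k) =
        ∏ i, ∏ k, if i ∈ I then f (x i + y k + δ) / f (x i + y k) else 1 := by
      rw [← prod_subset (subset_univ I)]
      · exact prod_congr rfl fun i hi => by simp [hi]
      · intro i _ hi; simp [hi]
    rw [e, ← prod_mul_distrib]
    refine prod_congr rfl fun i _ => ?_
    rw [← prod_mul_distrib]
    refine prod_congr rfl fun j _ => ?_
    split_ifs
    · rw [add_sub_cancel_right, mul_div_cancel₀ _ (h0 i j)]
    · simp
  rw [hprod, subsetTerm]
  linear_combination (∏ i ∈ I, ∏ k, f (x i + y k + δ) / f (x i + y k)) * hF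

/-- Expanding `det (A + uB)` by rows. -/
lemma det_add_smul_expand {n : ℕ} (A B : Matrix (Fin n) (Fin n) ℂ) (u : ℂ) :
    (A + u • B).det = ∑ I : Finset (Fin n), u ^ I.card *
      (Matrix.of fun i j => if i ∈ I then B i j else A i j).det := by
  rw [add_comm]
  have := (Matrix.detRowAlternating (n := Fin n) (R := ℂ)).toMultilinearMap.map_add_univ
    (fun i => u • B i) (fun i => A i)
  refine this.trans (sum_congr rfl fun I _ => ?_)
  have e : I.piecewise (fun i => u • B i) (fun i => A i) =
      fun i => (if i ∈ I then u else 1) • (if i ∈ I then B i else A i) := by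
    funext i
    by_cases hi : i ∈ I <;> simp [hi]
  rw [e, MultilinearMap.map_smul_univ]
  have e3 : ∏ i, (if i ∈ I then u else 1) = u ^ I.card := by
    rw [prod_ite]; simp
  rw [e3, smul_eq_mul]
  congr 1
  change Matrix.det _ = _
  congr 1
  ext i j
  by_cases hi : i ∈ I <;> simp [hi]

/-- Shifting `N` rows in all possible ways gives the same sum of determinants as shifting
`N` columns, since the entries depend on `x_i + y_j` only. -/
lemma sum_det_rows_eq_cols {n : ℕ} (A B : Matrix (Fin n) (Fin n) ℂ) (N : ℕ) :
    ∑ I ∈ powersetCard N (univ : Finset (Fin n)),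
        (Matrix.of fun i j => if i ∈ I then B i j else A i j).det =
      ∑ I ∈ powersetCard N (univ : Finset (Fin n)),
        (Matrix.of fun i j => if i ∈ I then B j i else A j i).det := by
  have coef : ∀ D : Finset (Fin n) → ℂ,
      (∑ I : Finset (Fin n), Polynomial.monomial I.card (D I)).coeff N =
        ∑ I ∈ powersetCard N (univ : Finset (Fin n)), D I := by
    intro D
    rw [Polynomial.finsetSum_coeff]
    simp only [Polynomial.coeff_monomial]
    rw [← sum_filter]
    refine sum_congr ?_ fun _ _ => rfl
    ext I; simp [mem_powersetCard]
  rw [← coef, ← coef]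
  congr 1
  refine Polynomial.funext fun u => ?_
  simp only [Polynomial.eval_finsetSum, Polynomial.eval_monomial]
  have h1 := det_add_smul_expand A B u
  have h2 := det_add_smul_expand A.transpose B.transpose u
  rw [← Matrix.transpose_smul, ← Matrix.transpose_add, Matrix.det_transpose, h1] at h2
  simpa [mul_comm] using h2

lemma Bracket.subset_identity_fin (h : Bracket f δ) {n : ℕ} (x y : Fin n → ℂ)
    (hx : ∀ i j, i ≠ j → f (x i - x j) ≠ 0) (hy : ∀ i j, i ≠ j → f (y i - y j) ≠ 0)
    (h0 : ∀ i j, f (x i + y j) ≠ 0) (h1 : ∀ i j, f (x i + y j + δ) ≠ 0) (N : ℕ) :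
    ∑ I ∈ powersetCard N univ, subsetTerm f δ x y I =
      ∑ I ∈ powersetCard N univ, subsetTerm f δ y x I := by
  obtain ⟨ξ, hξ⟩ := (h.dense_good (J := Finset (Fin n) × ℤ)
    (fun p => ∑ i ∈ p.1, (x i + y i) + p.2 * δ) (fun _ => 1) (by simp)).nonempty
  have hξ : ∀ (s : Finset (Fin n)) (k : ℤ), f (ξ + ∑ i ∈ s, (x i + y i) + k * δ) ≠ 0 := by
    intro s k
    have := hξ (s, k)
    simp only [one_mul] at this
    convert this using 2; ring
  have hξ0 : f ξ ≠ 0 := by simpa using hξ ∅ 0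
  set P := ∏ i, ∏ j, f (x i + y j + δ) with hP
  have hP0 : P ≠ 0 := prod_ne_zero_iff.mpr fun i _ => prod_ne_zero_iff.mpr fun j _ => h1 i j
  set c := f ξ ^ n * f (ξ + ∑ i, (x i + y i) + ((n : ℂ) - N) * δ) * Del f x * Del f y with hc
  have hc0 : c ≠ 0 := by
    refine mul_ne_zero (mul_ne_zero (mul_ne_zero (pow_ne_zero _ hξ0) ?_) (Del_ne_zero x hx))
      (Del_ne_zero y hy)
    have := hξ univ ((n : ℤ) - N)
    push_cast at this
    exact this
  have e1 : ∀ I ∈ powersetCard N (univ : Finset (Fin n)), c * subsetTerm f δ x y I =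
      (P * f ξ) * (Matrix.of fun i j => if i ∈ I then frobKer f ξ (x i + y j) else
        frobKer f ξ (x i + y j + δ)).det := by
    intro I hI
    have := h.frobenius_shift x y ξ hx h0 h1 hξ I
    rw [(mem_powersetCard.mp hI).2] at this
    rw [hc, ← this]
    rw [mul_assoc, mul_comm]
    congr 3
    ext i j
    by_cases hi : i ∈ I <;> simp [hi]
  have e2 : ∀ I ∈ powersetCard N (univ : Finset (Fin n)), c * subsetTerm f δ y x I =
      (P * f ξ) * (Matrix.of fun i j => if i ∈ I then frobKer f ξ (x j + y i) else
        frobKer f ξ (x j + y i + δ)).det := by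
    intro I hI
    have := h.frobenius_shift y x ξ hy (fun i j => by rw [add_comm]; exact h0 j i)
      (fun i j => by rw [add_comm (y i)]; exact h1 j i)
      (fun s k => by simpa only [add_comm (y _)] using hξ s k) I
    rw [(mem_powersetCard.mp hI).2] at this
    simp only [add_comm (y _)] at this
    rw [prod_comm, ← hP] at this
    have hc' : c = f ξ ^ n * f (ξ + ∑ i, (x i + y i) + ((n : ℂ) - N) * δ) * Del f y * Del f x := by
      rw [hc]; ring
    rw [hc', ← this, mul_assoc, mul_comm]
    congr 3
    ext i j
    by_cases hi : i ∈ I <;> simp [hi]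
  have key := sum_det_rows_eq_cols (Matrix.of fun i j => frobKer f ξ (x i + y j + δ))
    (Matrix.of fun i j => frobKer f ξ (x i + y j)) N
  apply mul_left_cancel₀ hc0
  rw [mul_sum, mul_sum, sum_congr rfl e1, sum_congr rfl e2, ← mul_sum, ← mul_sum]
  congr 1

lemma subsetTerm_map {ι κ ι' κ' : Type*} [Fintype ι] [DecidableEq ι] [Fintype κ]
    [Fintype ι'] [DecidableEq ι'] [Fintype κ'] (e : ι' ≃ ι) (e' : κ' ≃ κ)
    (x : ι → ℂ) (y : κ → ℂ) (I : Finset ι') :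
    subsetTerm f δ x y (I.map e.toEmbedding) = subsetTerm f δ (x ∘ e) (y ∘ e') I := by
  have hcompl : (I.map e.toEmbedding)ᶜ = Iᶜ.map e.toEmbedding := by
    ext i; simp [mem_map_equiv]
  unfold subsetTerm
  rw [hcompl]
  simp only [prod_map, Equiv.coe_toEmbedding, Function.comp]
  congr 1
  refine prod_congr rfl fun i _ => ?_
  exact (e'.prod_comp fun k => f (x (e i) + y k + δ) / f (x (e i) + y k)).symm

lemma sum_subsetTerm_reindex {ι κ ι' κ' : Type*} [Fintype ι] [DecidableEq ι] [Fintype κ]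
    [Fintype ι'] [DecidableEq ι'] [Fintype κ'] (e : ι' ≃ ι) (e' : κ' ≃ κ)
    (x : ι → ℂ) (y : κ → ℂ) (N : ℕ) :
    ∑ I ∈ powersetCard N univ, subsetTerm f δ x y I =
      ∑ I ∈ powersetCard N univ, subsetTerm f δ (x ∘ e) (y ∘ e') I := by
  rw [← Finset.map_univ_equiv e, powersetCard_map, sum_map]
  exact sum_congr rfl fun I _ => subsetTerm_map e e' x y I

/-- **Subset identity**: the sum of `subsetTerm` over `N`-element subsets is symmetric in the two
sets of variables, when these have equal size. -/
lemma Bracket.subset_identity (h : Bracket f δ) {ι κ : Type*} [Fintype ι] [DecidableEq ι]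
    [Fintype κ] [DecidableEq κ] (hcard : Fintype.card ι = Fintype.card κ)
    (x : ι → ℂ) (y : κ → ℂ)
    (hx : ∀ i j, i ≠ j → f (x i - x j) ≠ 0) (hy : ∀ i j, i ≠ j → f (y i - y j) ≠ 0)
    (h0 : ∀ i j, f (x i + y j) ≠ 0) (h1 : ∀ i j, f (x i + y j + δ) ≠ 0) (N : ℕ) :
    ∑ I ∈ powersetCard N univ, subsetTerm f δ x y I =
      ∑ I ∈ powersetCard N univ, subsetTerm f δ y x I := by
  have e := (Fintype.equivFin ι).symm
  have e' := (Fintype.equivFinOfCardEq hcard.symm).symm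
  rw [sum_subsetTerm_reindex e e', sum_subsetTerm_reindex e' e]
  exact h.subset_identity_fin _ _ (fun i j hij => hx _ _ (e.injective.ne hij))
    (fun i j hij => hy _ _ (e'.injective.ne hij)) (fun _ _ => h0 _ _) (fun _ _ => h1 _ _) N

end Frobenius

/-! ### The symmetric form of the series and its principal specialization -/

section Specialization

variable {f : ℂ → ℂ} {δ : ℂ}

/-- The summand of the series `Φ`, up to the sign `(-1)^|μ|`, written without reference to an order
of the index set: the difference products are absorbed in the denominators. -/
noncomputable def dualTerm (f : ℂ → ℂ) (δ : ℂ) {ι κ : Type*} [Fintype ι] [Fintype κ]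
    (a x : ι → ℂ) (b y : κ → ℂ) (μ : ι → ℕ) : ℂ :=
  (∏ i, ∏ j, sf f δ (x i - x j + a j) (μ i) / sf f δ (x i - x j - (μ j : ℂ) * δ) (μ i)) *
    ∏ i, ∏ k, sf f δ (x i + y k - b k) (μ i) / sf f δ (x i + y k) (μ i)

/-- The sum of `dualTerm` over all multi-indices of weight `N`. -/
noncomputable def dualSum (f : ℂ → ℂ) (δ : ℂ) {ι κ : Type*} [Fintype ι] [DecidableEq ι] [Fintype κ]
    (a x : ι → ℂ) (b y : κ → ℂ) (N : ℕ) : ℂ :=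
  ∑ μ ∈ piAntidiag univ N, dualTerm f δ a x b y μ

/-- Genericity of the variables with respect to all integer shifts by `δ`. -/
structure Generic (f : ℂ → ℂ) (δ : ℂ) {ι κ : Type*} (x : ι → ℂ) (y : κ → ℂ) : Prop where
  left : ∀ i j, i ≠ j → ∀ l : ℤ, f (x i - x j + l * δ) ≠ 0
  right : ∀ i j, i ≠ j → ∀ l : ℤ, f (y i - y j + l * δ) ≠ 0
  mixed : ∀ i k, ∀ l : ℤ, f (x i + y k + l * δ) ≠ 0

lemma Generic.symm {ι κ : Type*} {x : ι → ℂ} {y : κ → ℂ} (hg : Generic f δ x y) :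
    Generic f δ y x :=
  ⟨hg.right, hg.left, fun k i l => by rw [add_comm (y k)]; exact hg.mixed i k l⟩

lemma prod_telescope (g : ℕ → ℂ) {q r : ℕ} (hqr : q ≤ r) (hg : ∀ l, q ≤ l → g l ≠ 0) :
    ∏ l ∈ Ico q r, g (l + 1) / g l = g r / g q := by
  induction r, hqr using Nat.le_induction with
  | base => simp [div_self (hg q le_rfl)]
  | succ r hr ih =>
    have := hg r hr
    rw [prod_Ico_succ_top hr, ih]
    field_simp

lemma block_telescope (z : ℂ) {p q r : ℕ} (hqr : q ≤ r)
    (hz : ∀ l < p, ∀ l', q ≤ l' → f (z + ((l : ℂ) - l') * δ) ≠ 0) :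
    ∏ l ∈ range p, ∏ l' ∈ Ico q r,
        f (z + ((l : ℂ) - l') * δ - δ) / f (z + ((l : ℂ) - l') * δ) =
      sf f δ (z - r * δ) p / sf f δ (z - q * δ) p := by
  unfold sf
  rw [← prod_div_distrib]
  refine prod_congr rfl fun l hl => ?_
  have := prod_telescope (fun l' : ℕ => f (z + ((l : ℂ) - l') * δ)) hqr
    (fun l' h1 => hz l (mem_range.mp hl) l' h1)
  rw [show z - r * δ + l * δ = z + ((l : ℂ) - r) * δ by ring,
    show z - q * δ + l * δ = z + ((l : ℂ) - q) * δ by ring, ← this]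
  refine prod_congr rfl fun l' _ => ?_
  congr 2
  push_cast; ring

lemma block_telescope' (z : ℂ) (p r : ℕ)
    (hz : ∀ l : ℕ, f (z + (l : ℂ) * δ) ≠ 0) :
    ∏ l ∈ range p, ∏ l' ∈ range r,
        f (z + ((l : ℂ) + l') * δ + δ) / f (z + ((l : ℂ) + l') * δ) =
      sf f δ (z + r * δ) p / sf f δ z p := by
  unfold sf
  rw [← prod_div_distrib]
  refine prod_congr rfl fun l hl => ?_
  have := prod_telescope (fun l' : ℕ => f (z + ((l : ℂ) + l') * δ)) (Nat.zero_le r)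
    (fun l' _ => by have := hz (l + l'); push_cast at this; exact this)
  rw [show z + r * δ + l * δ = z + ((l : ℂ) + r) * δ by ring,
    show z + l * δ = z + ((l : ℂ) + (0 : ℕ)) * δ by push_cast; ring, ← this, range_eq_Ico]
  refine prod_congr rfl fun l' _ => ?_
  congr 2
  push_cast; ring

/-- The set of the first `μ i` elements of the `i`-th block, for every `i`. -/
def blockSet {ι : Type*} [Fintype ι] (α μ : ι → ℕ) : Finset (Σ i, Fin (α i)) :=
  univ.filter fun p => p.2.1 < μ p.1

lemma prod_blockSet {ι : Type*} [Fintype ι] (α μ : ι → ℕ) (hμ : ∀ i, μ i ≤ α i) (G : ι → ℕ → ℂ) :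
    ∏ p ∈ blockSet α μ, G p.1 p.2 = ∏ i, ∏ l ∈ range (μ i), G i l := by
  rw [blockSet, prod_filter, Fintype.prod_sigma]
  refine prod_congr rfl fun i _ => ?_
  simp only
  rw [Fin.prod_univ_eq_prod_range (fun l => if l < μ i then G i l else 1) (α i), ← prod_filter]
  refine prod_congr ?_ fun _ _ => rfl
  ext l; have := hμ i; simp only [mem_filter, mem_range]; omega

lemma prod_blockSet_compl {ι : Type*} [Fintype ι] [DecidableEq ι] (α μ : ι → ℕ) (G : ι → ℕ → ℂ) :
    ∏ p ∈ (blockSet α μ)ᶜ, G p.1 p.2 = ∏ i, ∏ l ∈ Ico (μ i) (α i), G i l := by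
  rw [blockSet, compl_filter, prod_filter, Fintype.prod_sigma]
  refine prod_congr rfl fun i _ => ?_
  simp only
  rw [Fin.prod_univ_eq_prod_range (fun l => if ¬ l < μ i then G i l else 1) (α i), ← prod_filter]
  refine prod_congr ?_ fun _ _ => rfl
  ext l; simp only [mem_filter, mem_range, mem_Ico]; omega

lemma card_blockSet {ι : Type*} [Fintype ι] (α μ : ι → ℕ) (hμ : ∀ i, μ i ≤ α i) :
    (blockSet α μ).card = ∑ i, μ i := by
  rw [blockSet, card_filter, Fintype.sum_sigma]
  refine sum_congr rfl fun i _ => ?_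
  simp only
  rw [Fin.sum_univ_eq_sum_range (fun l => if l < μ i then 1 else 0) (α i), ← sum_filter]
  have : (range (α i)).filter (fun l => l < μ i) = range (μ i) := by
    ext l; have := hμ i; simp only [mem_filter, mem_range]; omega
  simp [this]

lemma blockSet_injOn {ι : Type*} [Fintype ι] (α : ι → ℕ) :
    Set.InjOn (blockSet α) {μ | ∀ i, μ i ≤ α i} := by
  intro μ hμ ν hν e
  funext i
  have key : ∀ μ ν : ι → ℕ, (∀ i, ν i ≤ α i) → blockSet α μ = blockSet α ν → ν i ≤ μ i := by
    intro μ ν hν e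
    by_contra hlt
    push Not at hlt
    have : (⟨i, ⟨μ i, lt_of_lt_of_le hlt (hν i)⟩⟩ : Σ i, Fin (α i)) ∈ blockSet α ν := by
      simp [blockSet, hlt]
    rw [← e] at this
    simp [blockSet] at this
  exact le_antisymm (key _ _ hμ e.symm) (key _ _ hν e)

/-- A subset that is not an initial segment in every block has a gap. -/
lemma exists_gap {ι : Type*} [Fintype ι] [DecidableEq ι] (α : ι → ℕ) (I : Finset (Σ i, Fin (α i)))
    (hI : ∀ μ : ι → ℕ, (∀ i, μ i ≤ α i) → blockSet α μ ≠ I) :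
    ∃ p ∈ I, ∃ q ∉ I, p.1 = q.1 ∧ (p.2 : ℕ) = q.2 + 1 := by
  by_contra hno
  push Not at hno
  set μ : ι → ℕ := fun i => (univ.filter fun l : Fin (α i) => (⟨i, l⟩ : Σ i, Fin (α i)) ∈ I).sup
    fun l => l.1 + 1 with hμ
  refine hI μ (fun i => Finset.sup_le fun l _ => l.2) ?_
  ext ⟨i, l⟩
  simp only [blockSet, mem_filter, mem_univ, true_and]
  constructor
  · intro hl
    rw [hμ, Finset.lt_sup_iff] at hl
    obtain ⟨l', hl', hlt⟩ := hl
    have hl'I := (mem_filter.mp hl').2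
    -- Descend from `l'` to `l` inside the block.
    have desc : ∀ d : ℕ, ∀ (hd : l'.1 - d < α i), (⟨i, ⟨l'.1 - d, hd⟩⟩ : Σ i, Fin (α i)) ∈ I := by
      intro d
      induction d with
      | zero => intro hd; exact hl'I
      | succ d ih =>
        intro hd
        have hd' : l'.1 - d < α i := lt_of_le_of_lt (Nat.sub_le _ _) l'.2
        rcases Nat.eq_zero_or_pos (l'.1 - d) with h0 | h0
        · have : l'.1 - (d + 1) = l'.1 - d := by omega
          simp only [this]; exact ih hd'
        · by_contra hn
          exact hno _ (ih hd') _ hn rfl (by simp only; omega)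
    have := desc (l'.1 - l.1) (by have := l.2; omega)
    convert this using 3
    omega
  · intro hl
    rw [hμ, Finset.lt_sup_iff]
    exact ⟨l, by simp [hl], Nat.lt_succ_self _⟩

lemma subsetTerm_blockSet {ι κ : Type*} [Fintype ι] [DecidableEq ι] [Fintype κ]
    (h : Bracket f δ) (x : ι → ℂ) (y : κ → ℂ) (hg : Generic f δ x y) (α : ι → ℕ) (β : κ → ℕ)
    (μ : ι → ℕ) (hμ : ∀ i, μ i ≤ α i) :
    subsetTerm f δ (fun p : Σ i, Fin (α i) => x p.1 + (p.2 : ℂ) * δ)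
        (fun p : Σ k, Fin (β k) => y p.1 + (p.2 : ℂ) * δ) (blockSet α μ) =
      dualTerm f δ (fun i => -(α i : ℂ) * δ) x (fun k => -(β k : ℂ) * δ) y μ := by
  unfold subsetTerm dualTerm
  congr 1
  · rw [prod_blockSet α μ hμ (fun i l => ∏ q ∈ (blockSet α μ)ᶜ,
      f (x i + (l : ℂ) * δ - (x q.1 + (q.2 : ℂ) * δ) - δ) /
        f (x i + (l : ℂ) * δ - (x q.1 + (q.2 : ℂ) * δ)))]
    refine prod_congr rfl fun i _ => ?_
    simp only [fun l : ℕ => prod_blockSet_compl α μ (fun j l' =>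
      f (x i + (l : ℂ) * δ - (x j + (l' : ℂ) * δ) - δ) /
        f (x i + (l : ℂ) * δ - (x j + (l' : ℂ) * δ)))]
    rw [prod_comm]
    refine prod_congr rfl fun j _ => ?_
    have := block_telescope (f := f) (δ := δ) (x i - x j) (p := μ i) (hμ j) (by
      intro l hl l' hl'
      by_cases hij : i = j
      · subst hij
        have := h.step ((l : ℤ) - l') (by omega)
        push_cast at this
        simpa using this
      · have := hg.left i j hij ((l : ℤ) - l')
        push_cast at this
        exact this)
    rw [show x i - x j + -(α j : ℂ) * δ = x i - x j - α j * δ by ring, ← this]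
    refine prod_congr rfl fun l _ => prod_congr rfl fun l' _ => ?_
    rw [show x i + (l : ℂ) * δ - (x j + (l' : ℂ) * δ) = x i - x j + ((l : ℂ) - l') * δ by ring]
  · rw [prod_blockSet α μ hμ (fun i l => ∏ q : Σ k, Fin (β k),
      f (x i + (l : ℂ) * δ + (y q.1 + (q.2 : ℂ) * δ) + δ) /
        f (x i + (l : ℂ) * δ + (y q.1 + (q.2 : ℂ) * δ)))]
    refine prod_congr rfl fun i _ => ?_
    simp only [Fintype.prod_sigma]
    rw [prod_comm]
    refine prod_congr rfl fun k _ => ?_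
    have := block_telescope' (f := f) (δ := δ) (x i + y k) (μ i) (β k)
      (fun l => by simpa using hg.mixed i k l)
    rw [show x i + y k - -(β k : ℂ) * δ = x i + y k + β k * δ by ring, ← this]
    refine prod_congr rfl fun l _ => ?_
    rw [Fin.prod_univ_eq_prod_range (fun l' : ℕ =>
      f (x i + (l : ℂ) * δ + (y k + (l' : ℂ) * δ) + δ) /
        f (x i + (l : ℂ) * δ + (y k + (l' : ℂ) * δ))) (β k)]
    refine prod_congr rfl fun l' _ => ?_
    rw [show x i + (l : ℂ) * δ + (y k + (l' : ℂ) * δ) = x i + y k + ((l : ℂ) + l') * δ by ring]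

lemma dualTerm_eq_zero {ι κ : Type*} [Fintype ι] [Fintype κ]
    (h : Bracket f δ) (a x : ι → ℂ) (b y : κ → ℂ) (μ : ι → ℕ) (i : ι) (α : ℕ)
    (ha : a i = -(α : ℂ) * δ) (hα : α < μ i) : dualTerm f δ a x b y μ = 0 := by
  unfold dualTerm
  have : sf f δ (x i - x i + a i) (μ i) = 0 := by
    refine prod_eq_zero (mem_range.mpr hα) ?_
    rw [ha, show x i - x i + -(α : ℂ) * δ + α * δ = 0 by ring, h.zero]
  rw [prod_eq_zero (mem_univ i) (prod_eq_zero (mem_univ i) (by rw [this, zero_div])), zero_mul]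

/-- **Principal specialization**: when the variables of the subset identity form `δ`-strings, only
unions of initial segments of the strings contribute. -/
lemma sum_subsetTerm_strings {ι κ : Type*} [Fintype ι] [DecidableEq ι] [Fintype κ]
    (h : Bracket f δ) (x : ι → ℂ) (y : κ → ℂ) (hg : Generic f δ x y) (α : ι → ℕ) (β : κ → ℕ)
    (N : ℕ) :
    ∑ I ∈ powersetCard N univ, subsetTerm f δ (fun p : Σ i, Fin (α i) => x p.1 + (p.2 : ℂ) * δ)
        (fun p : Σ k, Fin (β k) => y p.1 + (p.2 : ℂ) * δ) I =
      dualSum f δ (fun i => -(α i : ℂ) * δ) x (fun k => -(β k : ℂ) * δ) y N := by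
  unfold dualSum
  rw [← sum_filter_of_ne (p := fun μ : ι → ℕ => ∀ i, μ i ≤ α i)]
  · symm
    refine sum_of_injOn (blockSet α) ?_ ?_ ?_ ?_
    · exact (blockSet_injOn α).mono fun μ hμ => (mem_filter.mp (mem_coe.mp hμ)).2
    · intro μ hμ
      obtain ⟨h1, h2⟩ := mem_filter.mp (mem_coe.mp hμ)
      simp only [mem_piAntidiag] at h1
      rw [mem_coe, mem_powersetCard]
      exact ⟨subset_univ _, by rw [card_blockSet α μ h2, h1.1]⟩
    · intro I hI hn
      have hN := (mem_powersetCard.mp hI).2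
      obtain ⟨p, hp, q, hq, h1, h2⟩ := exists_gap α I fun μ hμ he => hn ⟨μ, by
        rw [mem_coe, mem_filter, mem_piAntidiag]
        exact ⟨⟨by rw [← card_blockSet α μ hμ, he, hN], fun _ _ => mem_univ _⟩, hμ⟩, he⟩
      have hz : f (x p.1 + (p.2 : ℂ) * δ - (x q.1 + (q.2 : ℂ) * δ) - δ) = 0 := by
        rw [h2, h1, show x q.1 + ((q.2 + 1 : ℕ) : ℂ) * δ - (x q.1 + (q.2 : ℂ) * δ) - δ = 0 by
          push_cast; ring, h.zero]
      refine mul_eq_zero_of_left (prod_eq_zero hp (prod_eq_zero (mem_compl.mpr hq) ?_)) _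
      rw [hz, zero_div]
    · intro μ hμ
      exact (subsetTerm_blockSet h x y hg α β μ (mem_filter.mp hμ).2).symm
  · intro μ _ hne i
    by_contra hlt
    push Not at hlt
    exact hne (dualTerm_eq_zero h _ _ _ _ _ i (α i) rfl hlt)

lemma strings_ne {ι κ : Type*} (h : Bracket f δ) {x : ι → ℂ} {y : κ → ℂ} (hg : Generic f δ x y)
    (α : ι → ℕ) (p q : Σ i, Fin (α i)) (hne : p ≠ q) :
    f (x p.1 + (p.2 : ℂ) * δ - (x q.1 + (q.2 : ℂ) * δ)) ≠ 0 := by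
  obtain ⟨i, l⟩ := p
  obtain ⟨j, l'⟩ := q
  simp only
  by_cases hij : i = j
  · subst hij
    have hl : (l : ℕ) ≠ l' := fun e => hne (by rw [Fin.ext e])
    have := h.step ((l : ℤ) - l') (by omega)
    push_cast at this
    rwa [show x i + (l : ℂ) * δ - (x i + (l' : ℂ) * δ) = ((l : ℂ) - l') * δ by ring]
  · have := hg.left i j hij ((l : ℤ) - l')
    push_cast at this
    rwa [show x i + (l : ℂ) * δ - (x j + (l' : ℂ) * δ) = x i - x j + ((l : ℂ) - l') * δ by ring]

/-- The duality for parameters in `-ℕδ`. -/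
lemma dualSum_comm_special {ι κ : Type*} [Fintype ι] [DecidableEq ι] [Fintype κ] [DecidableEq κ]
    (h : Bracket f δ) (x : ι → ℂ) (y : κ → ℂ) (hg : Generic f δ x y) (α : ι → ℕ) (β : κ → ℕ)
    (hαβ : ∑ i, α i = ∑ k, β k) (N : ℕ) :
    dualSum f δ (fun i => -(α i : ℂ) * δ) x (fun k => -(β k : ℂ) * δ) y N =
      dualSum f δ (fun k => -(β k : ℂ) * δ) y (fun i => -(α i : ℂ) * δ) x N := by
  have e1 := sum_subsetTerm_strings h x y hg α β N
  have e2 := sum_subsetTerm_strings h y x hg.symm β α N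
  rw [← e1, ← e2]
  refine h.subset_identity (by simp [hαβ]) _ _ (strings_ne h hg α)
    (strings_ne h hg.symm β) ?_ ?_ N
  · rintro ⟨i, l⟩ ⟨k, l'⟩
    have := hg.mixed i k ((l : ℤ) + l')
    push_cast at this
    convert this using 2
    ring
  · rintro ⟨i, l⟩ ⟨k, l'⟩
    have := hg.mixed i k ((l : ℤ) + l' + 1)
    push_cast at this
    convert this using 2
    ring

end Specialization

/-! ### Extension to arbitrary balanced parameters -/

section Extension

variable {f : ℂ → ℂ} {δ : ℂ}

lemma IsTheta.congr {K K' : ℕ} {C C' : ℂ} {g g' : ℂ → ℂ} (hg : IsTheta f K C g)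
    (hK : K = K') (hC : C = C') (e : ∀ z, g z = g' z) : IsTheta f K' C' g' := by
  subst hK hC
  rwa [← funext e]

lemma IsTheta.smul {K : ℕ} {C : ℂ} {g : ℂ → ℂ} (c : ℂ) (hg : IsTheta f K C g) :
    IsTheta f K C fun z => c * g z :=
  ((IsTheta.const c).mul hg).congr (zero_add _) (zero_add _) fun _ => rfl

lemma isTheta_sf_add (c : ℂ) (p : ℕ) :
    IsTheta f p (∑ l ∈ range p, -(c + l * δ)) fun t => sf f δ (c + t) p := by
  refine (IsTheta.prod (range p) (fun _ => 1) (fun l => -(c + l * δ))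
    (fun l t => f (c + t + l * δ)) fun l _ => ⟨1, [-(c + l * δ)], rfl, by simp, fun t => ?_⟩).congr
    (by simp) rfl fun t => rfl
  simp only [thetaProd_cons, thetaProd_nil, one_mul, mul_one]
  congr 1; ring

lemma Bracket.isTheta_sf_sub (h : Bracket f δ) (c : ℂ) (p : ℕ) :
    IsTheta f p (∑ l ∈ range p, (c + l * δ)) fun t => sf f δ (c - t) p := by
  refine (IsTheta.prod (range p) (fun _ => 1) (fun l => c + l * δ)
    (fun l t => f (c - t + l * δ)) fun l _ => ⟨-1, [c + l * δ], rfl, by simp, fun t => ?_⟩).congr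
    (by simp) rfl fun t => rfl
  simp only [thetaProd_cons, thetaProd_nil, mul_one]
  rw [h.sub_comm]
  simp only [neg_mul, one_mul, neg_neg]
  congr 1; ring

/-- Moving one parameter on each side by the same amount `t` makes every summand a theta function
of `t`, with degree and sum of zeros independent of the summation index. -/
lemma Bracket.isTheta_dualTerm (h : Bracket f δ) {ι κ : Type*} [Fintype ι] [DecidableEq ι]
    [Fintype κ] [DecidableEq κ] (a x : ι → ℂ) (b y : κ → ℂ) (i₀ : ι) (k₀ : κ) (N : ℕ) (μ : ι → ℕ)
    (hμ : μ ∈ piAntidiag univ N) :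
    IsTheta f (N + N) (N * (x i₀ + y k₀ - a i₀ - b k₀)) fun t =>
      dualTerm f δ (fun i => a i + if i = i₀ then t else 0) x
        (fun k => b k + if k = k₀ then t else 0) y μ := by
  have hN : ∑ i, μ i = N := (mem_piAntidiag.mp hμ).1
  have h1 := IsTheta.prod (f := f) univ (fun i => ∑ j, if j = i₀ then μ i else 0)
    (fun i => ∑ j, if j = i₀ then ∑ l ∈ range (μ i), -(x i - x i₀ + a i₀ + l * δ) else 0)
    (fun i t => ∏ j, sf f δ (x i - x j + (a j + if j = i₀ then t else 0)) (μ i) /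
      sf f δ (x i - x j - (μ j : ℂ) * δ) (μ i))
    (fun i _ => IsTheta.prod univ _ _ _ fun j _ => by
      by_cases hj : j = i₀
      · subst hj
        simp only [if_true]
        refine ((isTheta_sf_add (x i - x j + a j) (μ i)).smul
          (sf f δ (x i - x j - (μ j : ℂ) * δ) (μ i))⁻¹).congr rfl rfl fun t => ?_
        rw [inv_mul_eq_div, add_assoc (x i - x j)]
      · simp only [hj, if_false]
        exact IsTheta.const _)
  have h2 := IsTheta.prod (f := f) univ (fun i => ∑ k, if k = k₀ then μ i else 0)
    (fun i => ∑ k, if k = k₀ then ∑ l ∈ range (μ i), (x i + y k₀ - b k₀ + l * δ) else 0)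
    (fun i t => ∏ k, sf f δ (x i + y k - (b k + if k = k₀ then t else 0)) (μ i) /
      sf f δ (x i + y k) (μ i))
    (fun i _ => IsTheta.prod univ _ _ _ fun k _ => by
      by_cases hk : k = k₀
      · subst hk
        simp only [if_true]
        refine ((h.isTheta_sf_sub (x i + y k - b k) (μ i)).smul
          (sf f δ (x i + y k) (μ i))⁻¹).congr rfl rfl fun t => ?_
        rw [inv_mul_eq_div, sub_sub (x i + y k)]
      · simp only [hk, if_false]
        exact IsTheta.const _)
  refine (h1.mul h2).congr ?_ ?_ fun t => rfl
  · simp [hN]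
  · simp only [sum_ite_eq', mem_univ, if_true]
    rw [← sum_add_distrib, ← hN]
    push_cast
    rw [sum_mul]
    refine sum_congr rfl fun i _ => ?_
    rw [← sum_add_distrib, sum_congr rfl (g := fun _ => x i₀ + y k₀ - a i₀ - b k₀)
      fun l _ => by ring, sum_const, card_range, nsmul_eq_mul]

/-- Interpolation in one edge: a simultaneous shift of `a i₀` and `b k₀`. -/
lemma Bracket.dualSum_interpolate (h : Bracket f δ) {ι κ : Type*} [Fintype ι] [DecidableEq ι]
    [Fintype κ] [DecidableEq κ] (a x : ι → ℂ) (b y : κ → ℂ) (i₀ : ι) (k₀ : κ) (N : ℕ)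
    (hl : ∀ l : ℕ, dualSum f δ (fun i => a i + if i = i₀ then -(l : ℂ) * δ else 0) x
        (fun k => b k + if k = k₀ then -(l : ℂ) * δ else 0) y N =
      dualSum f δ (fun k => b k + if k = k₀ then -(l : ℂ) * δ else 0) y
        (fun i => a i + if i = i₀ then -(l : ℂ) * δ else 0) x N) (t : ℂ) :
    dualSum f δ (fun i => a i + if i = i₀ then t else 0) x
        (fun k => b k + if k = k₀ then t else 0) y N =
      dualSum f δ (fun k => b k + if k = k₀ then t else 0) y
        (fun i => a i + if i = i₀ then t else 0) x N := by
  have key := h.theta_vanish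
    ((piAntidiag univ N : Finset (ι → ℕ)).disjSum (piAntidiag univ N : Finset (κ → ℕ)))
    (N + N) (N * (x i₀ + y k₀ - a i₀ - b k₀))
    (Sum.elim
      (fun μ t => dualTerm f δ (fun i => a i + if i = i₀ then t else 0) x
        (fun k => b k + if k = k₀ then t else 0) y μ)
      (fun ν t => -1 * dualTerm f δ (fun k => b k + if k = k₀ then t else 0) y
        (fun i => a i + if i = i₀ then t else 0) x ν))
    (by
      rintro (μ | ν) hj
      · exact h.isTheta_dualTerm a x b y i₀ k₀ N μ (inl_mem_disjSum.mp hj)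
      · refine ((h.isTheta_dualTerm b y a x k₀ i₀ N ν (inr_mem_disjSum.mp hj)).smul (-1)).congr
          rfl (by ring) fun _ => rfl)
    (fun l => by
      rw [sum_disjSum]
      simp only [Sum.elim_inl, Sum.elim_inr]
      rw [← mul_sum]
      have := hl l
      unfold dualSum at this
      rw [this]; ring) t
  rw [sum_disjSum] at key
  simp only [Sum.elim_inl, Sum.elim_inr] at key
  rw [← mul_sum] at key
  unfold dualSum
  linear_combination key

/-- Induction over the edges of the complete bipartite graph on `ι ⊔ κ`: the parameters are the
vertex sums of an edge weight `t`, and the weights are freed from `-ℕδ` one edge at a time. -/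
lemma Bracket.dualSum_comm_edges (h : Bracket f δ) {ι κ : Type*} [Fintype ι] [DecidableEq ι]
    [Fintype κ] [DecidableEq κ] (x : ι → ℂ) (y : κ → ℂ) (hg : Generic f δ x y) (N : ℕ)
    (E : Finset (ι × κ)) : ∀ t : ι × κ → ℂ, (∀ e ∉ E, ∃ l : ℕ, t e = -(l : ℂ) * δ) →
    dualSum f δ (fun i => ∑ k, t (i, k)) x (fun k => ∑ i, t (i, k)) y N =
      dualSum f δ (fun k => ∑ i, t (i, k)) y (fun i => ∑ k, t (i, k)) x N := by
  induction E using Finset.induction_on with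
  | empty =>
    intro t ht
    choose l hl using fun e => ht e (notMem_empty e)
    have e1 : (fun i => ∑ k, t (i, k)) = fun i => -((∑ k, l (i, k) : ℕ) : ℂ) * δ := by
      funext i; push_cast; rw [← sum_neg_distrib, sum_mul]; exact sum_congr rfl fun k _ => hl _
    have e2 : (fun k => ∑ i, t (i, k)) = fun k => -((∑ i, l (i, k) : ℕ) : ℂ) * δ := by
      funext k; push_cast; rw [← sum_neg_distrib, sum_mul]; exact sum_congr rfl fun i _ => hl _
    rw [e1, e2]
    exact dualSum_comm_special h x y hg _ _ sum_comm N
  | insert e E _ ih =>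
    intro t ht
    obtain ⟨i₀, k₀⟩ := e
    set t₀ := Function.update t (i₀, k₀) 0 with ht₀
    have row : ∀ s : ℂ, (fun i => ∑ k, Function.update t (i₀, k₀) s (i, k)) =
        fun i => ∑ k, t₀ (i, k) + if i = i₀ then s else 0 := by
      intro s; funext i
      have : ∀ k, Function.update t (i₀, k₀) s (i, k) =
          t₀ (i, k) + if k = k₀ then (if i = i₀ then s else 0) else 0 := by
        intro k
        by_cases hi : i = i₀ <;> by_cases hk : k = k₀ <;> simp [ht₀, hi, hk]
      simp only [this, sum_add_distrib, sum_ite_eq', mem_univ, if_true]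
    have col : ∀ s : ℂ, (fun k => ∑ i, Function.update t (i₀, k₀) s (i, k)) =
        fun k => ∑ i, t₀ (i, k) + if k = k₀ then s else 0 := by
      intro s; funext k
      have : ∀ i, Function.update t (i₀, k₀) s (i, k) =
          t₀ (i, k) + if i = i₀ then (if k = k₀ then s else 0) else 0 := by
        intro i
        by_cases hi : i = i₀ <;> by_cases hk : k = k₀ <;> simp [ht₀, hi, hk]
      simp only [this, sum_add_distrib, sum_ite_eq', mem_univ, if_true]
    have key := h.dualSum_interpolate (fun i => ∑ k, t₀ (i, k)) x (fun k => ∑ i, t₀ (i, k)) y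
      i₀ k₀ N (fun l => by
        rw [← row, ← col]
        refine ih _ fun e he => ?_
        by_cases hee : e = (i₀, k₀)
        · exact ⟨l, by rw [hee, Function.update_self]⟩
        · rw [Function.update_of_ne hee]
          exact ht e (by simp [hee, he])) (t (i₀, k₀))
    rw [← row, ← col, Function.update_eq_self] at key
    exact key

/-- The duality for two non-empty sets of variables: any balanced pair of parameter vectors is the
pair of marginals of a matrix. -/
lemma Bracket.dualSum_comm_nonempty (h : Bracket f δ) {ι κ : Type*} [Fintype ι] [DecidableEq ι]
    [Fintype κ] [DecidableEq κ] (a x : ι → ℂ) (b y : κ → ℂ) (hg : Generic f δ x y) (N : ℕ)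
    (hbal : ∑ i, a i = ∑ k, b k) (i₀ : ι) (k₀ : κ) :
    dualSum f δ a x b y N = dualSum f δ b y a x N := by
  have key := h.dualSum_comm_edges x y hg N univ
    (fun e => (if e.2 = k₀ then a e.1 else 0) + (if e.1 = i₀ then b e.2 else 0) -
      if e.1 = i₀ then (if e.2 = k₀ then ∑ i, a i else 0) else 0) (by simp)
  have e1 : (fun i => ∑ k, ((if k = k₀ then a i else 0) + (if i = i₀ then b k else 0) -
      if i = i₀ then (if k = k₀ then ∑ i, a i else 0) else 0)) = a := by
    funext i
    by_cases hi : i = i₀ <;> simp [hi, sum_add_distrib, hbal]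
  have e2 : (fun k => ∑ i, ((if k = k₀ then a i else 0) + (if i = i₀ then b k else 0) -
      if i = i₀ then (if k = k₀ then ∑ i, a i else 0) else 0)) = b := by
    funext k
    by_cases hk : k = k₀ <;> simp [hk, sum_add_distrib]
  simp only [e1, e2] at key
  exact key

lemma dualSum_zero {ι κ : Type*} [Fintype ι] [DecidableEq ι] [Fintype κ]
    (a x : ι → ℂ) (b y : κ → ℂ) : dualSum f δ a x b y 0 = 1 := by
  simp [dualSum, dualTerm, sf]

lemma dualSum_of_isEmpty {ι κ : Type*} [Fintype ι] [DecidableEq ι] [Fintype κ] [IsEmpty ι]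
    (a x : ι → ℂ) (b y : κ → ℂ) (N : ℕ) (hN : N ≠ 0) : dualSum f δ a x b y N = 0 := by
  refine sum_eq_zero fun μ hμ => absurd (mem_piAntidiag.mp hμ).1 ?_
  simpa using hN.symm

/-- The degenerate case of no `y`-variables, reduced to one auxiliary variable with parameter
`0`. -/
lemma Bracket.dualSum_right_isEmpty (h : Bracket f δ) {ι κ : Type*} [Fintype ι] [DecidableEq ι]
    [Fintype κ] [IsEmpty κ] (a x : ι → ℂ) (b y : κ → ℂ) (hg : Generic f δ x y) (N : ℕ)
    (hN : N ≠ 0) (hbal : ∑ i, a i = 0) : dualSum f δ a x b y N = 0 := by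
  rcases isEmpty_or_nonempty ι with hι | ⟨⟨i₀⟩⟩
  · exact dualSum_of_isEmpty a x b y N hN
  obtain ⟨z, hz⟩ := (h.dense_good (J := ι × ℤ) (fun p => x p.1 + p.2 * δ) (fun _ => 1)
    (by simp)).nonempty
  have hz : ∀ i (l : ℤ), f (x i + z + l * δ) ≠ 0 := by
    intro i l
    have := hz (i, l)
    simp only [one_mul] at this
    convert this using 2; ring
  have key := h.dualSum_comm_nonempty a x (fun _ : Unit => 0) (fun _ => z)
    ⟨hg.left, fun i j hij => absurd rfl hij, fun i _ l => hz i l⟩ N (by simpa using hbal) i₀ ()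
  have e1 : dualSum f δ a x (fun _ : Unit => 0) (fun _ => z) N = dualSum f δ a x b y N := by
    refine sum_congr rfl fun μ _ => ?_
    unfold dualTerm
    congr 1
    refine prod_congr rfl fun i _ => ?_
    have : sf f δ (x i + z) (μ i) ≠ 0 :=
      prod_ne_zero_iff.mpr fun l _ => by simpa using hz i l
    simp [div_self this]
  rw [← e1, key]
  refine sum_eq_zero fun ν hν => dualTerm_eq_zero h _ _ _ _ ν () 0 (by simp) ?_
  have := (mem_piAntidiag.mp hν).1
  exact Nat.pos_of_ne_zero fun e => hN (by rw [← this, Fintype.sum_unique]; exact e)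

/-- **Duality in symmetric form**, for generic variables. -/
theorem Bracket.dualSum_comm (h : Bracket f δ) {ι κ : Type*} [Fintype ι] [DecidableEq ι]
    [Fintype κ] [DecidableEq κ] (a x : ι → ℂ) (b y : κ → ℂ) (hg : Generic f δ x y) (N : ℕ)
    (hbal : ∑ i, a i = ∑ k, b k) :
    dualSum f δ a x b y N = dualSum f δ b y a x N := by
  rcases eq_or_ne N 0 with rfl | hN
  · rw [dualSum_zero, dualSum_zero]
  rcases isEmpty_or_nonempty κ with hκ | ⟨⟨k₀⟩⟩
  · rw [h.dualSum_right_isEmpty a x b y hg N hN (by simpa using hbal),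
      dualSum_of_isEmpty b y a x N hN]
  rcases isEmpty_or_nonempty ι with hι | ⟨⟨i₀⟩⟩
  · rw [h.dualSum_right_isEmpty b y a x hg.symm N hN (by simpa using hbal.symm),
      dualSum_of_isEmpty a x b y N hN]
  exact h.dualSum_comm_nonempty a x b y hg N hbal i₀ k₀

end Extension

/-! ### Comparison with `Phi` and removal of the genericity assumption -/

section Comparison

variable {f : ℂ → ℂ} {δ : ℂ}

lemma sf_append (z : ℂ) (p q : ℕ) : sf f δ z (p + q) = sf f δ z p * sf f δ (z + p * δ) q := by
  unfold sf
  rw [prod_range_add]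
  congr 1
  refine prod_congr rfl fun l _ => ?_
  push_cast; congr 1; ring

lemma sf_one (z : ℂ) : sf f δ z 1 = f z := by simp [sf]

lemma Bracket.sf_neg (h : Bracket f δ) (w : ℂ) (q : ℕ) :
    sf f δ (-w) q = (-1) ^ q * sf f δ (w - ((q : ℂ) - 1) * δ) q := by
  unfold sf
  rw [← prod_range_reflect (fun l : ℕ => f (w - ((q : ℂ) - 1) * δ + l * δ)) q,
    show (-1 : ℂ) ^ q = ∏ _l ∈ range q, (-1 : ℂ) by simp, ← prod_mul_distrib]
  refine prod_congr rfl fun l hl => ?_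
  have hl' := mem_range.mp hl
  rw [show q - 1 - l = q - (1 + l) by omega, Nat.cast_sub (by omega)]
  rw [show -w + (l : ℂ) * δ = -(w - l * δ) by ring, h.odd]
  push_cast
  rw [neg_one_mul]
  congr 2; ring

/-- Both sides are `[z - qδ]_{p+q+1}` up to the sign `(-1)^q`. -/
lemma Bracket.pair_identity (h : Bracket f δ) (z : ℂ) (p q : ℕ) :
    f (z + p * δ - q * δ) * (sf f δ (z - q * δ) p * sf f δ (-z - p * δ) q) =
      f z * (sf f δ (z + δ) p * sf f δ (-z + δ) q) := by
  have e1 : sf f δ (z - q * δ) (p + (1 + q)) = sf f δ (z - q * δ) p *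
      (f (z + p * δ - q * δ) * sf f δ (z + p * δ - (q - 1) * δ) q) := by
    rw [sf_append, sf_append, sf_one]
    congr 2
    · congr 1; ring
    · congr 1; push_cast; ring
  have e2 : sf f δ (z - q * δ) (q + (1 + p)) = sf f δ (z - q * δ) q *
      (f z * sf f δ (z + δ) p) := by
    rw [sf_append, sf_append, sf_one]
    congr 2
    · congr 1; ring
    · congr 1; push_cast; ring
  have e3 : sf f δ (-z - p * δ) q = (-1) ^ q * sf f δ (z + p * δ - (q - 1) * δ) q := by
    rw [← h.sf_neg]; congr 1; ring
  have e4 : sf f δ (-z + δ) q = (-1) ^ q * sf f δ (z - q * δ) q := by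
    rw [show -z + δ = -(z - δ) by ring, h.sf_neg]; congr 2; ring
  rw [show p + (1 + q) = q + (1 + p) by ring, e2] at e1
  rw [e3, e4]
  linear_combination -(-1) ^ q * e1

/-- The order-free form of the denominators of `Phi`. -/
lemma Bracket.Del_mul_prod (h : Bracket f δ) {m : ℕ} (x : Fin m → ℂ) (μ : Fin m → ℕ) :
    Del f (fun i => x i + (μ i : ℂ) * δ) *
        ∏ i, ∏ j, sf f δ (x i - x j - (μ j : ℂ) * δ) (μ i) =
      (-1) ^ (∑ i, μ i) * (Del f x * ∏ i, ∏ j, sf f δ (x i - x j + δ) (μ i)) := by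
  rw [prod_pairs (fun i j => sf f δ (x i - x j - (μ j : ℂ) * δ) (μ i)),
    prod_pairs (fun i j => sf f δ (x i - x j + δ) (μ i))]
  have hd : ∏ i, sf f δ (x i - x i - (μ i : ℂ) * δ) (μ i) =
      (-1) ^ (∑ i, μ i) * ∏ i, sf f δ (x i - x i + δ) (μ i) := by
    rw [← prod_pow_eq_pow_sum, ← prod_mul_distrib]
    refine prod_congr rfl fun i _ => ?_
    rw [show x i - x i - (μ i : ℂ) * δ = -((μ i : ℂ) * δ) by ring, h.sf_neg]
    congr 2; ring
  have hp : Del f (fun i => x i + (μ i : ℂ) * δ) * (∏ i, ∏ j ∈ univ.filter (fun j => i < j),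
        sf f δ (x i - x j - (μ j : ℂ) * δ) (μ i) * sf f δ (x j - x i - (μ i : ℂ) * δ) (μ j)) =
      Del f x * ∏ i, ∏ j ∈ univ.filter (fun j => i < j),
        sf f δ (x i - x j + δ) (μ i) * sf f δ (x j - x i + δ) (μ j) := by
    unfold Del
    simp only [← prod_mul_distrib]
    refine prod_congr rfl fun i _ => prod_congr rfl fun j _ => ?_
    have := h.pair_identity (x i - x j) (μ i) (μ j)
    rw [show x i + (μ i : ℂ) * δ - (x j + (μ j : ℂ) * δ) = x i - x j + μ i * δ - μ j * δ by ring,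
      show x j - x i - (μ i : ℂ) * δ = -(x i - x j) - μ i * δ by ring,
      show x j - x i + δ = -(x i - x j) + δ by ring, this]
  rw [hd]
  linear_combination ((-1) ^ (∑ i, μ i) * ∏ i, sf f δ (x i - x i + δ) (μ i)) * hp

lemma Bracket.Phi_eq (h : Bracket f δ) {m n : ℕ} (a x : Fin m → ℂ) (b y : Fin n → ℂ) (N : ℕ)
    (hg : Generic f δ x y) :
    Phi f δ a x (fun k => y k - b k) y N = (-1) ^ N * dualSum f δ a x b y N := by
  unfold Phi dualSum
  rw [mul_sum, ← piAntidiag_univ_fin_eq_antidiagonalTuple]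
  refine sum_congr rfl fun μ hμ => ?_
  have hN : ∑ i, μ i = N := (mem_piAntidiag.mp hμ).1
  unfold dualTerm
  simp only [← add_sub_assoc]
  rw [← mul_assoc]
  congr 1
  have hD : Del f x ≠ 0 := Del_ne_zero x fun i j hij => by simpa using hg.left i j hij 0
  have hne : ∀ i j, ∀ l : ℤ, (i = j → l ≠ 0) → f (x i - x j + l * δ) ≠ 0 := by
    intro i j l hl
    by_cases hij : i = j
    · subst hij
      simpa using h.step l (hl rfl)
    · exact hg.left i j hij l
  have h1 : ∏ i, ∏ j, sf f δ (x i - x j - (μ j : ℂ) * δ) (μ i) ≠ 0 := by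
    refine prod_ne_zero_iff.mpr fun i _ => prod_ne_zero_iff.mpr fun j _ =>
      prod_ne_zero_iff.mpr fun l hl => ?_
    have hl' := mem_range.mp hl
    have := hne i j ((l : ℤ) - μ j) (by rintro rfl; omega)
    push_cast at this
    convert this using 2; ring
  have h2 : ∏ i, ∏ j, sf f δ (x i - x j + δ) (μ i) ≠ 0 := by
    refine prod_ne_zero_iff.mpr fun i _ => prod_ne_zero_iff.mpr fun j _ =>
      prod_ne_zero_iff.mpr fun l hl => ?_
    have := hne i j ((l : ℤ) + 1) (by omega)
    push_cast at this
    convert this using 2; ring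
  have key := h.Del_mul_prod x μ
  rw [hN] at key
  simp only [prod_div_distrib]
  rw [div_mul_div_comm, mul_div_assoc', div_eq_div_iff (mul_ne_zero hD h2) h1]
  linear_combination (∏ i, ∏ j, sf f δ (x i - x j + a j) (μ i)) * key

lemma Bracket.continuous_sf (h : Bracket f δ) {c : ℂ → ℂ} (hc : Continuous c) (p : ℕ) :
    Continuous fun ε => sf f δ (c ε) p :=
  continuous_finsetProd _ fun _ _ => h.diff.continuous.comp (hc.add continuous_const)

lemma Bracket.continuous_Del (h : Bracket f δ) {m : ℕ} {x : ℂ → Fin m → ℂ}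
    (hx : ∀ i, Continuous fun ε => x ε i) : Continuous fun ε => Del f (x ε) :=
  continuous_finsetProd _ fun i _ => continuous_finsetProd _ fun j _ =>
    h.diff.continuous.comp ((hx i).sub (hx j))

/-- `Phi` is continuous along a curve at a point where its denominators do not vanish. -/
lemma Bracket.continuousAt_Phi (h : Bracket f δ) {m n : ℕ} (a : Fin m → ℂ) (b : Fin n → ℂ) (N : ℕ)
    (x : ℂ → Fin m → ℂ) (y : ℂ → Fin n → ℂ) (hx : ∀ i, Continuous fun ε => x ε i)
    (hy : ∀ k, Continuous fun ε => y ε k) (ε₀ : ℂ)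
    (hxx : ∀ i j, i ≠ j → f (x ε₀ i - x ε₀ j) ≠ 0)
    (hxd : ∀ (i j : Fin m) (l : ℕ), l < N → f (x ε₀ i - x ε₀ j + δ + (l : ℂ) * δ) ≠ 0)
    (hxy : ∀ (i : Fin m) (k : Fin n) (l : ℕ), l < N → f (x ε₀ i + y ε₀ k + (l : ℂ) * δ) ≠ 0) :
    ContinuousAt (fun ε => Phi f δ a (x ε) (fun k => y ε k - b k) (y ε) N) ε₀ := by
  unfold Phi
  refine tendsto_finsetSum _ fun μ hμ => ?_
  have hle : ∀ i, μ i ≤ N := by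
    intro i
    rw [← (Finset.Nat.mem_antidiagonalTuple.mp hμ)]
    exact single_le_sum (fun _ _ => Nat.zero_le _) (mem_univ i)
  refine Filter.Tendsto.mul (Filter.Tendsto.mul ?_ ?_) ?_
  · exact ((h.continuous_Del fun i => (hx i).add continuous_const).continuousAt).div
      (h.continuous_Del hx).continuousAt (Del_ne_zero _ hxx)
  · refine tendsto_finsetProd _ fun i _ => tendsto_finsetProd _ fun j _ => ?_
    refine ((h.continuous_sf (((hx i).sub (hx j)).add continuous_const) _).continuousAt).div
      (h.continuous_sf (((hx i).sub (hx j)).add continuous_const) _).continuousAt ?_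
    exact prod_ne_zero_iff.mpr fun l hl => hxd i j l (lt_of_lt_of_le (mem_range.mp hl) (hle i))
  · refine tendsto_finsetProd _ fun i _ => tendsto_finsetProd _ fun k _ => ?_
    refine ((h.continuous_sf ((hx i).add ((hy k).sub continuous_const)) _).continuousAt).div
      (h.continuous_sf ((hx i).add (hy k)) _).continuousAt ?_
    exact prod_ne_zero_iff.mpr fun l hl => hxy i k l (lt_of_lt_of_le (mem_range.mp hl) (hle i))

/-- Moving the variables with pairwise different speeds makes them generic for a dense set of
times. -/
lemma Bracket.dense_generic (h : Bracket f δ) {m n : ℕ} (x : Fin m → ℂ) (y : Fin n → ℂ) :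
    Dense {ε : ℂ | Generic f δ (fun i => x i + ((i : ℕ) + 1 : ℂ) * ε)
      (fun k => y k + ((k : ℕ) + 1 : ℂ) * ε)} := by
  have hsub : ∀ {r : ℕ} (p : {p : Fin r × Fin r // p.1 ≠ p.2}),
      ((p.1.1 : ℕ) : ℂ) - (p.1.2 : ℕ) ≠ 0 := by
    rintro r ⟨⟨i, j⟩, hij⟩
    rw [sub_ne_zero]
    exact_mod_cast fun e => hij (Fin.ext e)
  refine (h.dense_good
    (J := ({p : Fin m × Fin m // p.1 ≠ p.2} × ℤ) ⊕ ({p : Fin n × Fin n // p.1 ≠ p.2} × ℤ) ⊕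
      (Fin m × Fin n) × ℤ)
    (Sum.elim (fun p => x p.1.1.1 - x p.1.1.2 + p.2 * δ)
      (Sum.elim (fun p => y p.1.1.1 - y p.1.1.2 + p.2 * δ) fun p => x p.1.1 + y p.1.2 + p.2 * δ))
    (Sum.elim (fun p => ((p.1.1.1 : ℕ) : ℂ) - (p.1.1.2 : ℕ))
      (Sum.elim (fun p => ((p.1.1.1 : ℕ) : ℂ) - (p.1.1.2 : ℕ))
        fun p => ((p.1.1 : ℕ) : ℂ) + (p.1.2 : ℕ) + 2)) ?_).mono ?_
  · rintro (p | p | p)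
    · exact hsub p.1
    · exact hsub p.1
    · simp only [Sum.elim_inr]
      exact_mod_cast Nat.succ_ne_zero ((p.1.1 : ℕ) + p.1.2 + 1)
  · intro ε hε
    refine ⟨fun i j hij l => ?_, fun i j hij l => ?_, fun i k l => ?_⟩
    · have := hε (Sum.inl (⟨(i, j), hij⟩, l))
      simp only [Sum.elim_inl] at this
      convert this using 2; ring
    · have := hε (Sum.inr (Sum.inl (⟨(i, j), hij⟩, l)))
      simp only [Sum.elim_inl, Sum.elim_inr] at this
      convert this using 2; ring
    · have := hε (Sum.inr (Sum.inr ((i, k), l)))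
      simp only [Sum.elim_inr] at this
      convert this using 2; ring

end Comparison

end EllipticDuality

/-- **Duality transformation** (Theorem 2.2): under the balancing condition
`a_1 + ⋯ + a_m = b_1 + ⋯ + b_n`, `Φ^{m,n}_N(a;x|y-b;y) = Φ^{n,m}_N(b;y|x-a;x)`. -/
theorem duality_transformation
    (f : ℂ → ℂ) (hf : f ≠ 0) (hodd : ∀ t : ℂ, f (-t) = -f t) (hdiff : Differentiable ℂ f)
    (hRiem : ∀ x y u v : ℂ,
      f (x + y) * f (x - y) * f (u + v) * f (u - v) =
        f (x + u) * f (x - u) * f (y + v) * f (y - v)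
          - f (x + v) * f (x - v) * f (y + u) * f (y - u))
    (δ : ℂ) (hδ : ∀ k : ℤ, k ≠ 0 → f ((k : ℂ) * δ) ≠ 0)
    (m n N : ℕ) (a x : Fin m → ℂ) (b y : Fin n → ℂ)
    (hbal : (∑ i, a i) = ∑ k, b k)
    (hx : ∀ i j, i ≠ j → f (x i - x j) ≠ 0)
    (hy : ∀ k l, k ≠ l → f (y k - y l) ≠ 0)
    (hxd : ∀ (i j : Fin m) (l : ℕ), l < N → f (x i - x j + δ + (l : ℂ) * δ) ≠ 0)
    (hyd : ∀ (k k' : Fin n) (l : ℕ), l < N → f (y k - y k' + δ + (l : ℂ) * δ) ≠ 0)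
    (hxy : ∀ (i : Fin m) (k : Fin n) (l : ℕ), l < N → f (x i + y k + (l : ℂ) * δ) ≠ 0) :
    Phi f δ a x (fun k => y k - b k) y N = Phi f δ b y (fun i => x i - a i) x N := by
  have h : EllipticDuality.Bracket f δ := ⟨hf, hodd, hdiff, hRiem, hδ⟩
  -- Different speeds separate the variables for generic `ε`; the claim is the limit `ε → 0`.
  set X : ℂ → Fin m → ℂ := fun ε i => x i + ((i : ℕ) + 1 : ℂ) * ε with hX
  set Y : ℂ → Fin n → ℂ := fun ε k => y k + ((k : ℕ) + 1 : ℂ) * ε with hY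
  have hX0 : X 0 = x := by funext i; simp [hX]
  have hY0 : Y 0 = y := by funext k; simp [hY]
  have hXc : ∀ i, Continuous fun ε => X ε i := fun i => by simp only [hX]; fun_prop
  have hYc : ∀ k, Continuous fun ε => Y ε k := fun k => by simp only [hY]; fun_prop
  have c1 := h.continuousAt_Phi a b N X Y hXc hYc 0 (by rwa [hX0]) (by rwa [hX0])
    (by rwa [hX0, hY0])
  have c2 := h.continuousAt_Phi b a N Y X hYc hXc 0 (by rwa [hY0]) (by rwa [hY0])
    (by rw [hX0, hY0]; exact fun k i l hl => by rw [add_comm (y k)]; exact hxy i k l hl)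
  have hfreq : ∃ᶠ ε in nhds (0 : ℂ), Phi f δ a (X ε) (fun k => Y ε k - b k) (Y ε) N -
      Phi f δ b (Y ε) (fun i => X ε i - a i) (X ε) N = 0 := by
    refine (mem_closure_iff_frequently.mp ((h.dense_generic x y) 0)).mono fun ε hg => ?_
    rw [h.Phi_eq a (X ε) b (Y ε) N hg, h.Phi_eq b (Y ε) a (X ε) N hg.symm,
      h.dualSum_comm a (X ε) b (Y ε) hg N hbal, sub_self]
  by_contra hne
  have h0 := (c1.sub c2).eventually_ne (y := 0) (by
    simpa only [Pi.sub_apply, hX0, hY0] using sub_ne_zero.mpr hne)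
  exact hfreq h0
end

section
/- Let ω_1, ω_2 ∈ ℂ be linearly independent over ℝ, and let F : ℂ^N → ℂ be a holomorphic function which is quasi-periodic in each variable with respect to the lattice L = ℤω_1 + ℤω_2, in the sense that for each i ∈ {1,…,N} and k ∈ {1,2} there exist constants a_{ik}, b_{ik} ∈ ℂ with F(z_1,…, z_i + ω_k, …, z_N) = e^{a_{ik} z_i + b_{ik}} · F(z_1,…,z_N) for all z ∈ ℂ^N. Let δ ∈ ℂ satisfy δ ∉ ℚω_1 + ℚω_2, and suppose F(ν_1 δ, …, ν_N δ) = 0 for every ν = (ν_1,…,ν_N) ∈ ℕ^N. Then F is identically zero on ℂ^N. -/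
/-!
The zero set of an entire function of one variable that is quasi-periodic with respect to
`L = ℤω₁ + ℤω₂` is stable under translation by `L`, since the multipliers never vanish. As `δ` has
infinite order modulo `L` (this is where `δ ∉ ℚω₁ + ℚω₂` enters), reducing the points `νδ`, `ν ∈ ℕ`,
into the closed fundamental parallelogram gives infinitely many zeros in a compact set. They
accumulate, so the function vanishes by the identity theorem (`eq_zero_of_vanish_nat_mul`).

In several variables the coordinates are freed one at a time: if `F` vanishes whenever the
coordinates outside a finite set `s` lie in `ℕδ`, the one-variable case in the coordinate `i` gives
the same for `insert i s`.
-/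

/-- If two distinct natural multiples of a real number agree modulo `1`, it is rational. -/
lemma exists_rat_of_fract_eq {x : ℝ} {m n : ℕ} (hmn : m ≠ n)
    (h : Int.fract ((m : ℝ) * x) = Int.fract ((n : ℝ) * x)) : ∃ p : ℚ, x = p := by
  obtain ⟨c, hc⟩ := Int.fract_eq_fract.1 h
  have hne : (m : ℝ) - n ≠ 0 := sub_ne_zero.2 (by exact_mod_cast hmn)
  refine ⟨(c : ℚ) / ((m : ℚ) - n), ?_⟩
  push_cast
  rw [eq_div_iff hne]
  linarith

lemma zero_iff_add_int_mul {f : ℂ → ℂ} {ω : ℂ} (h : ∀ z, f (z + ω) = 0 ↔ f z = 0) (m : ℤ) :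
    ∀ z, f (z + m * ω) = 0 ↔ f z = 0 := by
  induction m using Int.induction_on with
  | zero => simp
  | succ k ih =>
    intro z
    rw [← ih z, ← h (z + ((k : ℤ) : ℂ) * ω)]
    push_cast
    ring_nf
  | pred k ih =>
    intro z
    rw [← ih z, ← h (z + _)]
    push_cast
    ring_nf

/-- The one-variable case; of quasi-periodicity only the invariance of the zero set under the
periods is needed. -/
lemma eq_zero_of_vanish_nat_mul {ω₁ ω₂ : ℂ} (hind : LinearIndependent ℝ ![ω₁, ω₂])
    {f : ℂ → ℂ} (hf : Differentiable ℂ f)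
    (h₁ : ∀ z, f (z + ω₁) = 0 ↔ f z = 0) (h₂ : ∀ z, f (z + ω₂) = 0 ↔ f z = 0)
    {δ : ℂ} (hδ : ¬ ∃ p q : ℚ, δ = (p : ℂ) * ω₁ + (q : ℂ) * ω₂)
    (hzero : ∀ ν : ℕ, f ((ν : ℂ) * δ) = 0) (z : ℂ) : f z = 0 := by
  have hspan : Submodule.span ℝ (Set.range ![ω₁, ω₂]) = ⊤ :=
    hind.span_eq_top_of_card_eq_finrank (by simp [Complex.finrank_real_complex])
  obtain ⟨x, y, hxy⟩ : ∃ x y : ℝ, (x : ℂ) * ω₁ + (y : ℂ) * ω₂ = δ := by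
    have hmem : δ ∈ Submodule.span ℝ ({ω₁, ω₂} : Set ℂ) := by
      have : Set.range ![ω₁, ω₂] = {ω₁, ω₂} := by
        simp [Matrix.range_cons, Set.pair_comm]
      rw [← this, hspan]
      trivial
    simpa [Submodule.mem_span_pair] using hmem
  let P : ℝ × ℝ → ℂ := fun t => (t.1 : ℂ) * ω₁ + (t.2 : ℂ) * ω₂
  have hP : Continuous P := by fun_prop
  have hPinj : ∀ s t : ℝ × ℝ, P s = P t → s = t := by
    intro s t hst
    obtain ⟨e₁, e₂⟩ := (LinearIndependent.pair_iff.1 hind) (s.1 - t.1) (s.2 - t.2) (by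
      simp only [Complex.real_smul]
      push_cast
      linear_combination hst)
    exact Prod.ext (sub_eq_zero.1 e₁) (sub_eq_zero.1 e₂)
  -- the representative of `ν δ` in the fundamental parallelogram
  let p : ℕ → ℂ := fun ν => P (Int.fract ((ν : ℝ) * x), Int.fract ((ν : ℝ) * y))
  have hpzero : ∀ ν, f (p ν) = 0 := by
    intro ν
    rw [← zero_iff_add_int_mul h₁ ⌊(ν : ℝ) * x⌋, ← zero_iff_add_int_mul h₂ ⌊(ν : ℝ) * y⌋,
      ← hzero ν, ← hxy]
    congr 1
    simp only [p, P, Int.fract]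
    push_cast
    ring
  have hpinj : Function.Injective p := by
    intro m n hmn
    by_contra hne
    have hpair := hPinj _ _ hmn
    obtain ⟨q₁, hq₁⟩ := exists_rat_of_fract_eq hne (congrArg Prod.fst hpair)
    obtain ⟨q₂, hq₂⟩ := exists_rat_of_fract_eq hne (congrArg Prod.snd hpair)
    exact hδ ⟨q₁, q₂, by rw [← hxy, hq₁, hq₂]; push_cast; rfl⟩
  have hK : IsCompact (Set.image P (Set.Icc 0 1 ×ˢ Set.Icc 0 1)) :=
    (isCompact_Icc.prod isCompact_Icc).image hP
  have hsub : Set.range p ⊆ Set.image P (Set.Icc 0 1 ×ˢ Set.Icc 0 1) := by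
    rintro _ ⟨ν, rfl⟩
    exact ⟨_, ⟨⟨Int.fract_nonneg _, (Int.fract_lt_one _).le⟩,
      ⟨Int.fract_nonneg _, (Int.fract_lt_one _).le⟩⟩, rfl⟩
  obtain ⟨w, -, hw⟩ :=
    (Set.infinite_range_of_injective hpinj).exists_accPt_of_subset_isCompact hK hsub
  have hfreq : ∃ᶠ u in nhdsWithin w {w}ᶜ, f u = 0 := by
    refine (accPt_iff_frequently_nhdsNE.1 hw).mono ?_
    rintro _ ⟨ν, rfl⟩
    exact hpzero ν
  have hana : AnalyticOnNhd ℂ f Set.univ := fun u _ => hf.analyticAt u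
  exact hana.eqOn_zero_of_preconnected_of_frequently_eq_zero isPreconnected_univ
    (Set.mem_univ w) hfreq (Set.mem_univ z)

/-- Lemma 2.3: a holomorphic function on `ℂ^N`, quasi-periodic in each variable with
respect to the lattice `ℤω₁ + ℤω₂`, which vanishes at all points `(ν₁δ, …, ν_Nδ)` with
`ν ∈ ℕ^N` for `δ ∉ ℚω₁ + ℚω₂`, is identically zero. -/
theorem quasi_periodic_holomorphic_vanishing (N : ℕ) (ω₁ ω₂ : ℂ)
    (hind : LinearIndependent ℝ ![ω₁, ω₂])
    (F : (Fin N → ℂ) → ℂ) (hF : Differentiable ℂ F)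
    (hqp : ∀ (i : Fin N) (k : Fin 2), ∃ a b : ℂ, ∀ z : Fin N → ℂ,
      F (Function.update z i (z i + ![ω₁, ω₂] k)) = Complex.exp (a * z i + b) * F z)
    (δ : ℂ) (hδ : ¬ ∃ p q : ℚ, δ = (p : ℂ) * ω₁ + (q : ℂ) * ω₂)
    (hzero : ∀ ν : Fin N → ℕ, F (fun i => (ν i : ℂ) * δ) = 0) :
    ∀ z : Fin N → ℂ, F z = 0 := by
  have key : ∀ (s : Finset (Fin N)) (z : Fin N → ℂ),
      (∀ j, j ∉ s → ∃ n : ℕ, z j = (n : ℂ) * δ) → F z = 0 := by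
    intro s
    induction s using Finset.induction_on with
    | empty =>
      intro z hz
      choose ν hν using fun j => hz j (Finset.notMem_empty j)
      rw [show z = fun i => (ν i : ℂ) * δ from funext hν]
      exact hzero ν
    | insert i s _ ih =>
      intro z hz
      have hper : ∀ (k : Fin 2) (w : ℂ), F (Function.update z i (w + ![ω₁, ω₂] k)) = 0 ↔
          F (Function.update z i w) = 0 := by
        intro k w
        obtain ⟨a, b, hab⟩ := hqp i k
        have := hab (Function.update z i w)
        rw [Function.update_self, Function.update_idem] at this
        rw [this]
        simp [Complex.exp_ne_zero]
      have hdiff : Differentiable ℂ fun w => F (Function.update z i w) :=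
        hF.comp fun w => (hasFDerivAt_update z w).differentiableAt
      have := eq_zero_of_vanish_nat_mul hind hdiff (hper 0) (hper 1) hδ (fun ν => ih _ ?_) (z i)
      · simpa using this
      · intro j hj
        by_cases hji : j = i
        · subst hji
          exact ⟨ν, by simp⟩
        · obtain ⟨n, hn⟩ := hz j (by simp [hji, hj])
          exact ⟨n, by simp [hji, hn]⟩
  exact fun z => key Finset.univ z (fun j hj => absurd (Finset.mem_univ j) hj)
end

section
/- Let q ∈ ℂ be nonzero and not a root of unity. Suppose a = (a_1,…,a_m) and b = (b_1,…,b_n) are nonzero complex numbers with a_1 ⋯ a_m = b_1 ⋯ b_n, and let x ∈ (ℂ^*)^m, y ∈ (ℂ^*)^n be in generic position (all factors appearing in denominators of the two series are nonzero). Then for every N = 0, 1, 2, …: φ^{m,n}_N(a_1,…,a_m; x_1,…,x_m | y_1/b_1,…, y_n/b_n; y_1,…,y_n) = φ^{n,m}_N(b_1,…,b_n; y_1,…,y_n | x_1/a_1,…, x_m/a_m; x_1,…,x_m). -/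
/-!
The two sides of the duality are compared as functions of a common scaling `y ↦ t y`. After
multiplication by `∏_{i,k} (y_k x_i;q)_N` (the cleared series `phiC`), both become polynomials in `t`
of degree at most `m n N`, each a sum of terms `w_μ ∏ (1 - c_μ(σ) t)` in which `∏_σ c_μ(σ)` does not
depend on `μ`. By the balancing condition this product is the same on both sides, namely
`(∏ a)^(-N) ∏ d`, where `d` runs over the numbers `y_k x_i q^r` with `r < N`.

If the two polynomials agree at all the nodes `t = 1 / d`, their difference is a constant multiple of
`∏ (1 - d t)`, and comparing constant and leading coefficients shows that the constant vanishes unless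
`(∏ a)^N = 1` (`liouville`).

At a node, where `y_K x_I q^l = 1`, only the terms with `μ_I > l` survive. Shifting `μ_I` by
`L = l + 1` expresses the cleared series as a constant times the series of order `N - L`, with
`a_I, x_I, b_K, y_K` multiplied by `q^L` (`node`). The new parameters are again balanced, the constants
for the two sides coincide (`cst_symm`), and induction on `N` gives the agreement at the nodes
(`node_agree`, `generic_duality`).

The argument needs the products `y_k x_i` to be distinct modulo `q^ℤ` and no positive power of `∏ a`
to be a power of `q`. These assumptions are removed by continuity along a one-parameter deformation
(`duality_pos`). The cases `m = 0` or `n = 0` are reduced to positive `m` and `n` by adjoining a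
variable (`phiB_balanced_zero`).
-/

open Finset

/-- The `q`-shifted factorial `(x;q)_k = ∏_{i=0}^{k-1} (1 - x q^i)`. -/
noncomputable def qsf (q x : ℂ) (k : ℕ) : ℂ := ∏ i ∈ Finset.range k, (1 - x * q ^ i)

/-- The multiple basic hypergeometric series `φ^{m,n}_N(a; x | b; c)`. -/
noncomputable def phiB (q : ℂ) {m n : ℕ} (a x : Fin m → ℂ) (b c : Fin n → ℂ)
    (N : ℕ) : ℂ :=
  ∑ μ ∈ Finset.Nat.antidiagonalTuple m N,
    (∏ i, ∏ j ∈ Finset.univ.filter (fun j => i < j),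
        (q ^ (μ i) * x i - q ^ (μ j) * x j) / (x i - x j))
      * (∏ i, ∏ j, qsf q (a j * x i / x j) (μ i) / qsf q (q * x i / x j) (μ i))
      * (∏ i, ∏ k, qsf q (b k * x i) (μ i) / qsf q (c k * x i) (μ i))

/-! ### Shifted factorials and clearing of denominators -/
theorem qsf_add (q x : ℂ) (k l : ℕ) : qsf q x (k + l) = qsf q x k * qsf q (q ^ k * x) l := by
  unfold qsf
  rw [Finset.prod_range_add]
  congr 1
  refine Finset.prod_congr rfl fun i _ => ?_
  rw [pow_add]; ring

theorem qsf_ne_zero {q x : ℂ} {k : ℕ} (h : ∀ l < k, x * q ^ l ≠ 1) : qsf q x k ≠ 0 := by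
  unfold qsf
  rw [Finset.prod_ne_zero_iff]
  intro i hi
  exact sub_ne_zero.2 (h i (Finset.mem_range.1 hi)).symm

/-- `clr q N z v k = (v;q)_k (q^k z;q)_{N-k}` for `k ≤ N`, written as a product of exactly `N`
linear factors: it is the quotient `(v;q)_k / (z;q)_k` multiplied by `(z;q)_N`, and it stays
meaningful when `(z;q)_N = 0`. -/
noncomputable def clr (q : ℂ) (N : ℕ) (z v : ℂ) (k : ℕ) : ℂ :=
  ∏ r ∈ Finset.range N, (1 - (if r < k then v else z) * q ^ r)

theorem clr_eq (q : ℂ) {N k : ℕ} (hk : k ≤ N) (z v : ℂ) :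
    clr q N z v k = qsf q v k * qsf q (q ^ k * z) (N - k) := by
  obtain ⟨l, rfl⟩ := Nat.exists_eq_add_of_le hk
  unfold clr qsf
  rw [Finset.prod_range_add, Nat.add_sub_cancel_left]
  congr 1
  · refine Finset.prod_congr rfl fun i hi => ?_
    rw [if_pos (Finset.mem_range.1 hi)]
  · refine Finset.prod_congr rfl fun i _ => ?_
    rw [if_neg (by omega), pow_add]; ring

theorem clr_eq_div (q : ℂ) {N k : ℕ} (hk : k ≤ N) (z v : ℂ) (hz : qsf q z N ≠ 0) :
    clr q N z v k = qsf q z N * (qsf q v k / qsf q z k) := by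
  obtain ⟨l, rfl⟩ := Nat.exists_eq_add_of_le hk
  rw [clr_eq q hk, Nat.add_sub_cancel_left]
  rw [qsf_add] at hz ⊢
  have := left_ne_zero_of_mul hz
  field_simp

/-- The part of the summand of `phiB` that depends only on `a` and `x`. It is homogeneous of
degree zero in `x`. -/
noncomputable def wt (q : ℂ) {m : ℕ} (a x : Fin m → ℂ) (μ : Fin m → ℕ) : ℂ :=
  (∏ i, ∏ j ∈ Finset.univ.filter (fun j => i < j),
        (q ^ (μ i) * x i - q ^ (μ j) * x j) / (x i - x j))
      * (∏ i, ∏ j, qsf q (a j * x i / x j) (μ i) / qsf q (q * x i / x j) (μ i))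

/-- The series `φ^{m,n}_N(a; x | y/b; y)` multiplied by `∏_{i,k} (y_k x_i;q)_N`, so that the
denominators mixing `x` and `y` are cleared. -/
noncomputable def phiC (q : ℂ) {m n : ℕ} (a x : Fin m → ℂ) (b y : Fin n → ℂ) (N : ℕ) : ℂ :=
  ∑ μ ∈ Finset.Nat.antidiagonalTuple m N,
    wt q a x μ * ∏ i, ∏ k, clr q N (y k * x i) (y k / b k * x i) (μ i)

theorem le_of_mem_tuple {m N : ℕ} {μ : Fin m → ℕ}
    (h : μ ∈ Finset.Nat.antidiagonalTuple m N) (i : Fin m) : μ i ≤ N := by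
  rw [Finset.Nat.mem_antidiagonalTuple] at h
  rw [← h]
  exact Finset.single_le_sum (f := μ) (fun _ _ => Nat.zero_le _) (Finset.mem_univ i)

theorem phiC_eq (q : ℂ) {m n : ℕ} (a x : Fin m → ℂ) (b y : Fin n → ℂ) (N : ℕ)
    (h : ∀ i k, qsf q (y k * x i) N ≠ 0) :
    phiC q a x b y N =
      (∏ i, ∏ k, qsf q (y k * x i) N) * phiB q a x (fun k => y k / b k) y N := by
  unfold phiC phiB
  rw [Finset.mul_sum]
  refine Finset.sum_congr rfl fun μ hμ => ?_
  have : ∀ i k, clr q N (y k * x i) (y k / b k * x i) (μ i) =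
      qsf q (y k * x i) N * (qsf q (y k / b k * x i) (μ i) / qsf q (y k * x i) (μ i)) :=
    fun i k => clr_eq_div q (le_of_mem_tuple hμ i) _ _ (h i k)
  simp only [this, Finset.prod_mul_distrib, wt]
  ring

/-- A product over pairs `i < j` of a symmetric function that is trivial away from the index `I`
collapses to the pairs containing `I`. -/
theorem prod_pairs {m : ℕ} (I : Fin m) (ρ : Fin m → Fin m → ℂ)
    (hs : ∀ i j, ρ i j = ρ j i) (h1 : ∀ i j, i ≠ I → j ≠ I → ρ i j = 1) :
    ∏ i, ∏ j ∈ Finset.univ.filter (fun j => i < j), ρ i j = ∏ j ∈ univ.erase I, ρ I j := by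
  have e : ∀ i ∈ univ.erase I, ∏ j ∈ Finset.univ.filter (fun j => i < j), ρ i j =
      if i < I then ρ I i else 1 := by
    intro i hi
    have hi' := (Finset.mem_erase.1 hi).1
    split_ifs with h
    · rw [Finset.prod_eq_single I]
      · exact hs _ _
      · intro j _ hj; exact h1 _ _ hi' hj
      · intro hI; simp [h] at hI
    · refine Finset.prod_eq_one fun j hj => h1 _ _ hi' ?_
      rintro rfl
      simp at hj; exact h hj
  rw [← Finset.mul_prod_erase _ _ (Finset.mem_univ I), Finset.prod_congr rfl e,
    ← Finset.prod_filter, ← Finset.prod_filter_mul_prod_filter_not (univ.erase I) (fun i => i < I),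
    mul_comm]
  congr 1
  refine Finset.prod_congr ?_ fun _ _ => rfl
  ext j
  simp only [Finset.mem_filter, Finset.mem_erase, Finset.mem_univ]
  grind

/-! ### The interpolation argument -/

/-- Let `F(t) = ∑ w_μ ∏_τ (1 - c_μ(τ) t)` and `F'(t) = ∑ w'_μ ∏_τ (1 - c'_μ(τ) t)`, where all the
products `∏ c_μ` and `∏ c'_μ` equal `lam * ∏ d`. If `F` and `F'` agree at the `|S|` points
`1 / d(σ)`, then `R = F - F'` is `R(0) ∏ (1 - d(σ) t)` for degree reasons. Its leading coefficient is
both `R(0) ∏ (-d)` and `lam * R(0) ∏ (-d)`, so `lam ≠ 1` forces `R = 0`. The conclusion is the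
equality `F(1) = F'(1)`. -/
theorem liouville {S ι κ : Type*} [Fintype S] (s : Finset ι) (s' : Finset κ)
    (w : ι → ℂ) (w' : κ → ℂ) (c : ι → S → ℂ) (c' : κ → S → ℂ) (d : S → ℂ) (lam : ℂ)
    (hd : Function.Injective d) (hd0 : ∀ σ, d σ ≠ 0) (hlam : lam ≠ 1)
    (hc : ∀ μ ∈ s, ∏ σ, c μ σ = lam * ∏ σ, d σ)
    (hc' : ∀ μ ∈ s', ∏ σ, c' μ σ = lam * ∏ σ, d σ)
    (hnode : ∀ σ, ∑ μ ∈ s, w μ * ∏ τ, (1 - c μ τ * (d σ)⁻¹) =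
      ∑ μ ∈ s', w' μ * ∏ τ, (1 - c' μ τ * (d σ)⁻¹)) :
    ∑ μ ∈ s, w μ * ∏ τ, (1 - c μ τ) = ∑ μ ∈ s', w' μ * ∏ τ, (1 - c' μ τ) := by
  classical
  let L : (S → ℂ) → Polynomial ℂ := fun c => ∏ τ, (1 - Polynomial.C (c τ) * Polynomial.X)
  have hdeg1 : ∀ z : ℂ, (1 - Polynomial.C z * Polynomial.X : Polynomial ℂ).natDegree ≤ 1 := by
    intro z; compute_degree
  have hLdeg : ∀ c, (L c).natDegree ≤ Fintype.card S := by
    intro c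
    refine (Polynomial.natDegree_prod_le _ _).trans ?_
    refine (Finset.sum_le_sum fun τ _ => hdeg1 (c τ)).trans ?_
    simp
  have hLtop : ∀ c, (L c).coeff (Fintype.card S) = ∏ τ, (- c τ) := by
    intro c
    have := Polynomial.coeff_prod_of_natDegree_le univ
      (fun τ => (1 - Polynomial.C (c τ) * Polynomial.X : Polynomial ℂ)) 1 (fun τ _ => hdeg1 _)
    rw [Finset.card_univ, mul_one] at this
    rw [this]
    refine Finset.prod_congr rfl fun τ _ => ?_
    simp [Polynomial.coeff_one]
  have hLe : ∀ c t, (L c).eval t = ∏ τ, (1 - c τ * t) := by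
    intro c t; simp [L, Polynomial.eval_prod]
  let R : Polynomial ℂ := ∑ μ ∈ s, Polynomial.C (w μ) * L (c μ) -
    ∑ μ ∈ s', Polynomial.C (w' μ) * L (c' μ)
  have hRe : ∀ t, R.eval t = ∑ μ ∈ s, w μ * ∏ τ, (1 - c μ τ * t) -
      ∑ μ ∈ s', w' μ * ∏ τ, (1 - c' μ τ * t) := by
    intro t
    simp [R, Polynomial.eval_finsetSum, hLe]
  have hRdeg : R.natDegree ≤ Fintype.card S := by
    refine (Polynomial.natDegree_sub_le _ _).trans (max_le ?_ ?_)
    · exact Polynomial.natDegree_sum_le_of_forall_le _ _ fun μ _ =>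
        (Polynomial.natDegree_C_mul_le _ _).trans (hLdeg _)
    · exact Polynomial.natDegree_sum_le_of_forall_le _ _ fun μ _ =>
        (Polynomial.natDegree_C_mul_le _ _).trans (hLdeg _)
  have hR0 : R.eval 0 = ∑ μ ∈ s, w μ - ∑ μ ∈ s', w' μ := by
    rw [hRe]; simp
  have hRtop : R.coeff (Fintype.card S) = lam * (∏ τ, (- d τ)) * R.eval 0 := by
    rw [hR0]
    simp only [R, Polynomial.coeff_sub, Polynomial.finsetSum_coeff, Polynomial.coeff_C_mul, hLtop,
      Finset.prod_neg]
    rw [Finset.sum_congr rfl fun μ hμ => by rw [hc μ hμ],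
      Finset.sum_congr (s₁ := s') rfl fun μ hμ => by rw [hc' μ hμ], ← Finset.sum_mul,
      ← Finset.sum_mul]
    ring
  -- `R` agrees with `R(0) L d` at `0` and at the reciprocals of the `d σ`
  have hE : R - Polynomial.C (R.eval 0) * L d = 0 := by
    refine Polynomial.eq_zero_of_natDegree_lt_card_of_eval_eq_zero _
      (f := fun o : Option S => o.elim 0 (fun σ => (d σ)⁻¹)) ?_ ?_ ?_
    · rintro (_ | σ) (_ | τ) h
      · rfl
      · simp at h
        exact absurd h.symm (hd0 τ)
      · simp [hd0] at h
      · simp at h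
        rw [hd h]
    · rintro (_ | σ)
      · simp [hLe]
      · simp only [Option.elim, Polynomial.eval_sub, Polynomial.eval_mul, Polynomial.eval_C]
        rw [hRe, hnode, sub_self, hLe,
          Finset.prod_eq_zero (Finset.mem_univ σ) (by rw [mul_inv_cancel₀ (hd0 σ), sub_self])]
        ring
    · rw [Fintype.card_option, Nat.lt_succ_iff]
      exact (Polynomial.natDegree_sub_le _ _).trans
        (max_le hRdeg ((Polynomial.natDegree_C_mul_le _ _).trans (hLdeg _)))
  have hR00 : R.eval 0 = 0 := by
    have h := congrArg (fun p => p.coeff (Fintype.card S)) hE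
    simp only [Polynomial.coeff_sub, Polynomial.coeff_C_mul, hLtop, hRtop,
      Polynomial.coeff_zero] at h
    have hp : ∏ τ, (- d τ) ≠ 0 := Finset.prod_ne_zero_iff.2 fun τ _ => neg_ne_zero.2 (hd0 τ)
    have h2 : (lam - 1) * ((∏ τ, (- d τ)) * R.eval 0) = 0 := by linear_combination h
    rcases mul_eq_zero.1 h2 with h3 | h3
    · exact absurd (sub_eq_zero.1 h3) hlam
    · exact (mul_eq_zero.1 h3).resolve_left hp
  rw [hR00] at hE
  have := hRe 1
  rw [show R = 0 by simpa using hE] at this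
  simp only [Polynomial.eval_zero, mul_one] at this
  exact (sub_eq_zero.1 this.symm)

/-! ### Evaluation at a node -/

/-- The constant relating `phiC` at a point with `y_K x_I q^(L-1) = 1` to a series of order `N - L`
with shifted parameters, see `node`. -/
noncomputable def cst (q : ℂ) {m n : ℕ} (a x : Fin m → ℂ) (b y : Fin n → ℂ) (N L : ℕ)
    (I : Fin m) (K : Fin n) : ℂ :=
  (∏ i ∈ univ.erase I, ∏ k, qsf q (y k * x i) N) * (∏ k ∈ univ.erase K, qsf q (y k * x I) N)
    * (qsf q q (N - L) / qsf q q L)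
    * (((∏ j, qsf q (a j * x I / x j) L) * ∏ k, qsf q (y k / b k * x I) L) /
      ((∏ j ∈ univ.erase I, qsf q (x I / x j) L) * ∏ k ∈ univ.erase K, qsf q (y k * x I) L))

theorem qsf_q_ne_zero {q : ℂ} (hq1 : ∀ k : ℕ, 0 < k → q ^ k ≠ 1) (k : ℕ) : qsf q q k ≠ 0 :=
  qsf_ne_zero fun l _ => by
    rw [← pow_succ']; exact hq1 _ (Nat.succ_pos l)

theorem shift_qsf_left (q z : ℂ) (L : ℕ) :
    (1 - z) * qsf q (q * z) L = qsf q z L * (1 - q ^ L * z) := by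
  have h1 := qsf_add q z 1 L
  have h2 := qsf_add q z L 1
  rw [add_comm 1 L, h2] at h1
  simpa [qsf] using h1.symm

/-- Effect on the Vandermonde-type factor of raising `μ_I` by `L`: up to a factor independent of
`ν`, it is the same as replacing `x_I` by `q^L x_I`. -/
theorem vander_shift {q : ℂ} {m : ℕ} (x : Fin m → ℂ)
    (hx : ∀ i, x i ≠ 0) (hxx : ∀ i j, i ≠ j → ∀ d : ℤ, x i ≠ q ^ d * x j)
    (L : ℕ) (I : Fin m) (ν : Fin m → ℕ) :
    (∏ i, ∏ j ∈ Finset.univ.filter (fun j => i < j),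
      (q ^ (Function.update ν I (L + ν I) i) * x i - q ^ (Function.update ν I (L + ν I) j) * x j) /
        (x i - x j)) =
    (∏ j ∈ univ.erase I, qsf q (q * x I / x j) L / qsf q (x I / x j) L) *
    ∏ i, ∏ j ∈ Finset.univ.filter (fun j => i < j),
      (q ^ ν i * Function.update x I (q ^ L * x I) i -
        q ^ ν j * Function.update x I (q ^ L * x I) j) /
        (Function.update x I (q ^ L * x I) i - Function.update x I (q ^ L * x I) j) := by
  set x' := Function.update x I (q ^ L * x I) with hx'
  have hnum : ∀ i, q ^ (Function.update ν I (L + ν I) i) * x i = q ^ ν i * x' i := by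
    intro i
    by_cases h : i = I
    · subst h; simp [hx', pow_add]; ring
    · simp [hx', h]
  have hne : ∀ i j, i ≠ j → x i - x j ≠ 0 := fun i j h => by
    have := hxx i j h 0
    rw [zpow_zero, one_mul] at this
    exact sub_ne_zero.2 this
  have hqL : ∀ j, j ≠ I → q ^ L * x I - x j ≠ 0 := fun j h => by
    have := hxx j I h L
    rw [zpow_natCast] at this
    exact sub_ne_zero.2 this.symm
  have hne' : ∀ i j, i ≠ j → x' i - x' j ≠ 0 := by
    intro i j h
    by_cases hi : i = I
    · subst hi
      simpa [hx', h.symm] using hqL j h.symm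
    · by_cases hj : j = I
      · subst hj
        have := hqL i hi
        simp only [hx', Function.update_self, Function.update_of_ne hi]
        rw [← neg_ne_zero]; simpa using this
      · simpa [hx', hi, hj] using hne i j h
  have key := prod_pairs I (fun i j => if i = j then 1 else (x' i - x' j) / (x i - x j))
    (by
      intro i j
      by_cases h : i = j
      · simp [h]
      · simp only [h, Ne.symm h, if_false]
        rw [← neg_sub (x' j), ← neg_sub (x j), neg_div_neg_eq])
    (by
      intro i j hi hj
      by_cases h : i = j
      · simp [h]
      · simp only [h, if_false, hx', Function.update_of_ne hi, Function.update_of_ne hj]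
        exact div_self (hne i j h))
  have h2 : ∏ j ∈ univ.erase I, (if I = j then 1 else (x' I - x' j) / (x I - x j)) =
      ∏ j ∈ univ.erase I, qsf q (q * x I / x j) L / qsf q (x I / x j) L := by
    refine Finset.prod_congr rfl fun j hj => ?_
    have hj' : j ≠ I := (Finset.mem_erase.1 hj).1
    rw [if_neg hj'.symm]
    simp only [hx', Function.update_self, Function.update_of_ne hj']
    have hs := shift_qsf_left q (x I / x j) L
    have hz : qsf q (x I / x j) L ≠ 0 := qsf_ne_zero fun l _ h => by
      refine hxx j I hj' l ?_
      have := hx j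
      field_simp at h
      rw [zpow_natCast, mul_comm, h]
    rw [div_eq_div_iff (hne I j hj'.symm) hz, mul_div_assoc]
    have := hx j
    have e1 : q ^ L * x I - x j = - x j * (1 - q ^ L * (x I / x j)) := by field_simp; ring
    have e2 : x I - x j = - x j * (1 - x I / x j) := by field_simp; ring
    rw [e1, e2]
    linear_combination x j * hs
  rw [← h2, ← key, ← Finset.prod_mul_distrib]
  refine Finset.prod_congr rfl fun i _ => ?_
  rw [← Finset.prod_mul_distrib]
  refine Finset.prod_congr rfl fun j hj => ?_
  have hij : i ≠ j := (Finset.mem_filter.1 hj).2.ne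
  have := hne i j hij
  have := hne' i j hij
  rw [hnum, hnum, if_neg hij]
  field_simp

/-- The factors of the summand with row index `i` other than `I`, at a point where
`y_K x_I q^L = q`. Replacing `x_I, a_I, y_K` by their multiples by `q^L` merely exchanges the
denominators coming from `x_I` and from `y_K`. The statement itself does not need `i ≠ I`, because
`x i` is not shifted in it. -/
theorem row_other {q : ℂ} (hq0 : q ≠ 0) {m n : ℕ}
    (a x : Fin m → ℂ) (v y : Fin n → ℂ) (hx : ∀ i, x i ≠ 0) {N L : ℕ}
    (I : Fin m) (K : Fin n) (hIK : y K * x I * q ^ L = q) (i : Fin m) (μ : ℕ)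
    (hμ : μ ≤ N) (hden : ∀ k, qsf q (y k * x i) N ≠ 0) :
    (∏ j, qsf q (a j * x i / x j) μ / qsf q (q * x i / x j) μ) *
      ∏ k, clr q N (y k * x i) (v k * x i) μ =
    (∏ k, qsf q (y k * x i) N) *
    ((∏ j, qsf q (Function.update a I (q ^ L * a I) j * x i / Function.update x I (q ^ L * x I) j) μ
        / qsf q (q * x i / Function.update x I (q ^ L * x I) j) μ) *
      ∏ k, qsf q (v k * x i) μ / qsf q (Function.update y K (q ^ L * y K) k * x i) μ) := by
  have hqL : q ^ L ≠ 0 := pow_ne_zero _ hq0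
  have hxI := hx I
  simp only [clr_eq_div q hμ _ _ (hden _), Finset.prod_mul_distrib]
  rw [← Finset.mul_prod_erase _ _ (Finset.mem_univ I),
    ← Finset.mul_prod_erase univ (fun j => qsf q (Function.update a I (q ^ L * a I) j * x i /
      Function.update x I (q ^ L * x I) j) μ / _) (Finset.mem_univ I),
    ← Finset.mul_prod_erase univ (fun k => qsf q (v k * x i) μ / qsf q (y k * x i) μ)
      (Finset.mem_univ K),
    ← Finset.mul_prod_erase univ (fun k => qsf q (v k * x i) μ /
      qsf q (Function.update y K (q ^ L * y K) k * x i) μ) (Finset.mem_univ K)]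
  have e1 : ∏ j ∈ univ.erase I, qsf q (Function.update a I (q ^ L * a I) j * x i /
      Function.update x I (q ^ L * x I) j) μ / qsf q (q * x i / Function.update x I (q ^ L * x I) j) μ
      = ∏ j ∈ univ.erase I, qsf q (a j * x i / x j) μ / qsf q (q * x i / x j) μ := by
    refine Finset.prod_congr rfl fun j hj => ?_
    have hj' : j ≠ I := (Finset.mem_erase.1 hj).1
    simp only [Function.update_of_ne hj']
  have e2 : ∏ k ∈ univ.erase K, qsf q (v k * x i) μ /
      qsf q (Function.update y K (q ^ L * y K) k * x i) μ =
      ∏ k ∈ univ.erase K, qsf q (v k * x i) μ / qsf q (y k * x i) μ := by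
    refine Finset.prod_congr rfl fun j hj => ?_
    have hj' : j ≠ K := (Finset.mem_erase.1 hj).1
    simp only [Function.update_of_ne hj']
  rw [e1, e2]
  simp only [Function.update_self]
  -- the roles of `(I, K)`-denominators are exchanged by the shift
  have f1 : q ^ L * a I * x i / (q ^ L * x I) = a I * x i / x I := by field_simp
  have f2 : q * x i / (q ^ L * x I) = y K * x i := by
    rw [div_eq_iff (mul_ne_zero hqL hxI)]; linear_combination (- x i) * hIK
  have f3 : q * x i / x I = q ^ L * y K * x i := by
    rw [div_eq_iff hxI]; linear_combination (- x i) * hIK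
  rw [f1, f2, f3]
  ring

/-- The factors of the summand with row index `I`, at a point where `y_K x_I q^L = q` and with
`μ_I = L + ν`. The factor of `y_K` is treated through `clr_eq`, since `(y_K x_I;q)_N` vanishes for
`1 ≤ L ≤ N`. -/
theorem row_self {q : ℂ} (hq0 : q ≠ 0) (hq1 : ∀ k : ℕ, 0 < k → q ^ k ≠ 1) {m n : ℕ}
    (a x : Fin m → ℂ) (v y : Fin n → ℂ) (hx : ∀ i, x i ≠ 0) {N L : ℕ}
    (I : Fin m) (K : Fin n) (hIK : y K * x I * q ^ L = q) (ν : ℕ)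
    (hν : L + ν ≤ N) (hden : ∀ k, k ≠ K → qsf q (y k * x I) N ≠ 0) :
    (∏ j, qsf q (a j * x I / x j) (L + ν) / qsf q (q * x I / x j) (L + ν)) *
      ∏ k, clr q N (y k * x I) (v k * x I) (L + ν) =
    ((∏ k ∈ univ.erase K, qsf q (y k * x I) N) * (qsf q q (N - L) / qsf q q L) *
      (((∏ j, qsf q (a j * x I / x j) L) * ∏ k, qsf q (v k * x I) L) /
      ((∏ j ∈ univ.erase I, qsf q (q * x I / x j) L) * ∏ k ∈ univ.erase K, qsf q (y k * x I) L))) *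
    ((∏ j, qsf q (Function.update a I (q ^ L * a I) j * (q ^ L * x I) /
          Function.update x I (q ^ L * x I) j) ν
        / qsf q (q * (q ^ L * x I) / Function.update x I (q ^ L * x I) j) ν) *
      ∏ k, qsf q (v k * (q ^ L * x I)) ν /
        qsf q (Function.update y K (q ^ L * y K) k * (q ^ L * x I)) ν) := by
  have hqL : q ^ L ≠ 0 := pow_ne_zero _ hq0
  have hxI := hx I
  have ea : ∀ j, qsf q (a j * x I / x j) (L + ν) = qsf q (a j * x I / x j) L *
      qsf q (Function.update a I (q ^ L * a I) j * (q ^ L * x I) /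
          Function.update x I (q ^ L * x I) j) ν := by
    intro j
    rw [qsf_add]
    by_cases h : j = I
    · subst h
      simp only [Function.update_self]
      congr 2; field_simp
    · simp only [Function.update_of_ne h]
      congr 2; ring
  have ev : ∀ k, qsf q (v k * x I) (L + ν) = qsf q (v k * x I) L *
      qsf q (v k * (q ^ L * x I)) ν := by
    intro k
    rw [qsf_add]; congr 2; ring
  have ed : ∏ j ∈ univ.erase I, qsf q (q * x I / x j) (L + ν) =
      (∏ j ∈ univ.erase I, qsf q (q * x I / x j) L) *
      ∏ j ∈ univ.erase I, qsf q (q * (q ^ L * x I) / Function.update x I (q ^ L * x I) j) ν := by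
    rw [← Finset.prod_mul_distrib]
    refine Finset.prod_congr rfl fun j hj => ?_
    have hj' : j ≠ I := (Finset.mem_erase.1 hj).1
    simp only [Function.update_of_ne hj']
    rw [qsf_add]; congr 2; ring
  have ey : ∏ k ∈ univ.erase K, clr q N (y k * x I) (v k * x I) (L + ν) =
      (∏ k ∈ univ.erase K, qsf q (y k * x I) N) *
      ((∏ k ∈ univ.erase K, (qsf q (v k * x I) L * qsf q (v k * (q ^ L * x I)) ν)) /
        ((∏ k ∈ univ.erase K, qsf q (y k * x I) L) *
          ∏ k ∈ univ.erase K,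
            qsf q (Function.update y K (q ^ L * y K) k * (q ^ L * x I)) ν)) := by
    rw [← Finset.prod_mul_distrib, ← Finset.prod_div_distrib, ← Finset.prod_mul_distrib]
    refine Finset.prod_congr rfl fun k hk => ?_
    have hk' : k ≠ K := (Finset.mem_erase.1 hk).1
    rw [clr_eq_div q hν _ _ (hden k hk'), ev, qsf_add q (y k * x I), Function.update_of_ne hk',
      show q ^ L * (y k * x I) = y k * (q ^ L * x I) by ring]
  have eK : clr q N (y K * x I) (v K * x I) (L + ν) =
      qsf q (v K * x I) L * qsf q (v K * (q ^ L * x I)) ν * (qsf q q (N - L) / qsf q q ν) := by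
    rw [clr_eq q hν, ev]
    congr 1
    rw [eq_div_iff (qsf_q_ne_zero hq1 ν), show q ^ (L + ν) * (y K * x I) = q ^ ν * q by
        rw [pow_add]; linear_combination q ^ ν * hIK, show N - L = ν + (N - (L + ν)) by omega, qsf_add q q, mul_comm]
  have eq2 : qsf q q (L + ν) = qsf q q L * qsf q (q ^ L * q) ν := qsf_add _ _ _ _
  have e5 : q * x I / x I = q := by field_simp
  have e6 : q * (q ^ L * x I) / (q ^ L * x I) = q := by field_simp
  have e7 : q ^ L * y K * (q ^ L * x I) = q ^ L * q := by
    linear_combination q ^ L * hIK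
  simp only [Finset.prod_div_distrib, ea, Finset.prod_mul_distrib]
  rw [← Finset.mul_prod_erase univ (fun j => qsf q (q * x I / x j) (L + ν)) (Finset.mem_univ I),
    ← Finset.mul_prod_erase univ
      (fun k => clr q N (y k * x I) (v k * x I) (L + ν)) (Finset.mem_univ K),
    ← Finset.mul_prod_erase univ
      (fun j => qsf q (q * (q ^ L * x I) / Function.update x I (q ^ L * x I) j) ν)
      (Finset.mem_univ I),
    ← Finset.mul_prod_erase univ
      (fun k => qsf q (Function.update y K (q ^ L * y K) k * (q ^ L * x I)) ν) (Finset.mem_univ K),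
    ← Finset.mul_prod_erase univ (fun k => qsf q (v k * x I) L) (Finset.mem_univ K),
    ← Finset.mul_prod_erase univ (fun k => qsf q (v k * (q ^ L * x I)) ν) (Finset.mem_univ K),
    ed, ey, eK]
  simp only [Function.update_self, e5, e6, e7, eq2, Finset.prod_mul_distrib]
  simp only [div_eq_mul_inv, mul_inv]
  ring

/-- At a point where `y_K x_I q^l = 1` only the summands with `μ_I ≥ l + 1` survive in `phiC`.
Lowering `μ_I` by `L = l + 1` turns the sum into a constant times the series of order `N - L` in
which `a_I, x_I, y_K` (and implicitly `b_K`, as `y_K / b_K` is unchanged) are multiplied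
by `q^L`. -/
theorem node {q : ℂ} (hq0 : q ≠ 0) (hq1 : ∀ k : ℕ, 0 < k → q ^ k ≠ 1) {m n : ℕ}
    (a x : Fin m → ℂ) (b y : Fin n → ℂ) (hx : ∀ i, x i ≠ 0)
    (hxx : ∀ i j, i ≠ j → ∀ d : ℤ, x i ≠ q ^ d * x j) {N l : ℕ} (hl : l < N)
    (I : Fin m) (K : Fin n) (hIK : y K * x I * q ^ l = 1)
    (hden : ∀ i k, (i ≠ I ∨ k ≠ K) → qsf q (y k * x i) N ≠ 0) :
    phiC q a x b y N = cst q a x b y N (l + 1) I K *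
      phiB q (Function.update a I (q ^ (l + 1) * a I)) (Function.update x I (q ^ (l + 1) * x I))
        (fun k => y k / b k) (Function.update y K (q ^ (l + 1) * y K)) (N - (l + 1)) := by
  have hIK' : y K * x I * q ^ (l + 1) = q := by rw [pow_succ, ← mul_assoc, hIK, one_mul]
  set L := l + 1 with hL
  unfold phiC phiB
  rw [Finset.mul_sum]
  symm
  refine Finset.sum_of_injOn (fun ν => Function.update ν I (L + ν I)) ?_ ?_ ?_ ?_
  · intro ν _ ν' _ h
    ext i
    have := congrFun h i
    by_cases hi : i = I
    · subst hi; simpa using this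
    · simpa [hi] using this
  · intro ν hν
    simp only [Finset.mem_coe, Finset.Nat.mem_antidiagonalTuple] at hν ⊢
    rw [Finset.sum_update_of_mem (Finset.mem_univ I)]
    rw [← Finset.add_sum_erase _ _ (Finset.mem_univ I)] at hν
    rw [Finset.sdiff_singleton_eq_erase]
    omega
  · -- if `μ I ≤ l`, the cleared factor with index `(I, K)` vanishes
    intro μ hμ hμ'
    have hμI : μ I ≤ l := by
      by_contra hcon
      refine hμ' ⟨Function.update μ I (μ I - L), ?_, ?_⟩
      · simp only [Finset.mem_coe, Finset.Nat.mem_antidiagonalTuple] at hμ ⊢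
        rw [Finset.sum_update_of_mem (Finset.mem_univ I), Finset.sdiff_singleton_eq_erase]
        rw [← Finset.add_sum_erase _ _ (Finset.mem_univ I)] at hμ
        omega
      · ext i
        by_cases hi : i = I
        · subst hi; simp; omega
        · simp [hi]
    have h0 : clr q N (y K * x I) (y K / b K * x I) (μ I) = 0 := by
      unfold clr
      refine Finset.prod_eq_zero (Finset.mem_range.2 hl) ?_
      rw [if_neg (by omega), hIK, sub_self]
    rw [Finset.prod_eq_zero (Finset.mem_univ I)
      (Finset.prod_eq_zero (Finset.mem_univ K) h0), mul_zero]
  · intro ν hν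
    have hνI : ∀ i, ν i ≤ N - L := le_of_mem_tuple hν
    have hself := row_self hq0 hq1 a x (fun k => y k / b k) y hx I K hIK' (ν I) (N := N)
      (by have := hνI I; omega) (fun k hk => hden I k (Or.inr hk))
    have hother : ∀ i ∈ univ.erase I,
        (∏ j, qsf q (a j * x i / x j) (Function.update ν I (L + ν I) i) /
          qsf q (q * x i / x j) (Function.update ν I (L + ν I) i)) *
          ∏ k, clr q N (y k * x i) (y k / b k * x i) (Function.update ν I (L + ν I) i) =
        (∏ k, qsf q (y k * x i) N) * ((∏ j, qsf q (Function.update a I (q ^ L * a I) j *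
          Function.update x I (q ^ L * x I) i / Function.update x I (q ^ L * x I) j) (ν i)
          / qsf q (q * Function.update x I (q ^ L * x I) i /
              Function.update x I (q ^ L * x I) j) (ν i)) *
          ∏ k, qsf q (y k / b k * Function.update x I (q ^ L * x I) i) (ν i) /
            qsf q (Function.update y K (q ^ L * y K) k *
              Function.update x I (q ^ L * x I) i) (ν i)) := by
      intro i hi
      have hi' : i ≠ I := (Finset.mem_erase.1 hi).1
      simp only [Function.update_of_ne hi']
      exact row_other hq0 a x (fun k => y k / b k) y hx I K hIK' i (ν i)
        ((hνI i).trans (Nat.sub_le _ _)) (fun k => hden i k (Or.inl hi'))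
    have hrows : (∏ i, ∏ j, qsf q (a j * x i / x j) (Function.update ν I (L + ν I) i) /
          qsf q (q * x i / x j) (Function.update ν I (L + ν I) i)) *
          ∏ i, ∏ k, clr q N (y k * x i) (y k / b k * x i) (Function.update ν I (L + ν I) i) =
        (∏ i ∈ univ.erase I, ∏ k, qsf q (y k * x i) N) *
        ((∏ k ∈ univ.erase K, qsf q (y k * x I) N) * (qsf q q (N - L) / qsf q q L) *
      (((∏ j, qsf q (a j * x I / x j) L) * ∏ k, qsf q (y k / b k * x I) L) /
      ((∏ j ∈ univ.erase I, qsf q (q * x I / x j) L) *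
        ∏ k ∈ univ.erase K, qsf q (y k * x I) L))) *
        ((∏ i, ∏ j, qsf q (Function.update a I (q ^ L * a I) j *
          Function.update x I (q ^ L * x I) i / Function.update x I (q ^ L * x I) j) (ν i)
          / qsf q (q * Function.update x I (q ^ L * x I) i /
              Function.update x I (q ^ L * x I) j) (ν i)) *
          ∏ i, ∏ k, qsf q (y k / b k * Function.update x I (q ^ L * x I) i) (ν i) /
            qsf q (Function.update y K (q ^ L * y K) k *
              Function.update x I (q ^ L * x I) i) (ν i)) := by
      rw [← Finset.prod_mul_distrib, ← Finset.prod_mul_distrib,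
        ← Finset.mul_prod_erase _ _ (Finset.mem_univ I), Finset.prod_congr rfl hother,
        Finset.prod_mul_distrib,
        ← Finset.mul_prod_erase univ (fun i => _ * _) (Finset.mem_univ I)]
      simp only [Function.update_self]
      rw [hself]
      ring
    have hcan : (∏ j ∈ univ.erase I, qsf q (q * x I / x j) L) ≠ 0 := by
      refine Finset.prod_ne_zero_iff.2 fun j hj => qsf_ne_zero fun r _ h => ?_
      have hj' : j ≠ I := (Finset.mem_erase.1 hj).1
      refine hxx j I hj' (r + 1 : ℕ) ?_
      have := hx j
      field_simp at h
      rw [zpow_natCast, pow_succ, ← h]; ring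
    have hcst : cst q a x b y N L I K = (∏ j ∈ univ.erase I, qsf q (q * x I / x j) L /
        qsf q (x I / x j) L) * ((∏ i ∈ univ.erase I, ∏ k, qsf q (y k * x i) N) *
        ((∏ k ∈ univ.erase K, qsf q (y k * x I) N) * (qsf q q (N - L) / qsf q q L) *
      (((∏ j, qsf q (a j * x I / x j) L) * ∏ k, qsf q (y k / b k * x I) L) /
      ((∏ j ∈ univ.erase I, qsf q (q * x I / x j) L) *
        ∏ k ∈ univ.erase K, qsf q (y k * x I) L)))) := by
      unfold cst
      rw [Finset.prod_div_distrib]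
      generalize (∏ j ∈ univ.erase I, qsf q (q * x I / x j) L) = Z at hcan ⊢
      generalize (∏ j, qsf q (a j * x I / x j) L) * ∏ k, qsf q (y k / b k * x I) L = Z₁
      generalize (∏ k ∈ univ.erase K, qsf q (y k * x I) L) = Z₂
      generalize (∏ k ∈ univ.erase K, qsf q (y k * x I) N) = Z₃
      field_simp
    unfold wt
    rw [vander_shift x hx hxx L I ν, mul_assoc _ (∏ i, ∏ j, _ / _) (∏ i, ∏ k, clr _ _ _ _ _),
      hrows, hcst]
    ring

/-- Reversing the order of the factors: `(z;q)_{l+1}` is a monomial times `(z';q)_{l+1}` when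
`z z' q^l = 1`. -/
theorem qsf_reflect (q z z' : ℂ) (l : ℕ) (h : z * z' * q ^ l = 1) :
    qsf q z (l + 1) =
      (z ^ (l + 1) * ∏ i ∈ Finset.range (l + 1), (- q ^ i)) * qsf q z' (l + 1) := by
  unfold qsf
  rw [← Finset.prod_range_reflect (fun i => 1 - z' * q ^ i), show z ^ (l + 1) = ∏ _i ∈ Finset.range (l + 1), z by simp,
    ← Finset.prod_mul_distrib, ← Finset.prod_mul_distrib]
  refine Finset.prod_congr rfl fun i hi => ?_
  have hi' : i ≤ l := Nat.lt_succ_iff.1 (Finset.mem_range.1 hi)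
  have e : q ^ i * q ^ (l + 1 - 1 - i) = q ^ l := by rw [← pow_add]; congr 1; omega
  linear_combination -h - z * z' * e

theorem kappa_sq (q : ℂ) (l : ℕ) :
    (∏ i ∈ Finset.range (l + 1), (- q ^ i)) * ∏ i ∈ Finset.range (l + 1), (- q ^ i) =
      (q ^ l) ^ (l + 1) := by
  nth_rewrite 2 [← Finset.prod_range_reflect]
  rw [← Finset.prod_mul_distrib, show (q ^ l) ^ (l + 1) = ∏ _i ∈ Finset.range (l + 1), q ^ l by simp]
  refine Finset.prod_congr rfl fun i hi => ?_
  have hi' : i ≤ l := Nat.lt_succ_iff.1 (Finset.mem_range.1 hi)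
  rw [neg_mul_neg, ← pow_add]; congr 1; omega

/-- The constants at a node of the two sides of the duality agree. Each factor is reflected by
`qsf_reflect`; the resulting monomials cancel because of the balancing condition. -/
theorem cst_symm {q : ℂ} (hq0 : q ≠ 0) {m n : ℕ}
    (a x : Fin m → ℂ) (b y : Fin n → ℂ) (ha : ∀ i, a i ≠ 0) (hb : ∀ k, b k ≠ 0)
    (hx : ∀ i, x i ≠ 0) (hy : ∀ k, y k ≠ 0) (hbal : (∏ i, a i) = ∏ k, b k) (N l : ℕ)
    (I : Fin m) (K : Fin n) (hIK : y K * x I * q ^ l = 1) :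
    cst q a x b y N (l + 1) I K = cst q b y a x N (l + 1) K I := by
  set L := l + 1 with hL
  set κ := ∏ i ∈ Finset.range (l + 1), (- q ^ i) with hκ
  have hκ0 : κ ≠ 0 := Finset.prod_ne_zero_iff.2 fun i _ => neg_ne_zero.2 (pow_ne_zero _ hq0)
  have hxI := hx I
  have hyK := hy K
  have r1 : ∏ j, qsf q (a j * x I / x j) L =
      (∏ j, ((a j * x I / x j) ^ L * κ)) * ∏ j, qsf q (x j / a j * y K) L := by
    rw [← Finset.prod_mul_distrib]
    refine Finset.prod_congr rfl fun j _ => qsf_reflect _ _ _ _ ?_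
    have := ha j
    have := hx j
    rw [← hIK]; field_simp
  have r2 : ∏ k, qsf q (y k / b k * x I) L =
      (∏ k, ((y k / b k * x I) ^ L * κ)) * ∏ k, qsf q (b k * y K / y k) L := by
    rw [← Finset.prod_mul_distrib]
    refine Finset.prod_congr rfl fun k _ => qsf_reflect _ _ _ _ ?_
    have := hb k
    have := hy k
    rw [← hIK]; field_simp
  have r3 : ∏ j ∈ univ.erase I, qsf q (x I / x j) L =
      (∏ j ∈ univ.erase I, ((x I / x j) ^ L * κ)) * ∏ j ∈ univ.erase I, qsf q (x j * y K) L := by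
    rw [← Finset.prod_mul_distrib]
    refine Finset.prod_congr rfl fun j _ => qsf_reflect _ _ _ _ ?_
    have := hx j
    rw [← hIK]; field_simp
  have r4 : ∏ k ∈ univ.erase K, qsf q (y k * x I) L =
      (∏ k ∈ univ.erase K, ((y k * x I) ^ L * κ)) * ∏ k ∈ univ.erase K, qsf q (y K / y k) L := by
    rw [← Finset.prod_mul_distrib]
    refine Finset.prod_congr rfl fun k _ => qsf_reflect _ _ _ _ ?_
    have := hy k
    rw [← hIK]; field_simp
  set D₁ := ∏ j ∈ univ.erase I, ((x I / x j) ^ L * κ) with hD₁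
  set D₂ := ∏ k ∈ univ.erase K, ((y k * x I) ^ L * κ) with hD₂
  have hD₁0 : D₁ ≠ 0 := Finset.prod_ne_zero_iff.2 fun j _ =>
    mul_ne_zero (pow_ne_zero _ (div_ne_zero hxI (hx j))) hκ0
  have hD₂0 : D₂ ≠ 0 := Finset.prod_ne_zero_iff.2 fun k _ =>
    mul_ne_zero (pow_ne_zero _ (mul_ne_zero (hy k) hxI)) hκ0
  have p1 : ∏ j, ((a j * x I / x j) ^ L * κ) = (∏ j, a j) ^ L * (κ * D₁) := by
    have : κ * D₁ = ∏ j, ((x I / x j) ^ L * κ) := by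
      rw [← Finset.mul_prod_erase univ (fun j => (x I / x j) ^ L * κ) (Finset.mem_univ I),
        div_self hxI, one_pow, one_mul]
    rw [this, ← Finset.prod_pow, ← Finset.prod_mul_distrib]
    refine Finset.prod_congr rfl fun j _ => ?_
    rw [mul_div_assoc, mul_pow]; ring
  have p2 : (∏ k, b k) ^ L * ∏ k, ((y k / b k * x I) ^ L * κ) =
      (y K * x I) ^ L * κ * D₂ := by
    rw [hD₂, Finset.mul_prod_erase univ (fun k => (y k * x I) ^ L * κ) (Finset.mem_univ K),
      ← Finset.prod_pow, ← Finset.prod_mul_distrib]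
    refine Finset.prod_congr rfl fun k _ => ?_
    rw [← mul_assoc, ← mul_pow]
    have := hb k
    congr 2; field_simp
  -- the square of `κ` compensates the monomial left over at the pair `(I, K)`
  have hκ2 : κ * κ * (y K * x I) ^ L = 1 := by
    rw [hκ, kappa_sq, ← mul_pow, mul_comm, hIK, one_pow]
  have hPD : (∏ j, ((a j * x I / x j) ^ L * κ)) * (∏ k, ((y k / b k * x I) ^ L * κ)) = D₁ * D₂ := by
    rw [p1, hbal]
    linear_combination (κ * D₁) * p2 + D₁ * D₂ * hκ2
  have hE : (∏ i ∈ univ.erase I, ∏ k, qsf q (y k * x i) N) *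
      (∏ k ∈ univ.erase K, qsf q (y k * x I) N) =
      (∏ k ∈ univ.erase K, ∏ i, qsf q (x i * y k) N) *
      (∏ i ∈ univ.erase I, qsf q (x i * y K) N) := by
    simp only [mul_comm (x _) (y _)]
    rw [Finset.prod_congr rfl fun i _ => (Finset.mul_prod_erase univ
      (fun k => qsf q (y k * x i) N) (Finset.mem_univ K)).symm, Finset.prod_mul_distrib,
      Finset.prod_congr (s₁ := univ.erase K) (s₂ := univ.erase K)
        (f := fun k => ∏ i, qsf q (y k * x i) N) rfl fun k _ => (Finset.mul_prod_erase univ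
      (fun i => qsf q (y k * x i) N) (Finset.mem_univ I)).symm, Finset.prod_mul_distrib,
      Finset.prod_comm (s := univ.erase I)]
    ring
  unfold cst
  rw [hE, r1, r2, r3, r4]
  congr 1
  generalize (∏ j, ((a j * x I / x j) ^ L * κ)) = P₁ at hPD ⊢
  generalize (∏ k, ((y k / b k * x I) ^ L * κ)) = P₂ at hPD ⊢
  rw [show ∀ s t u v : ℂ, P₁ * s * (P₂ * t) / (D₁ * u * (D₂ * v)) =
    (P₁ * P₂) * (t * s) / ((D₁ * D₂) * (v * u)) by intros; congr 1 <;> ring, hPD,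
    mul_div_mul_left _ _ (mul_ne_zero hD₁0 hD₂0)]

/-! ### Duality for generic parameters -/

/-- Strong genericity: the products `y_k x_i` are pairwise distinct modulo `q^ℤ`. -/
def Gen (q : ℂ) {m n : ℕ} (x : Fin m → ℂ) (y : Fin n → ℂ) : Prop :=
  ∀ i i' k k', (i ≠ i' ∨ k ≠ k') → ∀ d : ℤ, y k * x i ≠ q ^ d * (y k' * x i')

theorem Gen.symm {q : ℂ} {m n : ℕ} {x : Fin m → ℂ} {y : Fin n → ℂ} (h : Gen q x y) :
    Gen q y x := fun k k' i i' hne d => by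
  rw [mul_comm (x i), mul_comm (x i')]
  exact h i i' k k' hne.symm d

theorem Gen.left {q : ℂ} {m n : ℕ} {x : Fin m → ℂ} {y : Fin n → ℂ} (h : Gen q x y) (K : Fin n)
    (i j : Fin m) (hij : i ≠ j) (d : ℤ) : x i ≠ q ^ d * x j := fun e =>
  h i j K K (Or.inl hij) d (by rw [e]; ring)

theorem Gen.scale {q : ℂ} {m n : ℕ} {x : Fin m → ℂ} {y : Fin n → ℂ} (h : Gen q x y) {t : ℂ}
    (ht : t ≠ 0) : Gen q x (fun k => t * y k) := fun i i' k k' hne d e =>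
  h i i' k k' hne d (mul_left_cancel₀ ht (by linear_combination e))

theorem update_eq_pow_mul {q : ℂ} {m : ℕ} (x : Fin m → ℂ) (I : Fin m) (L : ℕ) (i : Fin m) :
    ∃ e : ℕ, Function.update x I (q ^ L * x I) i = q ^ e * x i := by
  by_cases h : i = I
  · subst h; exact ⟨L, by simp⟩
  · exact ⟨0, by simp [h]⟩

theorem Gen.update {q : ℂ} (hq0 : q ≠ 0) {m n : ℕ} {x : Fin m → ℂ} {y : Fin n → ℂ}
    (h : Gen q x y) (I : Fin m) (K : Fin n) (L : ℕ) :
    Gen q (Function.update x I (q ^ L * x I)) (Function.update y K (q ^ L * y K)) := by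
  intro i i' k k' hne d e
  obtain ⟨e1, h1⟩ := update_eq_pow_mul (q := q) x I L i
  obtain ⟨e2, h2⟩ := update_eq_pow_mul (q := q) x I L i'
  obtain ⟨e3, h3⟩ := update_eq_pow_mul (q := q) y K L k
  obtain ⟨e4, h4⟩ := update_eq_pow_mul (q := q) y K L k'
  refine h i i' k k' hne (d + e2 + e4 - e1 - e3) ?_
  rw [h1, h2, h3, h4] at e
  have n1 : q ^ e1 ≠ 0 := pow_ne_zero _ hq0
  have n3 : q ^ e3 ≠ 0 := pow_ne_zero _ hq0
  simp only [zpow_sub₀ hq0, zpow_add₀ hq0, zpow_natCast]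
  field_simp
  linear_combination e

theorem update_ne_zero {q : ℂ} (hq0 : q ≠ 0) {m : ℕ} {x : Fin m → ℂ} (hx : ∀ i, x i ≠ 0)
    (I : Fin m) (L : ℕ) (i : Fin m) : Function.update x I (q ^ L * x I) i ≠ 0 := by
  obtain ⟨e1, h1⟩ := update_eq_pow_mul (q := q) x I L i
  rw [h1]; exact mul_ne_zero (pow_ne_zero _ hq0) (hx i)

theorem prod_update_mul {q : ℂ} {m : ℕ} (x : Fin m → ℂ) (I : Fin m) (L : ℕ) :
    ∏ i, Function.update x I (q ^ L * x I) i = q ^ L * ∏ i, x i := by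
  rw [Finset.prod_update_of_mem (Finset.mem_univ I), Finset.sdiff_singleton_eq_erase,
    ← Finset.mul_prod_erase univ x (Finset.mem_univ I), mul_assoc]

/-- The coefficients of the linear factors `1 - c t` of the cleared summand with index `μ` after
scaling by `t` one of the two sets of variables. -/
noncomputable def linCoeff (q : ℂ) {m n : ℕ} (x : Fin m → ℂ) (b y : Fin n → ℂ) (N : ℕ)
    (μ : Fin m → ℕ) (σ : Fin m × Fin n × Fin N) : ℂ :=
  (if (σ.2.2 : ℕ) < μ σ.1 then y σ.2.1 / b σ.2.1 * x σ.1 else y σ.2.1 * x σ.1) * q ^ (σ.2.2 : ℕ)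

theorem prod_linCoeff_aux (q : ℂ) {m n : ℕ} (x : Fin m → ℂ) (b y : Fin n → ℂ) (N : ℕ)
    (μ : Fin m → ℕ) (t : ℂ) :
    ∏ i, ∏ k, clr q N (t * (y k * x i)) (t * (y k / b k * x i)) (μ i) =
      ∏ σ, (1 - linCoeff q x b y N μ σ * t) := by
  rw [Fintype.prod_prod_type]
  refine Finset.prod_congr rfl fun i _ => ?_
  rw [Fintype.prod_prod_type]
  refine Finset.prod_congr rfl fun k _ => ?_
  unfold clr linCoeff
  rw [← Fin.prod_univ_eq_prod_range
    (fun r => 1 - (if r < μ i then t * (y k / b k * x i) else t * (y k * x i)) * q ^ r)]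
  refine Finset.prod_congr rfl fun r _ => ?_
  dsimp only
  split_ifs <;> ring

theorem phiC_scale_right (q : ℂ) {m n : ℕ} (a x : Fin m → ℂ) (b y : Fin n → ℂ) (N : ℕ) (t : ℂ) :
    phiC q a x b (fun k => t * y k) N = ∑ μ ∈ Finset.Nat.antidiagonalTuple m N,
      wt q a x μ * ∏ σ, (1 - linCoeff q x b y N μ σ * t) := by
  unfold phiC
  refine Finset.sum_congr rfl fun μ _ => ?_
  rw [← prod_linCoeff_aux]
  congr 1
  refine Finset.prod_congr rfl fun i _ => Finset.prod_congr rfl fun k _ => ?_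
  congr 1 <;> ring

theorem wt_scale (q : ℂ) {m : ℕ} (a x : Fin m → ℂ) (μ : Fin m → ℕ) {t : ℂ} (ht : t ≠ 0) :
    wt q a (fun i => t * x i) μ = wt q a x μ := by
  unfold wt
  have h1 : ∀ c u v : ℂ, c * (t * u) / (t * v) = c * u / v := fun c u v => by
    rw [show c * (t * u) = t * (c * u) by ring, mul_div_mul_left _ _ ht]
  have h2 : ∀ c d u v : ℂ, (c * (t * u) - d * (t * v)) / (t * u - t * v) =
      (c * u - d * v) / (u - v) := fun c d u v => by
    rw [show c * (t * u) - d * (t * v) = t * (c * u - d * v) by ring, ← mul_sub,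
      mul_div_mul_left _ _ ht]
  simp only [h1, h2]

theorem phiC_scale_left (q : ℂ) {m n : ℕ} (a x : Fin m → ℂ) (b y : Fin n → ℂ) (N : ℕ) {t : ℂ}
    (ht : t ≠ 0) :
    phiC q a (fun i => t * x i) b y N = ∑ μ ∈ Finset.Nat.antidiagonalTuple m N,
      wt q a x μ * ∏ σ, (1 - linCoeff q x b y N μ σ * t) := by
  unfold phiC
  refine Finset.sum_congr rfl fun μ _ => ?_
  rw [← prod_linCoeff_aux, wt_scale q a x μ ht]
  congr 1
  refine Finset.prod_congr rfl fun i _ => Finset.prod_congr rfl fun k _ => ?_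
  congr 1 <;> ring

/-- The product of the coefficients does not depend on `μ`, since each `1 / b_k` occurs
`|μ| = N` times. -/
theorem prod_linCoeff (q : ℂ) {m n : ℕ} (x : Fin m → ℂ) (b y : Fin n → ℂ)
    {N : ℕ} {μ : Fin m → ℕ} (hμ : μ ∈ Finset.Nat.antidiagonalTuple m N) :
    ∏ σ, linCoeff q x b y N μ σ =
      ((∏ k, b k) ^ N)⁻¹ * ∏ σ : Fin m × Fin n × Fin N, y σ.2.1 * x σ.1 * q ^ (σ.2.2 : ℕ) := by
  have h1 : ∀ σ : Fin m × Fin n × Fin N, linCoeff q x b y N μ σ =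
      (if (σ.2.2 : ℕ) < μ σ.1 then (b σ.2.1)⁻¹ else 1) *
        (y σ.2.1 * x σ.1 * q ^ (σ.2.2 : ℕ)) := by
    intro σ
    unfold linCoeff
    split_ifs
    · rw [div_eq_mul_inv]; ring
    · ring
  simp only [h1, Finset.prod_mul_distrib]
  congr 1
  rw [Fintype.prod_prod_type]
  have h2 : ∀ i k, ∏ r : Fin N, (if (r : ℕ) < μ i then (b k)⁻¹ else 1) = (b k)⁻¹ ^ μ i := by
    intro i k
    rw [Fin.prod_univ_eq_prod_range (fun r => if r < μ i then (b k)⁻¹ else 1), ← Finset.prod_filter]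
    rw [Finset.prod_const]
    congr 1
    rw [show (Finset.range N).filter (fun r => r < μ i) = Finset.range (μ i) by
      ext r
      have := le_of_mem_tuple hμ i
      simp; omega, Finset.card_range]
  simp only [Fintype.prod_prod_type, h2]
  rw [Finset.prod_comm]
  simp only [Finset.prod_pow_eq_pow_sum, (Finset.Nat.mem_antidiagonalTuple).1 hμ]
  rw [Finset.prod_pow, Finset.prod_inv_distrib, inv_pow]

theorem phiC_zero {q : ℂ} {m n : ℕ} (a x : Fin m → ℂ) (b y : Fin n → ℂ)
    (hxx : ∀ i j, i ≠ j → x i ≠ x j) : phiC q a x b y 0 = 1 := by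
  unfold phiC wt clr qsf
  simp only [Finset.Nat.antidiagonalTuple_zero_right, Finset.sum_singleton, Pi.zero_apply,
    Finset.range_zero, Finset.prod_empty, Finset.prod_const_one, div_one, mul_one, pow_zero,
    one_mul]
  refine Finset.prod_eq_one fun i _ => Finset.prod_eq_one fun j hj => ?_
  exact div_self (sub_ne_zero.2 (hxx i j (Finset.mem_filter.1 hj).2.ne))

/-- The two cleared series agree at a node, provided duality holds for the shifted parameters in
order `N - (l + 1)`. -/
theorem node_agree {q : ℂ} (hq0 : q ≠ 0) (hq1 : ∀ k : ℕ, 0 < k → q ^ k ≠ 1) {m n : ℕ} {N : ℕ}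
    (a x : Fin m → ℂ) (b y : Fin n → ℂ) (ha : ∀ i, a i ≠ 0) (hb : ∀ k, b k ≠ 0)
    (hx : ∀ i, x i ≠ 0) (hy : ∀ k, y k ≠ 0) (hbal : (∏ i, a i) = ∏ k, b k) (hG : Gen q x y)
    (I : Fin m) (K : Fin n) {l : ℕ} (hl : l < N) (hIK : y K * x I * q ^ l = 1)
    (ih : phiC q (Function.update a I (q ^ (l + 1) * a I)) (Function.update x I (q ^ (l + 1) * x I))
        (Function.update b K (q ^ (l + 1) * b K)) (Function.update y K (q ^ (l + 1) * y K))
        (N - (l + 1)) =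
      phiC q (Function.update b K (q ^ (l + 1) * b K)) (Function.update y K (q ^ (l + 1) * y K))
        (Function.update a I (q ^ (l + 1) * a I)) (Function.update x I (q ^ (l + 1) * x I))
        (N - (l + 1))) :
    phiC q a x b y N = phiC q b y a x N := by
  have hqL : q ^ (l + 1) ≠ 0 := pow_ne_zero _ hq0
  -- away from `(I, K)` no product `y k * x i` is a power of `q`
  have hoff : ∀ i k, (i ≠ I ∨ k ≠ K) → ∀ d : ℤ, y k * x i ≠ q ^ d := by
    intro i k hne d h
    refine hG i I k K hne (d + l) ?_
    rw [h, zpow_add₀ hq0, zpow_natCast]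
    linear_combination (- q ^ d) * hIK
  have hden : ∀ i k, (i ≠ I ∨ k ≠ K) → qsf q (y k * x i) N ≠ 0 := by
    intro i k hne
    refine qsf_ne_zero fun r _ h => hoff i k hne (-r) ?_
    rw [zpow_neg, zpow_natCast]
    exact eq_inv_of_mul_eq_one_left h
  rw [node hq0 hq1 a x b y hx (hG.left K) hl I K hIK hden,
    node hq0 hq1 b y a x hy (hG.symm.left I) hl K I (by rw [mul_comm (x I)]; exact hIK)
      (fun k i h => by rw [mul_comm]; exact hden i k h.symm),
    cst_symm hq0 a x b y ha hb hx hy hbal N l I K hIK]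
  congr 1
  have hden' : ∀ i k, qsf q (Function.update y K (q ^ (l + 1) * y K) k *
      Function.update x I (q ^ (l + 1) * x I) i) (N - (l + 1)) ≠ 0 := by
    intro i k
    refine qsf_ne_zero fun r _ h => ?_
    by_cases hne : i ≠ I ∨ k ≠ K
    · obtain ⟨e1, h1⟩ := update_eq_pow_mul (q := q) x I (l + 1) i
      obtain ⟨e2, h2⟩ := update_eq_pow_mul (q := q) y K (l + 1) k
      rw [h1, h2] at h
      refine hoff i k hne (-(e1 + e2 + r : ℕ)) ?_
      rw [zpow_neg, zpow_natCast]
      refine eq_inv_of_mul_eq_one_left ?_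
      rw [← h, pow_add, pow_add]; ring
    · push Not at hne
      obtain ⟨rfl, rfl⟩ := hne
      simp only [Function.update_self] at h
      refine hq1 (l + 2 + r) (by omega) ?_
      rw [← h]
      have e : q ^ (l + 2 + r) = q ^ l * q ^ 2 * q ^ r := by rw [pow_add, pow_add]
      have e' : q ^ (l + 1) = q ^ l * q := pow_succ _ _
      rw [e, e']
      linear_combination (- q ^ l * q ^ 2 * q ^ r) * hIK
  have hv : ∀ {n : ℕ} (b y : Fin n → ℂ) (K : Fin n), (fun k => y k / b k) =
      fun k => Function.update y K (q ^ (l + 1) * y K) k /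
        Function.update b K (q ^ (l + 1) * b K) k := by
    intro n b y K
    ext k
    by_cases h : k = K
    · subst h
      simp only [Function.update_self]
      rw [mul_div_mul_left _ _ hqL]
    · simp only [Function.update_of_ne h]
  have hcomm : ∏ k, ∏ i, qsf q (Function.update x I (q ^ (l + 1) * x I) i *
      Function.update y K (q ^ (l + 1) * y K) k) (N - (l + 1)) =
      ∏ i, ∏ k, qsf q (Function.update y K (q ^ (l + 1) * y K) k *
        Function.update x I (q ^ (l + 1) * x I) i) (N - (l + 1)) := by
    rw [Finset.prod_comm]
    simp only [mul_comm]
  rw [phiC_eq _ _ _ _ _ _ hden', phiC_eq _ _ _ _ _ _ (fun k i => by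
    rw [mul_comm]; exact hden' i k), hcomm] at ih
  rw [hv b y K, hv a x I]
  exact mul_left_cancel₀
    (Finset.prod_ne_zero_iff.2 fun i _ => Finset.prod_ne_zero_iff.2 fun k _ => hden' i k) ih

/-- Duality for the cleared series under strong genericity, by induction on `N`. With `y` scaled by
`t`, both sides are polynomials in `t` to which `liouville` applies, with nodes `1 / (y_k x_i q^r)`
for `r < N` and `lam = (∏ a)^(-N)`. The hypothesis on `∏ a` is stable under the shifts by powers of `q`
that the induction uses. -/
theorem generic_duality {q : ℂ} (hq0 : q ≠ 0) (hq1 : ∀ k : ℕ, 0 < k → q ^ k ≠ 1) {m n : ℕ} (N : ℕ) :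
    ∀ (a x : Fin m → ℂ) (b y : Fin n → ℂ), (∀ i, a i ≠ 0) → (∀ k, b k ≠ 0) → (∀ i, x i ≠ 0) →
    (∀ k, y k ≠ 0) → (∏ i, a i) = ∏ k, b k → (∀ k : ℕ, 0 < k → ∀ d : ℤ, (∏ i, a i) ^ k ≠ q ^ d) →
    Gen q x y → phiC q a x b y N = phiC q b y a x N := by
  induction N using Nat.strong_induction_on with
  | _ N ih =>
  intro a x b y ha hb hx hy hbal hA hG
  have hm : Nonempty (Fin m) := by
    by_contra h
    rw [not_nonempty_iff] at h
    exact hA 1 one_pos 0 (by simp)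
  have hn : Nonempty (Fin n) := by
    by_contra h
    rw [not_nonempty_iff] at h
    exact hA 1 one_pos 0 (by rw [hbal]; simp)
  obtain ⟨I₀⟩ := hm
  obtain ⟨K₀⟩ := hn
  rcases Nat.eq_zero_or_pos N with rfl | hN
  · rw [phiC_zero, phiC_zero]
    · intro i j h; simpa using hG.symm.left I₀ i j h 0
    · intro i j h; simpa using hG.left K₀ i j h 0
  have hsw : ∀ f : Fin n × Fin m × Fin N → ℂ,
      ∏ σ : Fin m × Fin n × Fin N, f (σ.2.1, σ.1, σ.2.2) = ∏ σ, f σ := by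
    intro f
    simp only [Fintype.prod_prod_type]
    exact Finset.prod_comm
  suffices h : ∑ μ ∈ Finset.Nat.antidiagonalTuple m N,
      wt q a x μ * ∏ σ, (1 - linCoeff q x b y N μ σ) =
      ∑ ν ∈ Finset.Nat.antidiagonalTuple n N, wt q b y ν *
        ∏ σ : Fin m × Fin n × Fin N, (1 - linCoeff q y a x N ν (σ.2.1, σ.1, σ.2.2)) by
    have h1 := phiC_scale_right q a x b y N 1
    have h2 := phiC_scale_left q b y a x N one_ne_zero
    simp only [one_mul, mul_one] at h1 h2
    rw [h1, h2, h]
    refine Finset.sum_congr rfl fun ν _ => ?_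
    rw [hsw (fun σ => 1 - linCoeff q y a x N ν σ)]
  refine liouville _ _ _ _ _ _ (fun σ : Fin m × Fin n × Fin N =>
    y σ.2.1 * x σ.1 * q ^ (σ.2.2 : ℕ)) (((∏ i, a i) ^ N)⁻¹) ?_ ?_ ?_ ?_ ?_ ?_
  · rintro ⟨i, k, r⟩ ⟨i', k', r'⟩ h
    dsimp only at h
    by_cases hne : i ≠ i' ∨ k ≠ k'
    · refine absurd ?_ (hG i i' k k' hne ((r' : ℕ) - (r : ℕ)))
      rw [zpow_sub₀ hq0, zpow_natCast, zpow_natCast]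
      have := pow_ne_zero (r : ℕ) hq0
      field_simp
      linear_combination h
    · push Not at hne
      obtain ⟨rfl, rfl⟩ := hne
      have h' : q ^ (r : ℕ) = q ^ (r' : ℕ) := mul_left_cancel₀ (mul_ne_zero (hy k) (hx i)) h
      have hrr : (r : ℕ) = r' := by
        rcases lt_trichotomy (r : ℕ) (r' : ℕ) with hlt | heq | hlt
        · refine absurd (mul_left_cancel₀ (pow_ne_zero (r : ℕ) hq0) ?_)
            (hq1 ((r' : ℕ) - r) (by omega))
          rw [← pow_add, mul_one, h']; congr 1; omega
        · exact heq
        · refine absurd (mul_left_cancel₀ (pow_ne_zero (r' : ℕ) hq0) ?_)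
            (hq1 ((r : ℕ) - r') (by omega))
          rw [← pow_add, mul_one, ← h']; congr 1; omega
      rw [Fin.ext hrr]
  · exact fun σ => mul_ne_zero (mul_ne_zero (hy _) (hx _)) (pow_ne_zero _ hq0)
  · rw [ne_eq, inv_eq_one]
    simpa using hA N hN 0
  · intro μ hμ
    rw [prod_linCoeff q x b y hμ, hbal]
  · intro ν hν
    rw [hsw (fun σ => linCoeff q y a x N ν σ), prod_linCoeff q y a x hν,
      ← hsw (fun σ => x σ.2.1 * y σ.1 * q ^ (σ.2.2 : ℕ))]
    simp only [mul_comm (x _) (y _)]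
  · rintro ⟨I, K, r⟩
    dsimp only
    set t : ℂ := (y K * x I * q ^ (r : ℕ))⁻¹ with ht
    have hd0 : y K * x I * q ^ (r : ℕ) ≠ 0 :=
      mul_ne_zero (mul_ne_zero (hy _) (hx _)) (pow_ne_zero _ hq0)
    have ht0 : t ≠ 0 := inv_ne_zero hd0
    have hsum : ∀ ν, ∏ σ : Fin m × Fin n × Fin N,
        (1 - linCoeff q y a x N ν (σ.2.1, σ.1, σ.2.2) * t) =
        ∏ σ, (1 - linCoeff q y a x N ν σ * t) :=
      fun ν => hsw (fun σ => 1 - linCoeff q y a x N ν σ * t)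
    simp only [hsum]
    rw [← phiC_scale_right, ← phiC_scale_left q b y a x N ht0]
    have hy' : ∀ k, t * y k ≠ 0 := fun k => mul_ne_zero ht0 (hy k)
    have hIK : t * y K * x I * q ^ (r : ℕ) = 1 := by
      rw [mul_assoc, mul_assoc, ← mul_assoc (y K)]
      exact inv_mul_cancel₀ hd0
    refine node_agree hq0 hq1 a x b (fun k => t * y k) ha hb hx hy' hbal (hG.scale ht0) I K r.2
      hIK ?_
    refine ih _ (by omega) _ _ _ _ (update_ne_zero hq0 ha I _) (update_ne_zero hq0 hb K _)
      (update_ne_zero hq0 hx I _) (update_ne_zero hq0 hy' K _) ?_ ?_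
      ((hG.scale ht0).update hq0 I K _)
    · rw [prod_update_mul, prod_update_mul, hbal]
    · intro k hk d h
      rw [prod_update_mul, mul_pow] at h
      refine hA k hk (d - (((r : ℕ) + 1) * k : ℕ)) ?_
      rw [zpow_sub₀ hq0, zpow_natCast, pow_mul, ← h, mul_div_cancel_left₀]
      exact pow_ne_zero _ (pow_ne_zero _ hq0)

/-! ### Removal of the genericity assumptions -/
theorem continuous_qsf (q : ℂ) (k : ℕ) : Continuous fun z => qsf q z k := by
  unfold qsf
  fun_prop

theorem continuousAt_phiB (q : ℂ) {m n N : ℕ} {a x : ℂ → Fin m → ℂ} {b c : ℂ → Fin n → ℂ} {s₀ : ℂ}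
    (ha : ∀ i, ContinuousAt (fun s => a s i) s₀) (hx : ∀ i, ContinuousAt (fun s => x s i) s₀)
    (hb : ∀ k, ContinuousAt (fun s => b s k) s₀) (hc : ∀ k, ContinuousAt (fun s => c s k) s₀)
    (hx0 : ∀ i, x s₀ i ≠ 0) (hxx : ∀ i j, i ≠ j → x s₀ i ≠ x s₀ j)
    (hgx : ∀ (i j : Fin m) (l : ℕ), l < N → q * x s₀ i / x s₀ j * q ^ l ≠ 1)
    (hgc : ∀ (i : Fin m) (k : Fin n) (l : ℕ), l < N → c s₀ k * x s₀ i * q ^ l ≠ 1) :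
    ContinuousAt (fun s => phiB q (a s) (x s) (b s) (c s) N) s₀ := by
  have hq : ∀ (f : ℂ → ℂ) (k : ℕ), ContinuousAt f s₀ → ContinuousAt (fun s => qsf q (f s) k) s₀ :=
    fun f k hf => (continuous_qsf q k).continuousAt.comp hf
  unfold phiB
  refine tendsto_finsetSum _ fun μ hμ => ?_
  have hle := le_of_mem_tuple hμ
  refine ContinuousAt.mul (ContinuousAt.mul ?_ ?_) ?_
  · refine tendsto_finsetProd _ fun i _ => tendsto_finsetProd _ fun j hj => ?_
    refine ContinuousAt.div ?_ ?_ ?_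
    · exact (continuousAt_const.mul (hx i)).sub (continuousAt_const.mul (hx j))
    · exact (hx i).sub (hx j)
    · exact sub_ne_zero.2 (hxx i j (Finset.mem_filter.1 hj).2.ne)
  · refine tendsto_finsetProd _ fun i _ => tendsto_finsetProd _ fun j _ => ?_
    refine ContinuousAt.div (hq _ _ ?_) (hq _ _ ?_) ?_
    · exact ((ha j).mul (hx i)).div (hx j) (hx0 j)
    · exact (continuousAt_const.mul (hx i)).div (hx j) (hx0 j)
    · exact qsf_ne_zero fun l hl => hgx i j l (hl.trans_le (hle i))
  · refine tendsto_finsetProd _ fun i _ => tendsto_finsetProd _ fun k _ => ?_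
    refine ContinuousAt.div (hq _ _ ?_) (hq _ _ ?_) ?_
    · exact (hb k).mul (hx i)
    · exact (hc k).mul (hx i)
    · exact qsf_ne_zero fun l hl => hgc i k l (hl.trans_le (hle i))

theorem countable_bad (c c' : ℂ) (hc : c ≠ 0) {e e' : ℕ} (he : e ≠ e') :
    {s : ℂ | c * s ^ e = c' * s ^ e'}.Countable := by
  have hp : (Polynomial.C c * Polynomial.X ^ e - Polynomial.C c' * Polynomial.X ^ e' :
      Polynomial ℂ) ≠ 0 := by
    intro h
    have := congrArg (fun p => p.coeff e) h
    simp [Polynomial.coeff_X_pow, he] at this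
    exact hc this
  refine ((Polynomial.finite_setOfPred_isRoot hp).subset ?_).countable
  intro s hs
  simp only [Set.mem_ofPred_eq] at hs
  simp [Polynomial.IsRoot, hs]

theorem exponent_inj {m : ℕ} {i i' k k' : ℕ} (hi : i < m) (hi' : i' < m)
    (h : m * k + (i + 1) = m * k' + (i' + 1)) : i = i' ∧ k = k' := by
  have h' : i + m * k = i' + m * k' := by omega
  have h1 := congrArg (· % m) h'
  have h2 := congrArg (· / m) h'
  simp only [Nat.add_mul_mod_self_left, Nat.mod_eq_of_lt hi, Nat.mod_eq_of_lt hi'] at h1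
  simp only [Nat.add_mul_div_left _ _ (Nat.zero_lt_of_lt hi), Nat.div_eq_of_lt hi,
    Nat.div_eq_of_lt hi', zero_add] at h2
  exact ⟨h1, h2⟩

/-- Duality for `m, n ≥ 1`. Both sides are continuous at `s = 1` along the deformation
`a_i s^n, x_i s^(i+1), b_k s^m, y_k s^(mk)`, which preserves the balancing condition and is strongly
generic outside a countable set of `s`, because the exponents `mk + i + 1` of the products
`y_k x_i` are pairwise distinct. -/
theorem duality_pos (q : ℂ) (hq0 : q ≠ 0)
    (hq1 : ∀ k : ℕ, 0 < k → q ^ k ≠ 1)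
    (m n N : ℕ) (hm : 0 < m) (hn : 0 < n) (a x : Fin m → ℂ) (b y : Fin n → ℂ)
    (ha : ∀ i, a i ≠ 0) (hb : ∀ k, b k ≠ 0) (hx : ∀ i, x i ≠ 0) (hy : ∀ k, y k ≠ 0)
    (hbal : (∏ i, a i) = ∏ k, b k)
    (hxx : ∀ i j, i ≠ j → x i ≠ x j) (hyy : ∀ k l, k ≠ l → y k ≠ y l)
    (hgx : ∀ (i j : Fin m) (l : ℕ), l < N → q * x i / x j * q ^ l ≠ 1)
    (hgy : ∀ (k k' : Fin n) (l : ℕ), l < N → q * y k / y k' * q ^ l ≠ 1)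
    (hgxy : ∀ (i : Fin m) (k : Fin n) (l : ℕ), l < N → y k * x i * q ^ l ≠ 1) :
    phiB q a x (fun k => y k / b k) y N = phiB q b y (fun i => x i / a i) x N := by
  let A : ℂ → Fin m → ℂ := fun s i => a i * s ^ n
  let B : ℂ → Fin n → ℂ := fun s k => b k * s ^ m
  let X : ℂ → Fin m → ℂ := fun s i => x i * s ^ ((i : ℕ) + 1)
  let Y : ℂ → Fin n → ℂ := fun s k => y k * s ^ (m * (k : ℕ))
  have hA1 : A 1 = a := by ext i; simp [A]
  have hB1 : B 1 = b := by ext i; simp [B]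
  have hX1 : X 1 = x := by ext i; simp [X]
  have hY1 : Y 1 = y := by ext i; simp [Y]
  have cA : ∀ i, ContinuousAt (fun s => A s i) 1 := fun i => by simp only [A]; fun_prop
  have cB : ∀ i, ContinuousAt (fun s => B s i) 1 := fun i => by simp only [B]; fun_prop
  have cX : ∀ i, ContinuousAt (fun s => X s i) 1 := fun i => by simp only [X]; fun_prop
  have cY : ∀ i, ContinuousAt (fun s => Y s i) 1 := fun i => by simp only [Y]; fun_prop
  have hf : ContinuousAt (fun s => phiB q (A s) (X s) (fun k => Y s k / B s k) (Y s) N) 1 := by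
    refine continuousAt_phiB q cA cX (fun k => (cY k).div (cB k) ?_) cY ?_ ?_ ?_ ?_
    · rw [hB1]; exact hb k
    · rwa [hX1]
    · rwa [hX1]
    · rwa [hX1]
    · rwa [hX1, hY1]
  have hg : ContinuousAt (fun s => phiB q (B s) (Y s) (fun i => X s i / A s i) (X s) N) 1 := by
    refine continuousAt_phiB q cB cY (fun k => (cX k).div (cA k) ?_) cX ?_ ?_ ?_ ?_
    · rw [hA1]; exact ha k
    · rwa [hY1]
    · rwa [hY1]
    · rwa [hY1]
    · rw [hX1, hY1]
      intro k i l hl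
      rw [mul_comm (x i)]; exact hgxy i k l hl
  -- the countable set of exceptional parameters
  let bad : Set ℂ := ({0} ∪
    (⋃ (p : ℕ) (d : ℤ), {s : ℂ | (∏ i, a i) ^ (p + 1) * s ^ (n * m * (p + 1)) = q ^ d * s ^ 0}) ∪
    (⋃ (i : Fin m) (k : Fin n) (d : ℤ),
      {s : ℂ | y k * x i * s ^ (m * (k : ℕ) + ((i : ℕ) + 1)) = q ^ d * s ^ 0})) ∪
    (⋃ (i : Fin m) (i' : Fin m) (k : Fin n) (k' : Fin n) (_ : i ≠ i' ∨ k ≠ k') (d : ℤ),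
      {s : ℂ | y k * x i * s ^ (m * (k : ℕ) + ((i : ℕ) + 1)) =
        q ^ d * (y k' * x i') * s ^ (m * (k' : ℕ) + ((i' : ℕ) + 1))})
  have hbad : bad.Countable := by
    refine ((((Set.countable_singleton _).union ?_).union ?_).union ?_)
    · refine Set.countable_iUnion fun p => Set.countable_iUnion fun d => countable_bad _ _ ?_ ?_
      · exact pow_ne_zero _ (Finset.prod_ne_zero_iff.2 fun i _ => ha i)
      · positivity
    · refine Set.countable_iUnion fun i => Set.countable_iUnion fun k =>
        Set.countable_iUnion fun d => countable_bad _ _ (mul_ne_zero (hy k) (hx i)) (by omega)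
    · refine Set.countable_iUnion fun i => Set.countable_iUnion fun i' =>
        Set.countable_iUnion fun k => Set.countable_iUnion fun k' =>
        Set.countable_iUnion fun hne => Set.countable_iUnion fun d =>
        countable_bad _ _ (mul_ne_zero (hy k) (hx i)) fun h => ?_
      obtain ⟨h1, h2⟩ := exponent_inj i.2 i'.2 h
      rcases hne with hne | hne
      · exact hne (Fin.ext h1)
      · exact hne (Fin.ext h2)
  have hgood : ∀ s ∈ badᶜ, phiB q (A s) (X s) (fun k => Y s k / B s k) (Y s) N =
      phiB q (B s) (Y s) (fun i => X s i / A s i) (X s) N := by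
    intro s hs
    simp only [bad, Set.mem_compl_iff, Set.mem_union, Set.mem_iUnion, Set.mem_ofPred_eq, not_or,
      not_exists, Set.mem_singleton_iff, pow_zero, mul_one] at hs
    obtain ⟨⟨⟨hs0, hs1⟩, hs2⟩, hs3⟩ := hs
    have hYX : ∀ i k, Y s k * X s i = y k * x i * s ^ (m * (k : ℕ) + ((i : ℕ) + 1)) := by
      intro i k; simp only [X, Y]; rw [pow_add _ (m * (k : ℕ))]; ring
    have hden : ∀ i k, qsf q (Y s k * X s i) N ≠ 0 := by
      intro i k
      refine qsf_ne_zero fun r _ h => hs2 i k (-r) ?_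
      rw [zpow_neg, zpow_natCast, ← hYX]
      exact eq_inv_of_mul_eq_one_left h
    have hpA : ∏ i, A s i = (∏ i, a i) * s ^ (n * m) := by
      simp only [A, Finset.prod_mul_distrib, Finset.prod_const, Finset.card_univ, Fintype.card_fin,
        ← pow_mul]
    have hpB : ∏ k, B s k = (∏ k, b k) * s ^ (n * m) := by
      simp only [B, Finset.prod_mul_distrib, Finset.prod_const, Finset.card_univ, Fintype.card_fin,
        ← pow_mul, mul_comm]
    have key := generic_duality hq0 hq1 N (A s) (X s) (B s) (Y s)
      (fun i => mul_ne_zero (ha i) (pow_ne_zero _ hs0))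
      (fun i => mul_ne_zero (hb i) (pow_ne_zero _ hs0))
      (fun i => mul_ne_zero (hx i) (pow_ne_zero _ hs0))
      (fun i => mul_ne_zero (hy i) (pow_ne_zero _ hs0))
      (by rw [hpA, hpB, hbal])
      (by
        intro k hk d h
        refine hs1 (k - 1) d ?_
        rw [Nat.sub_add_cancel hk, ← h, hpA, mul_pow, ← pow_mul])
      (by
        intro i i' k k' hne d h
        rw [hYX, hYX] at h
        exact hs3 i i' k k' hne d (by rw [h]; ring))
    rw [phiC_eq _ _ _ _ _ _ hden, phiC_eq _ _ _ _ _ _ (fun k i => by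
      rw [mul_comm]; exact hden i k)] at key
    have hcomm : ∏ k, ∏ i, qsf q (X s i * Y s k) N = ∏ i, ∏ k, qsf q (Y s k * X s i) N := by
      rw [Finset.prod_comm]
      simp only [mul_comm]
    rw [hcomm] at key
    exact mul_left_cancel₀
      (Finset.prod_ne_zero_iff.2 fun i _ => Finset.prod_ne_zero_iff.2 fun k _ => hden i k) key
  -- the complement of a countable set is dense, so `1` is a limit of good parameters
  have hfreq := mem_closure_iff_frequently.1 ((hbad.dense_compl ℝ) (1 : ℂ))
  have := tendsto_nhds_unique_of_frequently_eq hf hg (hfreq.mono hgood)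
  simpa only [hA1, hB1, hX1, hY1] using this

theorem phiB_fin_zero (q : ℂ) {n : ℕ} (a x : Fin 0 → ℂ) (b c : Fin n → ℂ) {N : ℕ} (hN : 0 < N) :
    phiB q a x b c N = 0 := by
  obtain ⟨M, rfl⟩ := Nat.exists_eq_succ_of_ne_zero hN.ne'
  simp [phiB]

/-- The case `n = 0` of the duality. Adjoining one variable `y = t` with `b = 1` does not change the
series, and the dual series then vanishes since it contains the factor `(1;q)_N`. -/
theorem phiB_balanced_zero (q : ℂ) (hq0 : q ≠ 0)
    (hq1 : ∀ k : ℕ, 0 < k → q ^ k ≠ 1)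
    (m N : ℕ) (hm : 0 < m) (hN : 0 < N) (a x : Fin m → ℂ) (b c : Fin 0 → ℂ)
    (ha : ∀ i, a i ≠ 0) (hx : ∀ i, x i ≠ 0) (hbal : (∏ i, a i) = 1)
    (hxx : ∀ i j, i ≠ j → x i ≠ x j)
    (hgx : ∀ (i j : Fin m) (l : ℕ), l < N → q * x i / x j * q ^ l ≠ 1) :
    phiB q a x b c N = 0 := by
  obtain ⟨t, ht⟩ : ∃ t : ℂ, t ∉ ({0} ∪ ⋃ (i : Fin m) (l : ℕ), {(x i * q ^ l)⁻¹} : Set ℂ) := by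
    have hc : ({0} ∪ ⋃ (i : Fin m) (l : ℕ), {(x i * q ^ l)⁻¹} : Set ℂ).Countable :=
      (Set.countable_singleton _).union (Set.countable_iUnion fun i =>
        Set.countable_iUnion fun l => Set.countable_singleton _)
    exact (hc.dense_compl ℝ).nonempty
  simp only [Set.mem_union, Set.mem_iUnion, Set.mem_singleton_iff, not_or, not_exists] at ht
  obtain ⟨ht0, ht1⟩ := ht
  have hd : ∀ (i : Fin m) (l : ℕ), t * x i * q ^ l ≠ 1 := fun i l h =>
    ht1 i l (eq_inv_of_mul_eq_one_left (by rw [← h]; ring))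
  have h := duality_pos q hq0 hq1 m 1 N hm one_pos a x (fun _ => 1) (fun _ => t) ha
    (fun _ => one_ne_zero) hx (fun _ => ht0) (by simpa using hbal) hxx
    (fun k l h => absurd (Subsingleton.elim k l) h) hgx
    (fun _ _ l _ => by
      rw [mul_div_assoc, div_self ht0, mul_one, ← pow_succ']; exact hq1 _ (Nat.succ_pos l))
    (fun i _ l _ => hd i l)
  have hl : phiB q a x (fun _ : Fin 1 => t / 1) (fun _ => t) N = phiB q a x b c N := by
    unfold phiB
    refine Finset.sum_congr rfl fun μ _ => ?_
    congr 1
    refine Finset.prod_congr rfl fun i _ => ?_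
    simp only [div_one, Finset.univ_unique, Finset.prod_singleton, Finset.univ_eq_empty,
      Finset.prod_empty]
    exact div_self (qsf_ne_zero fun l _ => hd i l)
  rw [← hl, h]
  unfold phiB
  refine Finset.sum_eq_zero fun μ hμ => ?_
  have hμ0 : μ 0 = N := by
    have := (Finset.Nat.mem_antidiagonalTuple).1 hμ
    simpa using this
  have h0 : qsf q (1 * t / t) N = 0 := by
    unfold qsf
    refine Finset.prod_eq_zero (Finset.mem_range.2 hN) ?_
    rw [one_mul, div_self ht0]; simp
  have hrow : (∏ i, ∏ _j : Fin 1, qsf q (1 * t / t) (μ i) / qsf q (q * t / t) (μ i)) = 0 := by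
    refine Finset.prod_eq_zero (Finset.mem_univ 0) (Finset.prod_eq_zero (Finset.mem_univ 0) ?_)
    rw [hμ0, h0, zero_div]
  rw [hrow, mul_zero, zero_mul]

theorem phiB_zero (q : ℂ) {m n : ℕ} (a x : Fin m → ℂ) (b c : Fin n → ℂ)
    (hxx : ∀ i j, i ≠ j → x i ≠ x j) : phiB q a x b c 0 = 1 := by
  have h := phiC_zero (q := q) a x (fun _ : Fin 0 => (1 : ℂ)) (fun _ => 1) hxx
  rw [← h]
  unfold phiB phiC wt clr
  simp [Finset.Nat.antidiagonalTuple_zero_right, qsf]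

/-- Duality transformation for multiple basic hypergeometric series (identity (2.26)):
under the balancing condition `a_1 ⋯ a_m = b_1 ⋯ b_n`,
`φ^{m,n}_N(a;x|y/b;y) = φ^{n,m}_N(b;y|x/a;x)`. -/
theorem duality_basic_hypergeometric (q : ℂ) (hq0 : q ≠ 0)
    (hq1 : ∀ k : ℕ, 0 < k → q ^ k ≠ 1)
    (m n N : ℕ) (a x : Fin m → ℂ) (b y : Fin n → ℂ)
    (ha : ∀ i, a i ≠ 0) (hb : ∀ k, b k ≠ 0) (hx : ∀ i, x i ≠ 0) (hy : ∀ k, y k ≠ 0)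
    (hbal : (∏ i, a i) = ∏ k, b k)
    (hxx : ∀ i j, i ≠ j → x i ≠ x j) (hyy : ∀ k l, k ≠ l → y k ≠ y l)
    (hgx : ∀ (i j : Fin m) (l : ℕ), l < N → q * x i / x j * q ^ l ≠ 1)
    (hgy : ∀ (k k' : Fin n) (l : ℕ), l < N → q * y k / y k' * q ^ l ≠ 1)
    (hgxy : ∀ (i : Fin m) (k : Fin n) (l : ℕ), l < N → y k * x i * q ^ l ≠ 1) :
    phiB q a x (fun k => y k / b k) y N = phiB q b y (fun i => x i / a i) x N := by
  rcases Nat.eq_zero_or_pos N with rfl | hN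
  · rw [phiB_zero q a x _ _ hxx, phiB_zero q b y _ _ hyy]
  rcases Nat.eq_zero_or_pos m with rfl | hm
  · rw [phiB_fin_zero q _ _ _ _ hN]
    rcases Nat.eq_zero_or_pos n with rfl | hn
    · rw [phiB_fin_zero q _ _ _ _ hN]
    · exact (phiB_balanced_zero q hq0 hq1 n N hn hN b y _ _ hb hy (by rw [← hbal]; simp)
        hyy hgy).symm
  · rcases Nat.eq_zero_or_pos n with rfl | hn
    · rw [phiB_fin_zero q b y _ _ hN]
      exact phiB_balanced_zero q hq0 hq1 m N hm hN a x _ _ ha hx (by rw [hbal]; simp) hxx hgx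
    · exact duality_pos q hq0 hq1 m n N hm hn a x b y ha hb hx hy hbal hxx hyy hgx hgy hgxy
end

section
/- For generic parameters (all brackets appearing in denominators are nonzero) and every N ∈ ℕ, the series Φ^{1+m,n}_N is expressed through E^{m,n+1} as follows: Φ^{1+m,n}_N(a_0, a_1,…,a_m; x_0, x_1,…,x_m | b_1,…,b_n; c_1,…,c_n) = ([a_0]_N/[δ]_N) · ∏_{i=1}^m [x_0 − x_i + a_i]_N/[x_0 − x_i]_N · ∏_{k=1}^n [x_0 + b_k]_N/[x_0 + c_k]_N · E^{m,n+1}( a_1,…,a_m; x_1,…,x_m | −Nδ − x_0; (a_0 − x_0, b_1,…,b_n); (−Nδ, (1−N)δ − x_0 − c_1, …, (1−N)δ − x_0 − c_n) ). -/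
/-!
The identity holds term by term. Writing a multi-index of `Φ^{1+m,n}_N` as `(N - M, ν)` with
`M = |ν| ≤ N`, the series over such multi-indices becomes a series over `ν ∈ ℕ^m`, and the factors
`[y]_{N-M}` coming from the zeroth variable are rewritten by the reversal formula
`[y]_N = (-1)^M [y]_{N-M} [(1-N)δ - y]_M` (`sf_reversal`). The signs cancel in quotients
(`sf_ratio`), and what remains is precisely the prefactor times the `ν`-th summand of `E^{m,n+1}`.
For `M > N` that summand vanishes because of its factor `[-Nδ]_M`.
-/

open Finset

lemma sf_ne_zero (f : ℂ → ℂ) (δ y : ℂ) {N M : ℕ} (hM : M ≤ N)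
    (h : ∀ l : ℕ, l < N → f (y + (l : ℂ) * δ) ≠ 0) : sf f δ y M ≠ 0 :=
  Finset.prod_ne_zero_iff.2 fun l hl => h l ((Finset.mem_range.1 hl).trans_le hM)

lemma sf_reversal (f : ℂ → ℂ) (hodd : ∀ t : ℂ, f (-t) = -f t) (δ y : ℂ) (K M : ℕ) :
    sf f δ y (K + M)
      = (-1) ^ M * sf f δ y K * sf f δ ((1 - ((K + M : ℕ) : ℂ)) * δ - y) M := by
  have key : ∏ i ∈ Finset.range M, f (y + ((K + i : ℕ) : ℂ) * δ)
      = (-1) ^ M * sf f δ ((1 - ((K + M : ℕ) : ℂ)) * δ - y) M := by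
    rw [← Finset.prod_range_reflect]
    unfold sf
    rw [← Finset.card_range M, ← Finset.prod_const, Finset.card_range,
      ← Finset.prod_mul_distrib]
    refine Finset.prod_congr rfl fun i hi => ?_
    have hi' := Finset.mem_range.1 hi
    rw [neg_one_mul, ← hodd]
    congr 1
    have : ((M - 1 - i : ℕ) : ℂ) = M - 1 - i := by
      rw [Nat.sub_sub, Nat.cast_sub (by omega)]; push_cast; ring
    push_cast
    rw [this]
    ring
  unfold sf at key ⊢
  rw [Finset.prod_range_add, key]
  ring

/-- Reversal of a quotient of shifted factorials; the signs cancel. -/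
lemma sf_ratio (f : ℂ → ℂ) (hodd : ∀ t : ℂ, f (-t) = -f t) (δ y z y' z' : ℂ) (K M N : ℕ)
    (hN : N = K + M) (hy' : y' = (1 - (N : ℂ)) * δ - y) (hz' : z' = (1 - (N : ℂ)) * δ - z)
    (hy : sf f δ y' M ≠ 0) (hz : sf f δ z N ≠ 0) :
    sf f δ y K / sf f δ z K
      = sf f δ y N / sf f δ z N * (sf f δ z' M / sf f δ y' M) := by
  subst hN hy' hz'
  rw [sf_reversal f hodd δ z] at hz ⊢
  rw [sf_reversal f hodd δ y]
  have h1 : sf f δ z K ≠ 0 := fun h => hz (by rw [h]; ring)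
  have h2 : sf f δ ((1 - ((K + M : ℕ) : ℂ)) * δ - z) M ≠ 0 := fun h => hz (by rw [h]; ring)
  have h3 : ((-1 : ℂ)) ^ M ≠ 0 := pow_ne_zero _ (by norm_num)
  field_simp

lemma sf_shift (f : ℂ → ℂ) (δ y : ℂ) (N : ℕ) :
    sf f δ (y + δ) N * f y = sf f δ y N * f (y + (N : ℂ) * δ) := by
  unfold sf
  rw [← Finset.prod_range_succ (fun i : ℕ => f (y + (i : ℂ) * δ)), Finset.prod_range_succ']
  congr 1
  · refine Finset.prod_congr rfl fun i _ => ?_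
    congr 1
    push_cast
    ring
  · simp

lemma Del_succ (f : ℂ → ℂ) {m : ℕ} (x : Fin (m + 1) → ℂ) :
    Del f x = (∏ i : Fin m, f (x 0 - x i.succ)) * Del f (fun i => x i.succ) := by
  simp only [Del, Finset.prod_filter, Fin.prod_univ_succ, Fin.succ_lt_succ_iff, Fin.succ_pos,
    Fin.not_lt_zero, if_true, if_false, one_mul]

/-- The factors of the summands of both series that involve `x_0`, `x_i` and `a_i`: this is where
the very well-poised factor `[x_i + s + (|ν| + ν_i)δ]/[x_i + s]` comes from. -/
lemma factor_pair (f : ℂ → ℂ) (hodd : ∀ t : ℂ, f (-t) = -f t) (δ x0 xi ai s : ℂ)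
    (K M N p : ℕ) (hN : N = K + M) (hs : s = -(N : ℂ) * δ - x0)
    (h3 : sf f δ (δ + s + xi - ai) M ≠ 0) (h4 : sf f δ (x0 - xi + δ) N ≠ 0) :
    f (x0 + (K : ℂ) * δ - (xi + (p : ℂ) * δ)) / f (x0 - xi)
        * (sf f δ (x0 - xi + ai) K / sf f δ (x0 - xi + δ) K)
      = sf f δ (x0 - xi + ai) N / sf f δ (x0 - xi) N
        * (f (xi + s + ((M + p : ℕ) : ℂ) * δ) / f (xi + s))
        * (sf f δ (s + xi) M / sf f δ (δ + s + xi - ai) M) := by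
  rw [sf_ratio f hodd δ (x0 - xi + ai) (x0 - xi + δ) (δ + s + xi - ai) (s + xi) K M N hN
    (by rw [hs]; ring) (by rw [hs]; ring) h3 h4]
  have e1 : f (x0 + (K : ℂ) * δ - (xi + (p : ℂ) * δ))
      = -f (xi + s + ((M + p : ℕ) : ℂ) * δ) := by
    rw [← hodd, hs, hN]
    congr 1
    push_cast
    ring
  have e2 : f (x0 - xi + (N : ℂ) * δ) = -f (xi + s) := by
    rw [← hodd, hs]
    congr 1
    ring
  have e3 := sf_shift f δ (x0 - xi) N
  rw [e2] at e3
  have e4 : -(f (x0 - xi) * sf f δ (x0 - xi + δ) N)⁻¹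
      = (sf f δ (x0 - xi) N * f (xi + s))⁻¹ := by
    rw [← inv_neg]
    congr 1
    linear_combination -e3
  rw [e1]
  simp only [mul_inv] at e4
  simp only [div_eq_mul_inv]
  linear_combination (f (xi + s + ((M + p : ℕ) : ℂ) * δ) * sf f δ (x0 - xi + ai) N
    * sf f δ (s + xi) M * (sf f δ (δ + s + xi - ai) M)⁻¹) * e4

/-- Proposition 3.1, formula (3.4): `Φ^{1+m,n}_N` expressed through `E^{m,n+1}`. -/
theorem Phi_as_very_well_poised
    (f : ℂ → ℂ) (hf : f ≠ 0) (hodd : ∀ t : ℂ, f (-t) = -f t) (hdiff : Differentiable ℂ f)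
    (hRiem : ∀ x y u v : ℂ,
      f (x + y) * f (x - y) * f (u + v) * f (u - v) =
        f (x + u) * f (x - u) * f (y + v) * f (y - v)
          - f (x + v) * f (x - v) * f (y + u) * f (y - u))
    (δ : ℂ) (hδ : ∀ k : ℤ, k ≠ 0 → f ((k : ℂ) * δ) ≠ 0)
    (m n N : ℕ) (a0 x0 : ℂ) (a x : Fin m → ℂ) (b c : Fin n → ℂ)
    (s : ℂ) (hs : s = -(N : ℂ) * δ - x0)
    (X : Fin (m + 1) → ℂ) (hX : X = Fin.cons x0 x)
    (hP1 : ∀ i j : Fin (m + 1), i ≠ j → f (X i - X j) ≠ 0)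
    (hP2 : ∀ (i j : Fin (m + 1)) (l : ℕ), l < N →
      f (X i - X j + δ + (l : ℂ) * δ) ≠ 0)
    (hP3 : ∀ (i : Fin (m + 1)) (k : Fin n) (l : ℕ), l < N →
      f (X i + c k + (l : ℂ) * δ) ≠ 0)
    (hG2 : ∀ i, f (x i + s) ≠ 0)
    (hG3 : ∀ (j : Fin m) (l : ℕ), l < N → f (δ + s + x j - a j + (l : ℂ) * δ) ≠ 0)
    (hG5a : ∀ l : ℕ, l < N → f (δ + s - (a0 - x0) + (l : ℂ) * δ) ≠ 0)
    (hG5b : ∀ (k : Fin n) (l : ℕ), l < N → f (δ + s - b k + (l : ℂ) * δ) ≠ 0) :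
    Phi f δ (Fin.cons a0 a) X b c N =
      (sf f δ a0 N / sf f δ δ N)
        * (∏ i, sf f δ (x0 - x i + a i) N / sf f δ (x0 - x i) N)
        * (∏ k, sf f δ (x0 + b k) N / sf f δ (x0 + c k) N)
        * Evw f δ a x s (Fin.cons (a0 - x0) b)
            (Fin.cons (-(N : ℂ) * δ) fun k => (1 - (N : ℂ)) * δ - x0 - c k) := by
  subst hX
  have hδN : ∀ M ≤ N, sf f δ δ M ≠ 0 := fun M hM =>
    sf_ne_zero f δ δ hM fun l _ => by
      have := hδ ((l : ℤ) + 1) (by omega)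
      push_cast at this
      rwa [show δ + (l : ℂ) * δ = ((l : ℂ) + 1) * δ by ring]
  have hf0 : f 0 = 0 := by
    have := hodd 0
    rw [neg_zero] at this
    exact self_eq_neg.1 this
  unfold Evw
  rw [tsum_eq_sum (s := (Finset.Nat.antidiagonalTuple (m + 1) N).image Fin.tail)]
  · rw [Finset.sum_image, Finset.mul_sum]
    · unfold Phi
      refine Finset.sum_congr rfl fun μ hμ => ?_
      rw [Finset.Nat.mem_antidiagonalTuple, Fin.sum_univ_succ] at hμ
      unfold Eterm
      simp only [Fin.tail]
      set M := ∑ i : Fin m, μ i.succ with hM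
      have hN : N = μ 0 + M := hμ.symm
      have hMN : M ≤ N := by omega
      have E0 := sf_ratio f hodd δ a0 δ (δ + s - (a0 - x0)) (-(N : ℂ) * δ) (μ 0) M N hN
        (by rw [hs]; ring) (by ring) (sf_ne_zero f δ _ hMN hG5a) (hδN N le_rfl)
      have Ex : ∀ i : Fin m, _ := fun i =>
        factor_pair f hodd δ x0 (x i) (a i) s (μ 0) M N (μ i.succ) hN hs
          (sf_ne_zero f δ _ hMN (hG3 i))
          (sf_ne_zero f δ _ le_rfl (by simpa using hP2 0 i.succ))
      have Ek : ∀ k : Fin n, _ := fun k =>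
        sf_ratio f hodd δ (x0 + b k) (x0 + c k) (δ + s - b k) ((1 - (N : ℂ)) * δ - x0 - c k)
          (μ 0) M N hN (by rw [hs]; ring) (by ring) (sf_ne_zero f δ _ hMN (hG5b k))
          (sf_ne_zero f δ _ le_rfl (by simpa using hP3 0 k))
      have Px := Finset.prod_congr (s₁ := Finset.univ) rfl fun i _ => Ex i
      have Pk := Finset.prod_congr (s₁ := Finset.univ) rfl fun k _ => Ek k
      simp only [Finset.prod_mul_distrib] at Px Pk
      have c1 : ∀ i, x i - x0 + a0 = x i + (a0 - x0) := fun i => by ring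
      have c2 : ∀ i, x i + δ + s - -(N : ℂ) * δ = x i - x0 + δ := fun i => by rw [hs]; ring
      have c3 : ∀ i k, x i + δ + s - ((1 - (N : ℂ)) * δ - x0 - c k) = x i + c k :=
        fun i k => by rw [hs]; ring
      have c4 : x0 - x0 + a0 = a0 := by ring
      have c5 : x0 - x0 + δ = δ := by ring
      rw [Del_succ, Del_succ]
      simp only [Fin.prod_univ_succ, Fin.cons_zero, Fin.cons_succ, Finset.prod_mul_distrib,
        c1, c2, c3, c4, c5, E0, Pk]
      rw [mul_div_mul_comm, ← Finset.prod_div_distrib]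
      -- The products over pairs `(i, j)` and `(i, k)` occur in either order.
      rw [Finset.prod_comm (f := fun i j => sf f δ (x i - x j + a j) (μ i.succ)
          / sf f δ (x i - x j + δ) (μ i.succ)),
        Finset.prod_comm (f := fun i k => sf f δ (x i + b k) (μ i.succ)
          / sf f δ (x i + c k) (μ i.succ))]
      linear_combination (Del f (fun i => x i + (μ i.succ : ℂ) * δ) / Del f x
        * (sf f δ a0 N / sf f δ δ N * (sf f δ (-(N : ℂ) * δ) M / sf f δ (δ + s - (a0 - x0)) M))
        * (∏ i, sf f δ (x i + (a0 - x0)) (μ i.succ) / sf f δ (x i - x0 + δ) (μ i.succ))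
        * (∏ j, ∏ i, sf f δ (x i - x j + a j) (μ i.succ) / sf f δ (x i - x j + δ) (μ i.succ))
        * ((∏ k, sf f δ (x0 + b k) N / sf f δ (x0 + c k) N)
          * ∏ k, sf f δ ((1 - (N : ℂ)) * δ - x0 - c k) M / sf f δ (δ + s - b k) M)
        * (∏ k, ∏ i, sf f δ (x i + b k) (μ i.succ) / sf f δ (x i + c k) (μ i.succ))) * Px
    · -- The zeroth entry of a tuple with sum `N` is determined by the others.
      intro μ hμ ν hν h
      simp only [Finset.mem_coe, Finset.Nat.mem_antidiagonalTuple, Fin.sum_univ_succ] at hμ hν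
      have ht : ∀ i : Fin m, μ i.succ = ν i.succ := fun i => congrFun h i
      simp only [ht] at hμ
      funext i
      refine Fin.cases ?_ ht i
      omega
  · -- A tuple outside the image has `|ν| > N`, so `[-Nδ]_{|ν|}` contains the factor `[0] = 0`.
    intro ν hν
    have hlt : N < ∑ i, ν i := by
      by_contra hle
      refine hν (Finset.mem_image.2 ⟨Fin.cons (N - ∑ i, ν i) ν, ?_, Fin.tail_cons _ _⟩)
      rw [Finset.Nat.mem_antidiagonalTuple, Fin.sum_univ_succ]
      simp only [Fin.cons_zero, Fin.cons_succ]
      omega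
    have hz : sf f δ (-(N : ℂ) * δ) (∑ i, ν i) = 0 :=
      Finset.prod_eq_zero (Finset.mem_range.2 hlt) (by
        rw [show -(N : ℂ) * δ + (N : ℂ) * δ = 0 by ring, hf0])
    unfold Eterm
    rw [Fin.prod_univ_succ (n := n)]
    simp only [Fin.cons_zero, hz, zero_div, zero_mul, mul_zero]
end
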